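/- arXiv:2006.13867 — 2 statements merged into one kernel-verified Lean document; each statement's English description precedes it below -/
import Mathlib

section
/- For every bounded open set E ⊆ Σ with smooth boundary and w(E) > 0, one has Per_w(E) / w(E)^((D−1)/D) ≥ Per_w(B₁ ∩ Σ) / w(B₁ ∩ Σ)^((D−1)/D), where Per_w(B₁ ∩ Σ) = ∫_{∂B₁ ∩ Σ} w dH^{n−1} and B₁ is the open unit ball centered at the origin. -/
open MeasureTheory Metric Set
open scoped RealInnerProductSpace ENNReal NNReal Topology

noncomputable section

abbrev Euc (n : ℕ) := EuclideanSpace ℝ (Fin n)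

/-- `S` is an open convex cone with vertex at the origin. -/
def IsOpenConvexCone {n : ℕ} (S : Set (Euc n)) : Prop :=
  IsOpen S ∧ Convex ℝ S ∧ ∀ x ∈ S, ∀ t : ℝ, 0 < t → t • x ∈ S

/-- `w` is a continuous nonnegative weight on `closure S`, not identically zero,
positively `α`-homogeneous, with `w ^ (1/α)` concave on `S`. -/
def IsAdmissibleWeight {n : ℕ} (S : Set (Euc n)) (α : ℝ) (w : Euc n → ℝ) : Prop :=
  ContinuousOn w (closure S) ∧ (∀ x ∈ closure S, 0 ≤ w x) ∧
  (∃ x ∈ closure S, w x ≠ 0) ∧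
  (∀ x ∈ closure S, ∀ t : ℝ, 0 < t → w (t • x) = t ^ α * w x) ∧
  ConcaveOn ℝ S (fun x => w x ^ (1 / α))

/-- Weighted volume `w(E) = ∫_E w`. -/
def wVol {n : ℕ} (w : Euc n → ℝ) (E : Set (Euc n)) : ℝ≥0∞ :=
  ∫⁻ x in E, ENNReal.ofReal (w x)

/-- Weighted perimeter inside the cone: `∫_{∂E ∩ S} w dH^{n-1}`. -/
def wPer {n : ℕ} (S : Set (Euc n)) (w : Euc n → ℝ) (E : Set (Euc n)) : ℝ≥0∞ :=
  ∫⁻ x in frontier E ∩ S, ENNReal.ofReal (w x) ∂(μH[(n : ℝ) - 1])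

/-- `E` is an open set with smooth boundary, given by a smooth defining function. -/
def HasSmoothBoundary {n : ℕ} (E : Set (Euc n)) : Prop :=
  ∃ f : Euc n → ℝ, ContDiff ℝ (⊤ : ℕ∞) f ∧ E = {x | f x < 0} ∧
    frontier E = {x | f x = 0} ∧ ∀ x ∈ frontier E, fderiv ℝ f x ≠ 0

section Aux

open scoped Pointwise

theorem vol_add_compact {K L C : Set ℝ} (hK : IsCompact K) (hL : IsCompact L) (nK : K.Nonempty)
    (nL : L.Nonempty) (h : ∀ a ∈ K, ∀ b ∈ L, a + b ∈ C) : volume K + volume L ≤ volume C := by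
  set k := sSup K
  set l := sInf L
  have hk : k ∈ K := hK.sSup_mem nK
  have hl : l ∈ L := hL.sInf_mem nL
  have e1 : volume ((fun x => l + x) '' K) = volume K := by
    simp
  have e2 : volume ((fun x => k + x) '' L) = volume L := by
    simp
  have hsub : ((fun x => l + x) '' K) ∪ ((fun x => k + x) '' L) ⊆ C := by
    rintro _ (⟨x, hx, rfl⟩ | ⟨x, hx, rfl⟩)
    · simpa [add_comm] using h x hx l hl
    · exact h k hk x hx
  have hd : AEDisjoint volume ((fun x => l + x) '' K) ((fun x => k + x) '' L) := by
    refine measure_mono_null (t := {k + l}) ?_ (by simp)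
    rintro _ ⟨⟨x, hx, rfl⟩, ⟨y, hy, hxy⟩⟩
    have h1 : x ≤ k := le_csSup hK.bddAbove hx
    have h2 : l ≤ y := csInf_le hL.bddBelow hy
    simp only at hxy
    simp only [mem_singleton_iff]
    linarith
  calc volume K + volume L = volume (((fun x => l + x) '' K) ∪ ((fun x => k + x) '' L)) := by
        rw [measure_union₀ _ hd, e1, e2]
        exact (hL.image (by fun_prop)).measurableSet.nullMeasurableSet
    _ ≤ volume C := measure_mono hsub

theorem vol_add_le {A B C : Set ℝ} (hA : MeasurableSet A) (hB : MeasurableSet B)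
    (nA : A.Nonempty) (nB : B.Nonempty) (h : ∀ a ∈ A, ∀ b ∈ B, a + b ∈ C) :
    volume A + volume B ≤ volume C := by
  obtain ⟨a, ha⟩ := nA
  obtain ⟨b, hb⟩ := nB
  have key : ∀ K ⊆ A, IsCompact K → ∀ L ⊆ B, IsCompact L → volume K + volume L ≤ volume C := by
    intro K hKA hK L hLB hL
    calc volume K + volume L ≤ volume (insert a K) + volume (insert b L) := by
          gcongr <;> exact subset_insert _ _
      _ ≤ _ := by
        refine vol_add_compact (hK.insert a) (hL.insert b) (insert_nonempty _ _)
          (insert_nonempty _ _) ?_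
        intro x hx y hy
        exact h x (insert_subset ha hKA hx) y (insert_subset hb hLB hy)
  have key2 : ∀ K ⊆ A, IsCompact K → volume K + volume B ≤ volume C := by
    intro K hKA hK
    rw [hB.measure_eq_iSup_isCompact]
    by_contra hc
    push Not at hc
    have hKf : volume K ≠ ∞ := hK.measure_lt_top.ne
    have hKC : volume K ≤ volume C := by
      simpa using key K hKA hK ∅ (empty_subset _) isCompact_empty
    have : volume C - volume K < ⨆ K, ⨆ (_ : K ⊆ B), ⨆ (_ : IsCompact K), volume K := by
      by_contra h'
      push Not at h'
      exact absurd (hc.trans_le (add_le_add_right h' _)) (by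
        rw [add_tsub_cancel_of_le hKC]; exact lt_irrefl _)
    simp only [lt_iSup_iff] at this
    obtain ⟨L, hLB, hL, hlt⟩ := this
    have := key K hKA hK L hLB hL
    have h3 : volume L ≤ volume C - volume K := ENNReal.le_sub_of_add_le_left hKf this
    exact absurd hlt (not_lt.mpr h3)
  by_cases hBf : volume B = ∞
  · have := key2 ∅ (empty_subset _) isCompact_empty
    rw [hBf] at this
    simp at this
    rw [this]; exact le_top
  have hBC : volume B ≤ volume C := by
    simpa using key2 ∅ (empty_subset _) isCompact_empty
  have : volume A ≤ volume C - volume B := by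
    rw [hA.measure_eq_iSup_isCompact]
    simp only [iSup_le_iff]
    intro K hKA hK
    exact ENNReal.le_sub_of_add_le_right hBf (key2 K hKA hK)
  calc _ ≤ volume C - volume B + volume B := by gcongr
    _ = _ := tsub_add_cancel_of_le hBC

theorem lc_one {u : ℝ → ℝ≥0∞} (hu : Measurable u) (h1 : ∀ x, u x ≤ 1) :
    ∫⁻ x, u x = ∫⁻ t in Ioo (0 : ℝ) 1, volume {x | ENNReal.ofReal t < u x} := by
  have hf : ∀ x, u x ≠ ∞ := fun x => ((h1 x).trans_lt ENNReal.one_lt_top).ne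
  have := lintegral_eq_lintegral_meas_lt (volume : Measure ℝ) (f := fun x => (u x).toReal)
    (ae_of_all _ fun x => ENNReal.toReal_nonneg) hu.ennreal_toReal.aemeasurable
  simp only [ENNReal.ofReal_toReal (hf _)] at this
  rw [this]
  have e : ∀ t ∈ Ioi (0 : ℝ), volume {a | t < (u a).toReal}
      = (Ioo (0 : ℝ) 1).indicator (fun t => volume {x | ENNReal.ofReal t < u x}) t := by
    intro t ht
    by_cases ht1 : t < 1
    · rw [indicator_of_mem (show t ∈ Ioo (0 : ℝ) 1 from ⟨ht, ht1⟩)]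
      congr 1; ext x
      exact (ENNReal.ofReal_lt_iff_lt_toReal (le_of_lt ht) (hf x)).symm
    · rw [indicator_of_notMem (fun h => ht1 h.2)]
      have : {a | t < (u a).toReal} = ∅ := by
        ext x
        simp only [mem_ofPred_eq, mem_empty_iff_false, iff_false, not_lt]
        refine le_trans ?_ (not_lt.mp ht1)
        have := ENNReal.toReal_mono (by simp) (h1 x)
        simpa using this
      simp [this]
  rw [setLIntegral_congr_fun measurableSet_Ioi e, setLIntegral_indicator measurableSet_Ioo]
  congr 2
  ext t; simp; tauto

theorem holder_two {α : ℝ} (hα : 0 < α) {F G a b : ℝ≥0∞} (ha : a ≠ 0) (ha' : a ≠ ∞) (hb : b ≠ 0)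
    (hb' : b ≠ ∞) :
    F ^ (1 / (α + 1)) + G ^ (1 / (α + 1)) ≤
      ((F / a + G / b) * (a ^ (1 / α) + b ^ (1 / α)) ^ α) ^ (1 / (α + 1)) := by
  have hpq : (α + 1).HolderConjugate ((α + 1) / α) := by
    rw [Real.holderConjugate_iff]
    constructor
    · linarith
    · field_simp; ring
  have := ENNReal.inner_le_Lp_mul_Lq (Finset.univ : Finset (Fin 2))
    ![(F / a) ^ (1 / (α + 1)), (G / b) ^ (1 / (α + 1))] ![a ^ (1 / (α + 1)), b ^ (1 / (α + 1))] hpq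
  simp only [Fin.sum_univ_two, Matrix.cons_val_zero, Matrix.cons_val_one] at this
  rw [← ENNReal.mul_rpow_of_nonneg _ _ (by positivity), ← ENNReal.mul_rpow_of_nonneg _ _ (by positivity),
    ENNReal.div_mul_cancel ha ha', ENNReal.div_mul_cancel hb hb'] at this
  simp only [← ENNReal.rpow_mul] at this
  have e1 : 1 / (α + 1) * (α + 1) = 1 := by field_simp
  have e2 : 1 / (α + 1) * ((α + 1) / α) = 1 / α := by field_simp
  have e3 : 1 / ((α + 1) / α) = α * (1 / (α + 1)) := by field_simp
  rw [e1, e2, e3, ENNReal.rpow_one, ENNReal.rpow_one] at this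
  rwa [ENNReal.mul_rpow_of_nonneg _ _ (by positivity), ← ENNReal.rpow_mul]

theorem bm_one_bdd {α : ℝ} (hα : 0 < α) {f g h : ℝ → ℝ≥0∞} (hf : Measurable f) (hg : Measurable g)
    (hh : Measurable h)
    (H : ∀ x y, f x ≠ 0 → g y ≠ 0 → f x ^ (1 / α) + g y ^ (1 / α) ≤ h (x + y) ^ (1 / α))
    (ha : ⨆ x, f x ≠ 0) (ha' : ⨆ x, f x ≠ ∞) (hb : ⨆ x, g x ≠ 0) (hb' : ⨆ x, g x ≠ ∞) :
    (∫⁻ x, f x) ^ (1 / (α + 1)) + (∫⁻ x, g x) ^ (1 / (α + 1)) ≤ (∫⁻ x, h x) ^ (1 / (α + 1)) := by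
  set a := ⨆ x, f x
  set b := ⨆ x, g x
  set c := (a ^ (1 / α) + b ^ (1 / α)) ^ α with hc
  have hα' : 0 < 1 / α := by positivity
  have hc0 : c ≠ 0 := by
    simp [hc, hα.le, ha, ha', hα.not_gt, hα]
  have hct : c ≠ ∞ := by
    simp [hc, hα, ha, ha', hb', hα.not_gt, hα.le]
  refine (holder_two hα ha ha' hb hb').trans ?_
  gcongr
  rw [← ENNReal.le_div_iff_mul_le (Or.inl hc0) (Or.inl hct)]
  have fa : ∀ x, f x / a ≤ 1 := fun x => ENNReal.div_le_of_le_mul (by simpa using le_iSup f x)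
  have gb : ∀ x, g x / b ≤ 1 := fun x => ENNReal.div_le_of_le_mul (by simpa using le_iSup g x)
  have i1 : (∫⁻ x, f x) / a = ∫⁻ x, f x / a := by
    simp only [div_eq_mul_inv]; rw [lintegral_mul_const _ hf]
  have i2 : (∫⁻ x, g x) / b = ∫⁻ x, g x / b := by
    simp only [div_eq_mul_inv]; rw [lintegral_mul_const _ hg]
  have i3 : (∫⁻ x, h x) / c = ∫⁻ x, h x / c := by
    simp only [div_eq_mul_inv]; rw [lintegral_mul_const _ hh]
  rw [i1, i2, i3, lc_one (hf.div_const a) fa, lc_one (hg.div_const b) gb]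
  calc _ ≤ ∫⁻ t in Ioo (0 : ℝ) 1, volume {x | ENNReal.ofReal t < f x / a} +
          volume {x | ENNReal.ofReal t < g x / b} := le_lintegral_add _ _
    _ ≤ ∫⁻ t in Ioo (0 : ℝ) 1, volume {x | ENNReal.ofReal t < min (h x / c) 1} := by
        refine setLIntegral_mono' measurableSet_Ioo fun t ht => ?_
        have ht1 : ENNReal.ofReal t < 1 := by simpa using ht.2
        have ht0 : 0 < ENNReal.ofReal t := by simpa using ht.1
        have nf : ∀ (s : ℝ≥0∞) (φ : ℝ → ℝ≥0∞), ⨆ x, φ x = s → s ≠ 0 → s ≠ ∞ →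
            ∃ x, ENNReal.ofReal t < φ x / s := by
          intro s φ hs h0 h1
          have : ENNReal.ofReal t * s < ⨆ x, φ x := by
            rw [hs]
            conv_rhs => rw [← one_mul s]
            exact ENNReal.mul_lt_mul_left h0 h1 ht1
          obtain ⟨x, hx⟩ := lt_iSup_iff.mp this
          exact ⟨x, (ENNReal.lt_div_iff_mul_lt (Or.inl h0) (Or.inl h1)).mpr hx⟩
        refine vol_add_le (measurableSet_lt measurable_const (hf.div_const a))
          (measurableSet_lt measurable_const (hg.div_const b)) (nf a f rfl ha ha')
          (nf b g rfl hb hb') ?_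
        intro x hx y hy
        refine lt_min ?_ ht1
        simp only [mem_ofPred_eq] at hx hy
        rw [ENNReal.lt_div_iff_mul_lt (Or.inl ha) (Or.inl ha')] at hx
        rw [ENNReal.lt_div_iff_mul_lt (Or.inl hb) (Or.inl hb')] at hy
        rw [ENNReal.lt_div_iff_mul_lt (Or.inl hc0) (Or.inl hct)]
        have := H x y (pos_of_gt hx).ne' (pos_of_gt hy).ne'
        have h2 : (ENNReal.ofReal t * c) ^ (1 / α) < h (x + y) ^ (1 / α) := by
          refine lt_of_lt_of_le ?_ this
          rw [ENNReal.mul_rpow_of_nonneg _ _ hα'.le, hc, ← ENNReal.rpow_mul,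
            mul_one_div_cancel hα.ne', ENNReal.rpow_one, mul_add,
            ← ENNReal.mul_rpow_of_nonneg _ _ hα'.le, ← ENNReal.mul_rpow_of_nonneg _ _ hα'.le]
          exact ENNReal.add_lt_add (ENNReal.rpow_lt_rpow hx hα') (ENNReal.rpow_lt_rpow hy hα')
        exact (ENNReal.rpow_lt_rpow_iff hα').mp h2
    _ = ∫⁻ x, min (h x / c) 1 :=
        (lc_one ((hh.div_const c).min measurable_const) (fun x => min_le_right _ _)).symm
    _ ≤ _ := lintegral_mono fun x => min_le_left _ _

theorem bm_one {α : ℝ} (hα : 0 < α) {f g h : ℝ → ℝ≥0∞} (hf : Measurable f) (hg : Measurable g)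
    (hh : Measurable h)
    (H : ∀ x y, f x ≠ 0 → g y ≠ 0 → f x ^ (1 / α) + g y ^ (1 / α) ≤ h (x + y) ^ (1 / α))
    (hF : ∫⁻ x, f x ≠ 0) (hG : ∫⁻ x, g x ≠ 0) :
    (∫⁻ x, f x) ^ (1 / (α + 1)) + (∫⁻ x, g x) ^ (1 / (α + 1)) ≤ (∫⁻ x, h x) ^ (1 / (α + 1)) := by
  have hα' : 0 < 1 / α := by positivity
  have T : ∀ φ : ℝ → ℝ≥0∞, Measurable φ → Filter.Tendsto (fun k : ℕ => ∫⁻ x, min (φ x) (k : ℝ≥0∞))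
      Filter.atTop (𝓝 (∫⁻ x, φ x)) := by
    intro φ hφ
    refine lintegral_tendsto_of_tendsto_of_monotone
      (fun k => (hφ.min measurable_const).aemeasurable) (ae_of_all _ fun x => ?_)
      (ae_of_all _ fun x => ?_)
    · intro i j hij
      exact min_le_min le_rfl (by exact_mod_cast hij)
    · have : Filter.Tendsto (fun k : ℕ => min (φ x) (k : ℝ≥0∞)) Filter.atTop (𝓝 (min (φ x) ∞)) :=
        Filter.Tendsto.min tendsto_const_nhds ENNReal.tendsto_nat_nhds_top
      simpa using this
  have S0 : ∀ φ : ℝ → ℝ≥0∞, ∫⁻ x, φ x ≠ 0 → ∀ k : ℕ, k ≠ 0 → ⨆ x, min (φ x) (k : ℝ≥0∞) ≠ 0 := by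
    intro φ hφ k hk h0
    apply hφ
    have : φ = 0 := by
      ext x
      have := (ENNReal.iSup_eq_zero.mp h0) x
      rcases min_eq_bot.mp this with h | h
      · simpa using h
      · simp [hk] at h
    simp [this]
  have S1 : ∀ φ : ℝ → ℝ≥0∞, ∀ k : ℕ, ⨆ x, min (φ x) (k : ℝ≥0∞) ≠ ∞ := by
    intro φ k
    refine (lt_of_le_of_lt (iSup_le fun x => min_le_right _ _) (ENNReal.natCast_lt_top k)).ne
  have r : (0:ℝ) ≤ 1 / (α + 1) := by positivity
  have L := (((ENNReal.continuous_rpow_const (y := 1 / (α + 1))).tendsto _).comp (T f hf)).add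
    (((ENNReal.continuous_rpow_const (y := 1 / (α + 1))).tendsto _).comp (T g hg))
  refine le_of_tendsto L ?_
  filter_upwards [Filter.eventually_ne_atTop 0] with k hk
  refine bm_one_bdd hα (hf.min measurable_const) (hg.min measurable_const) hh ?_ (S0 f hF k hk)
    (S1 f k) (S0 g hG k hk) (S1 g k)
  intro x y hx hy
  refine le_trans ?_ (H x y ?_ ?_)
  · gcongr <;> exact min_le_left _ _
  · intro h; simp [h] at hx
  · intro h; simp [h] at hy

theorem bm_pi (n : ℕ) : ∀ {α : ℝ} (_ : 0 < α) {f g h : (Fin n → ℝ) → ℝ≥0∞} (_ : Measurable f)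
    (_ : Measurable g) (_ : Measurable h)
    (_ : ∀ x y, f x ≠ 0 → g y ≠ 0 → f x ^ (1 / α) + g y ^ (1 / α) ≤ h (x + y) ^ (1 / α))
    (_ : ∫⁻ x, f x ≠ 0) (_ : ∫⁻ x, g x ≠ 0),
    (∫⁻ x, f x) ^ (1 / (α + n)) + (∫⁻ x, g x) ^ (1 / (α + n)) ≤ (∫⁻ x, h x) ^ (1 / (α + n)) := by
  induction n with
  | zero =>
    intro α hα f g h hf hg hh H hF hG
    have e : ∀ φ : (Fin 0 → ℝ) → ℝ≥0∞, ∫⁻ x, φ x = φ 0 := by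
      intro φ
      rw [lintegral_unique]
      simp [volume_pi]
      congr 1
    rw [e] at hF hG
    simp only [e]
    simpa using H 0 0 hF hG
  | succ n ih =>
    intro α hα f g h hf hg hh H hF hG
    have mp := (volume_preserving_piFinSuccAbove (fun _ : Fin (n+1) => ℝ) 0).symm
    set Q := (MeasurableEquiv.piFinSuccAbove (fun _ : Fin (n+1) => ℝ) 0).symm with hQ
    have Qadd : ∀ p q, Q p + Q q = Q (p + q) := by
      intro p q
      ext i
      simp only [hQ, MeasurableEquiv.piFinSuccAbove_symm_apply, Pi.add_apply]
      refine Fin.cases ?_ (fun j => ?_) i <;> simp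
    have e : ∀ φ : (Fin (n+1) → ℝ) → ℝ≥0∞, Measurable φ →
        ∫⁻ x, φ x = ∫⁻ s, ∫⁻ z, φ (Q (s, z)) := by
      intro φ hφ
      rw [← mp.lintegral_comp hφ]
      rw [Measure.volume_eq_prod]
      exact lintegral_prod _ (hφ.comp Q.measurable).aemeasurable
    have m : ∀ φ : (Fin (n+1) → ℝ) → ℝ≥0∞, Measurable φ → Measurable fun s => ∫⁻ z, φ (Q (s, z)) := by
      intro φ hφ
      exact Measurable.lintegral_prod_right' (f := fun p => φ (Q p)) (hφ.comp Q.measurable)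
    rw [e f hf] at hF
    rw [e g hg] at hG
    rw [e f hf, e g hg, e h hh]
    have hαn : 0 < α + n := by positivity
    have := bm_one hαn (m f hf) (m g hg) (m h hh) ?_ hF hG
    · rw [show α + ((n + 1 : ℕ) : ℝ) = α + n + 1 by push_cast; ring]
      exact this
    · intro s t hs ht
      refine ih hα (hf.comp (Q.measurable.comp measurable_prodMk_left))
        (hg.comp (Q.measurable.comp measurable_prodMk_left))
        (hh.comp (Q.measurable.comp measurable_prodMk_left)) ?_ hs ht
      intro x y hx hy
      have := H (Q (s, x)) (Q (t, y)) hx hy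
      rw [Qadd] at this
      exact this


theorem ext_weight {n : ℕ} {S : Set (Euc n)} {α : ℝ} {w : Euc n → ℝ}
    (hw : IsAdmissibleWeight S α w) :
    ∃ W : Euc n → ℝ, Continuous W ∧ (∀ x, 0 ≤ W x) ∧ EqOn W w (closure S) := by
  obtain ⟨h1, h2, -⟩ := hw
  obtain ⟨g, hg⟩ := ContinuousMap.exists_restrict_eq (isClosed_closure (s := S))
    ⟨_, continuousOn_iff_continuous_domRestrict.mp h1⟩
  refine ⟨fun x => max (g x) 0, by fun_prop, fun x => le_max_right _ _, fun x hx => ?_⟩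
  have : g x = w x := congrArg (fun φ => φ ⟨x, hx⟩) hg
  simp only [this]
  exact max_eq_left (h2 x hx)

theorem cone_add {n : ℕ} {S : Set (Euc n)} (hS : IsOpenConvexCone S) {x y : Euc n} (hx : x ∈ S)
    (hy : y ∈ S) : x + y ∈ S := by
  have := hS.2.1 (hS.2.2 x hx 2 (by norm_num)) (hS.2.2 y hy 2 (by norm_num))
    (show (0:ℝ) ≤ 1/2 by norm_num) (show (0:ℝ) ≤ 1/2 by norm_num) (by norm_num)
  simpa [smul_smul] using this

theorem weight_superadd {n : ℕ} {S : Set (Euc n)} (hS : IsOpenConvexCone S) {α : ℝ} (hα : 0 < α)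
    {w : Euc n → ℝ} (hw : IsAdmissibleWeight S α w) {x y : Euc n} (hx : x ∈ S) (hy : y ∈ S) :
    w x ^ (1 / α) + w y ^ (1 / α) ≤ w (x + y) ^ (1 / α) := by
  obtain ⟨-, h2, -, h4, h5⟩ := hw
  have := h5.2 hx hy (show (0:ℝ) ≤ 1/2 by norm_num) (show (0:ℝ) ≤ 1/2 by norm_num) (by norm_num)
  simp only [smul_eq_mul] at this
  have hxy := subset_closure (cone_add hS hx hy)
  rw [← smul_add, h4 _ hxy _ (by norm_num),
    Real.mul_rpow (by positivity) (h2 _ hxy), ← Real.rpow_mul (by norm_num),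
    mul_one_div_cancel hα.ne', Real.rpow_one] at this
  linarith

theorem bm_set {n : ℕ} {S : Set (Euc n)} {α : ℝ} (hα : 0 < α) {W : Euc n → ℝ} (hW : Continuous W)
    (hW0 : ∀ x, 0 ≤ W x)
    (sup : ∀ x ∈ S, ∀ y ∈ S, W x ^ (1 / α) + W y ^ (1 / α) ≤ W (x + y) ^ (1 / α))
    {A B : Set (Euc n)} (hA : IsOpen A) (hB : IsOpen B) (hAS : A ⊆ S) (hBS : B ⊆ S)
    (hA0 : wVol W A ≠ 0) (hB0 : wVol W B ≠ 0) :
    wVol W A ^ (1 / ((n:ℝ) + α)) + wVol W B ^ (1 / ((n:ℝ) + α)) ≤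
      wVol W (A + B) ^ (1 / ((n:ℝ) + α)) := by
  have mp := PiLp.volume_preserving_toLp (Fin n)
  have hWm : Measurable fun x => ENNReal.ofReal (W x) := by fun_prop
  have e : ∀ C : Set (Euc n), IsOpen C → wVol W C =
      ∫⁻ x : Fin n → ℝ, C.indicator (fun x => ENNReal.ofReal (W x)) (WithLp.toLp 2 x) := by
    intro C hC
    rw [wVol, ← lintegral_indicator hC.measurableSet]
    exact (mp.lintegral_comp (hWm.indicator hC.measurableSet)).symm
  have hAB : IsOpen (A + B) := hA.add_right
  rw [e A hA] at hA0 ⊢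
  rw [e B hB] at hB0 ⊢
  rw [e _ hAB, add_comm (n:ℝ) α]
  have meas : ∀ C : Set (Euc n), IsOpen C → Measurable fun x : Fin n → ℝ =>
      C.indicator (fun x => ENNReal.ofReal (W x)) (WithLp.toLp 2 x) := fun C hC =>
    (hWm.indicator hC.measurableSet).comp mp.measurable
  refine bm_pi n hα (meas A hA) (meas B hB) (meas _ hAB) ?_ hA0 hB0
  intro x y hx hy
  have hxA : WithLp.toLp 2 x ∈ A := mem_of_indicator_ne_zero hx
  have hyB : WithLp.toLp 2 y ∈ B := mem_of_indicator_ne_zero hy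
  have hxy : WithLp.toLp 2 (x + y) ∈ A + B := by
    rw [WithLp.toLp_add]; exact add_mem_add hxA hyB
  rw [indicator_of_mem hxA, indicator_of_mem hyB, indicator_of_mem hxy, WithLp.toLp_add]
  have hα' : 0 ≤ 1 / α := by positivity
  rw [ENNReal.ofReal_rpow_of_nonneg (hW0 _) hα', ENNReal.ofReal_rpow_of_nonneg (hW0 _) hα',
    ENNReal.ofReal_rpow_of_nonneg (hW0 _) hα', ← ENNReal.ofReal_add
      (Real.rpow_nonneg (hW0 _) _) (Real.rpow_nonneg (hW0 _) _)]
  exact ENNReal.ofReal_le_ofReal (sup _ (hAS hxA) _ (hBS hyB))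

theorem wVol_smul {n : ℕ} {S : Set (Euc n)} {α : ℝ} {W : Euc n → ℝ} (hW : Continuous W)
    (hom : ∀ x ∈ S, ∀ t : ℝ, 0 < t → W (t • x) = t ^ α * W x) {A : Set (Euc n)} (hA : IsOpen A)
    (hAS : A ⊆ S) {ε : ℝ} (hε : 0 < ε) :
    wVol W (ε • A) = ENNReal.ofReal (ε ^ ((n:ℝ) + α)) * wVol W A := by
  have hWm : Measurable fun x => ENNReal.ofReal (W x) := by fun_prop
  have hεA : IsOpen (ε • A) := hA.smul₀ hε.ne'
  have hm := Measure.map_addHaar_smul (volume : Measure (Euc n)) hε.ne'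
  rw [finrank_euclideanSpace_fin] at hm
  have h1 : ∫⁻ x, (ε • A).indicator (fun x => ENNReal.ofReal (W x)) x
        ∂(Measure.map (fun x : Euc n => ε • x) volume) =
      ENNReal.ofReal (ε ^ α) * wVol W A := by
    rw [lintegral_map (hWm.indicator hεA.measurableSet) (by fun_prop), wVol,
      ← lintegral_indicator hA.measurableSet, ← lintegral_const_mul _ (hWm.indicator hA.measurableSet)]
    congr 1; ext x
    by_cases hx : x ∈ A
    · rw [indicator_of_mem (smul_mem_smul_set hx), indicator_of_mem hx, hom x (hAS hx) ε hε,
        ENNReal.ofReal_mul (by positivity)]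
    · rw [indicator_of_notMem hx, indicator_of_notMem]
      · simp
      · rwa [smul_mem_smul_set_iff₀ hε.ne']
  have hm' : Measure.map (fun x : Euc n => ε • x) volume = ENNReal.ofReal |(ε ^ n)⁻¹| • volume := hm
  rw [hm', lintegral_smul_measure, lintegral_indicator hεA.measurableSet] at h1
  change ENNReal.ofReal |(ε ^ n)⁻¹| * wVol W (ε • A) = _ at h1
  rw [Real.rpow_add hε, Real.rpow_natCast, ENNReal.ofReal_mul (by positivity), mul_assoc, ← h1,
    ← mul_assoc, ← ENNReal.ofReal_mul (by positivity), abs_of_pos (by positivity),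
    mul_inv_cancel₀ (by positivity)]
  simp

theorem bm_layer {n : ℕ} (hn : 1 ≤ n) {S : Set (Euc n)} (hS : IsOpenConvexCone S) {α : ℝ}
    (hα : 0 < α) {W : Euc n → ℝ} (hW : Continuous W) (hW0 : ∀ x, 0 ≤ W x)
    (sup : ∀ x ∈ S, ∀ y ∈ S, W x ^ (1 / α) + W y ^ (1 / α) ≤ W (x + y) ^ (1 / α))
    (hom : ∀ x ∈ S, ∀ t : ℝ, 0 < t → W (t • x) = t ^ α * W x)
    {E : Set (Euc n)} (hE : IsOpen E) (hES : E ⊆ S)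
    (hE0 : wVol W E ≠ 0) (hEt : wVol W E ≠ ∞) (hB0 : wVol W (ball 0 1 ∩ S) ≠ 0)
    (hBt : wVol W (ball 0 1 ∩ S) ≠ ∞) {ε : ℝ} (hε : 0 < ε) :
    ENNReal.ofReal ε * (ENNReal.ofReal (n + α) * wVol W E ^ (((n:ℝ) + α - 1) / ((n:ℝ) + α)) *
      wVol W (ball 0 1 ∩ S) ^ (1 / ((n:ℝ) + α))) ≤ wVol W ((E + ε • (ball 0 1 ∩ S)) \ E) := by
  set D : ℝ := n + α with hD
  have hn' : (1:ℝ) ≤ n := by exact_mod_cast hn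
  have hD1 : 1 < D := by linarith
  have hD0 : 0 < D := by linarith
  set B : Set (Euc n) := ball 0 1 ∩ S with hBdef
  have hBo : IsOpen B := isOpen_ball.inter hS.1
  have hBS : B ⊆ S := inter_subset_right
  have hεS : ε • B ⊆ S := by
    rintro _ ⟨b, hb, rfl⟩
    exact hS.2.2 b (hBS hb) ε hε
  have key := bm_set hα hW hW0 sup hE (hBo.smul₀ hε.ne') hES hεS hE0 (by
    rw [wVol_smul hW hom hBo hBS hε]
    exact mul_ne_zero (by simp; positivity) hB0)
  rw [wVol_smul hW hom hBo hBS hε, ← hD, ENNReal.mul_rpow_of_nonneg _ _ (by positivity),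
    ENNReal.ofReal_rpow_of_nonneg (by positivity) (by positivity), ← Real.rpow_mul hε.le,
    mul_one_div_cancel hD0.ne', Real.rpow_one] at key
  set R := wVol W ((E + ε • B) \ E) with hR
  by_cases hRt : R = ∞
  · rw [hRt]; exact le_top
  have hTR : wVol W (E + ε • B) ≤ wVol W E + R := by
    calc wVol W (E + ε • B) ≤ wVol W (E ∪ ((E + ε • B) \ E)) := by
          apply lintegral_mono_set
          intro x hx
          by_cases h : x ∈ E
          · exact Or.inl h
          · exact Or.inr ⟨hx, h⟩
      _ ≤ _ := lintegral_union_le _ _ _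
  have key2 := key.trans (ENNReal.rpow_le_rpow hTR (by positivity : 0 ≤ 1 / D))
  clear_value R D
  clear hTR key hR
  lift R to ℝ≥0 using hRt
  generalize wVol W E = V at *
  generalize wVol W B = U at *
  lift V to ℝ≥0 using hEt
  lift U to ℝ≥0 using hBt
  have hV : V ≠ 0 := by simpa using hE0
  have hU : U ≠ 0 := by simpa using hB0
  have hVp : 0 < (V:ℝ) := by exact_mod_cast hV.bot_lt
  have hUp : 0 < (U:ℝ) := by exact_mod_cast hU.bot_lt
  set v : ℝ := (V:ℝ) ^ (1 / D) with hv
  set u : ℝ := (U:ℝ) ^ (1 / D) with hu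
  have hvp : 0 < v := Real.rpow_pos_of_pos hVp _
  have hup : 0 < u := Real.rpow_pos_of_pos hUp _
  have hvD : v ^ D = V := by
    rw [hv, ← Real.rpow_mul hVp.le, one_div_mul_cancel hD0.ne', Real.rpow_one]
  have cast : ∀ (x : ℝ≥0) (p : ℝ), 0 ≤ p → (x : ℝ≥0∞) ^ p = ENNReal.ofReal ((x:ℝ) ^ p) := by
    intro x p hp
    rw [← ENNReal.ofReal_rpow_of_nonneg (NNReal.coe_nonneg x) hp, ENNReal.ofReal_coe_nnreal]
  have hp1 : 0 ≤ 1 / D := by positivity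
  have hp2 : 0 ≤ (D - 1) / D := div_nonneg (by linarith) hD0.le
  rw [cast _ _ hp1, cast _ _ hp1, ← ENNReal.coe_add, cast _ _ hp1, ← hv, ← hu,
    ← ENNReal.ofReal_mul hε.le, ← ENNReal.ofReal_add hvp.le (by positivity),
    ENNReal.ofReal_le_ofReal_iff (by positivity)] at key2
  rw [cast _ _ hp1, cast _ _ hp2, ← ENNReal.ofReal_mul hD0.le, ← ENNReal.ofReal_mul (by positivity),
    ← ENNReal.ofReal_mul hε.le, ← ENNReal.ofReal_coe_nnreal (p := R)]
  apply ENNReal.ofReal_le_ofReal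
  have k3 := Real.rpow_le_rpow (by positivity) key2 hD0.le
  rw [← Real.rpow_mul (by positivity), one_div_mul_cancel hD0.ne', Real.rpow_one] at k3
  have k4 := one_add_mul_self_le_rpow_one_add (s := ε * u / v) (p := D)
    (by have : 0 < ε * u / v := by positivity
        linarith) hD1.le
  have k5 : (v + ε * u) ^ D = V * (1 + ε * u / v) ^ D := by
    rw [← hvD, ← Real.mul_rpow hvp.le (by positivity)]
    congr 1; field_simp
  have k6 : (V:ℝ) ^ ((D - 1) / D) = V / v := by
    rw [hv, ← Real.rpow_one_sub' hVp.le]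
    · congr 1; field_simp
    · have : 1 / D < 1 := by rw [div_lt_one hD0]; exact hD1
      linarith
  rw [k5] at k3
  push_cast at k3
  have k7 := (mul_le_mul_of_nonneg_left k4 hVp.le).trans k3
  rw [k6, ← hu]
  have : ε * (D * (↑V / v) * u) = V * (D * (ε * u / v)) := by ring
  rw [this]; linarith


theorem vol_eq_hausdorff (d : ℕ) : ∃ c : ℝ≥0∞, c ≠ 0 ∧ c ≠ ∞ ∧
    (volume : Measure (Euc d)) = c • (μH[(d:ℝ)] : Measure (Euc d)) := by
  have h : Measure.IsAddHaarMeasure (μH[(Module.finrank ℝ (Euc d) : ℝ)] : Measure (Euc d)) :=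
    inferInstance
  rw [finrank_euclideanSpace_fin] at h
  have h3 := Measure.isAddLeftInvariant_eq_smul (volume : Measure (Euc d))
    (μH[(d:ℝ)] : Measure (Euc d))
  have h4 := Measure.addHaarScalarFactor_pos_of_isAddHaarMeasure (volume : Measure (Euc d))
    (μH[(d:ℝ)] : Measure (Euc d))
  exact ⟨_, by exact_mod_cast h4.ne', ENNReal.coe_ne_top, h3⟩

def consE (m : ℕ) (p : ℝ × Euc m) : Euc (m + 1) := WithLp.toLp 2 (Fin.cons p.1 p.2.ofLp)

@[simp] theorem consE_zero (m : ℕ) (p : ℝ × Euc m) : consE m p 0 = p.1 := by simp [consE]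

theorem mp_consE (m : ℕ) : MeasurePreserving (consE m)
    ((volume : Measure ℝ).prod (volume : Measure (Euc m))) volume := by
  have h1 := (MeasurePreserving.id (volume : Measure ℝ)).prod (PiLp.volume_preserving_ofLp (Fin m))
  have h2 := (volume_preserving_piFinSuccAbove (fun _ : Fin (m+1) => ℝ) 0).symm
  have h3 := PiLp.volume_preserving_toLp (Fin (m+1))
  have := h3.comp (h2.comp h1)
  have e : consE m = WithLp.toLp 2 ∘ (MeasurableEquiv.piFinSuccAbove (fun _ : Fin (m+1) => ℝ) 0).symm
      ∘ Prod.map id WithLp.ofLp := by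
    funext p
    simp only [consE, Function.comp, MeasurableEquiv.piFinSuccAbove_symm_apply]
    congr 1
    funext i
    refine Fin.cases ?_ (fun j => ?_) i <;> simp
  rw [e]
  exact this

theorem continuous_consE (m : ℕ) : Continuous (consE m) := by
  unfold consE
  refine (PiLp.continuous_toLp 2 _).comp ?_
  refine continuous_pi fun i => ?_
  refine Fin.cases ?_ (fun j => ?_) i
  · simpa using continuous_fst
  · simp only [Fin.cons_succ]; fun_prop

theorem isometry_consE (m : ℕ) (t : ℝ) : Isometry (fun z : Euc m => consE m (t, z)) := by
  refine Isometry.of_dist_eq fun x y => ?_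
  simp [EuclideanSpace.dist_eq, consE, Fin.sum_univ_succ]

theorem range_consE (m : ℕ) : range (fun z : Euc m => consE m (0, z)) = {y | y 0 = 0} := by
  ext y
  constructor
  · rintro ⟨z, rfl⟩; simp
  · intro hy
    refine ⟨WithLp.toLp 2 (Fin.tail y.ofLp), ?_⟩
    have hy' : y.ofLp 0 = 0 := hy
    simp only [consE]
    rw [← hy', Fin.cons_self_tail]

theorem map_vol_le {d : ℕ} (Φ : Euc d ≃ₜ Euc d) {K : ℝ≥0} (h2 : LipschitzWith K Φ.symm) :
    Measure.map Φ (volume : Measure (Euc d)) ≤ ((K:ℝ≥0∞) ^ (d:ℝ)) • volume := by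
  obtain ⟨c, hc0, hct, hc⟩ := vol_eq_hausdorff d
  refine Measure.le_iff.mpr fun s hs => ?_
  rw [Measure.map_apply Φ.continuous.measurable hs, hc]
  simp only [Measure.smul_apply, smul_eq_mul]
  have : Φ ⁻¹' s = Φ.symm '' s := by rw [Homeomorph.image_symm]
  rw [this]
  calc _ ≤ c * ((K:ℝ≥0∞) ^ (d:ℝ) * μH[(d:ℝ)] s) := by
        gcongr; exact h2.hausdorffMeasure_image_le (by positivity) s
    _ = _ := by ring

theorem hausdorff_le_map {d : ℕ} {p : ℝ} (hp : 0 ≤ p) (Φ : Euc d ≃ₜ Euc d) {K : ℝ≥0}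
    (h2 : LipschitzWith K Φ) :
    (μH[p] : Measure (Euc d)) ≤ ((K:ℝ≥0∞) ^ p) • Measure.map Φ (μH[p] : Measure (Euc d)) := by
  refine Measure.le_iff.mpr fun s hs => ?_
  rw [Measure.smul_apply, Measure.map_apply Φ.continuous.measurable hs]
  calc μH[p] s = μH[p] (Φ '' (Φ ⁻¹' s)) := by rw [Φ.image_preimage]
    _ ≤ _ := h2.hausdorffMeasure_image_le hp _

theorem chart_layer {m : ℕ} {c : ℝ≥0∞}
    (hc : (volume : Measure (Euc m)) = c • (μH[(m:ℝ)] : Measure (Euc m)))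
    (Φ : Euc (m+1) ≃ₜ Euc (m+1)) {K : ℝ≥0} (h1 : LipschitzWith K Φ) (h2 : LipschitzWith K Φ.symm)
    {g : Euc (m+1) → ℝ} (hg : Continuous g) (hgs : HasCompactSupport g)
    {b : ℝ} (hb : 0 < b) {δ : ℝ≥0∞} (hδ : δ ≠ 0) :
    ∀ᶠ ε in 𝓝[>] (0:ℝ), ∫⁻ x in {x | 0 ≤ Φ x 0 ∧ Φ x 0 < b * ε}, ENNReal.ofReal (g x) ≤
      ENNReal.ofReal ε * (ENNReal.ofReal b * ((K:ℝ≥0∞) ^ (((m+1:ℕ):ℝ)) *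
        (c * ((K:ℝ≥0∞) ^ (m:ℝ) *
          ∫⁻ x in {x | Φ x 0 = 0}, ENNReal.ofReal (g x) ∂μH[(m:ℝ)]) + δ))) := by
  set G : Euc (m+1) → ℝ := fun y => g (Φ.symm y) with hG
  have hGc : Continuous G := hg.comp Φ.symm.continuous
  have hGs : HasCompactSupport G := hgs.comp_homeomorph Φ.symm
  set J : ℝ → ℝ≥0∞ := fun t => ∫⁻ z, ENNReal.ofReal (G (consE m (t, z))) with hJ
  have coord0 : Continuous fun y : Euc (m+1) => y 0 := by fun_prop
  -- J 0 bound
  have hJ0 : J 0 ≤ c * ((K:ℝ≥0∞) ^ (m:ℝ) *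
      ∫⁻ x in {x | Φ x 0 = 0}, ENNReal.ofReal (g x) ∂μH[(m:ℝ)]) := by
    simp only [hJ]
    rw [hc, lintegral_smul_measure, smul_eq_mul]
    gcongr
    have hiso := isometry_consE m 0
    have hmap := hiso.map_hausdorffMeasure (d := (m:ℝ)) (Or.inl (by positivity))
    rw [range_consE] at hmap
    have hGm : Measurable fun y => ENNReal.ofReal (G y) := by fun_prop
    rw [← lintegral_map (f := fun y => ENNReal.ofReal (G y)) hGm hiso.continuous.measurable, hmap]
    have hms : MeasurableSet {y : Euc (m+1) | y 0 = 0} :=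
      (isClosed_eq coord0 continuous_const).measurableSet
    rw [← lintegral_indicator hms]
    calc _ ≤ ∫⁻ y, ({y : Euc (m+1) | y 0 = 0}.indicator fun y => ENNReal.ofReal (G y)) y
          ∂(((K:ℝ≥0∞) ^ (m:ℝ)) • Measure.map Φ μH[(m:ℝ)]) :=
          lintegral_mono' (hausdorff_le_map (by positivity) Φ h1) le_rfl
      _ = _ := by
        rw [lintegral_smul_measure, smul_eq_mul, lintegral_map (hGm.indicator hms)
          Φ.continuous.measurable]
        congr 1
        rw [← lintegral_indicator]
        · congr 1; ext x
          simp only [indicator, mem_ofPred_eq, hG, Φ.symm_apply_apply]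
        · exact (isClosed_eq (coord0.comp Φ.continuous) continuous_const).measurableSet
  -- continuity of J
  have hJc : Filter.Tendsto J (𝓝 0) (𝓝 (J 0)) := by
    obtain ⟨C, hC⟩ := hGc.bounded_above_of_compact_support hGs
    obtain ⟨R, hR⟩ := hGs.isCompact.isBounded.subset_closedBall 0
    refine tendsto_lintegral_filter_of_dominated_convergence
      ((closedBall (0 : Euc m) R).indicator fun _ => ENNReal.ofReal C) ?_ ?_ ?_ ?_
    · refine Filter.Eventually.of_forall fun t => ?_
      have := (continuous_consE m).comp (Continuous.prodMk_right t)
      have : Continuous fun z => G (consE m (t, z)) := hGc.comp this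
      exact this.measurable.ennreal_ofReal
    · refine Filter.Eventually.of_forall fun t => ae_of_all _ fun z => ?_
      by_cases hz : z ∈ closedBall (0 : Euc m) R
      · rw [indicator_of_mem hz]
        exact ENNReal.ofReal_le_ofReal ((le_abs_self _).trans (hC _))
      · have : G (consE m (t, z)) = 0 := by
          by_contra hne
          have := hR (subset_tsupport G hne)
          apply hz
          rw [mem_closedBall_zero_iff] at this ⊢
          refine le_trans ?_ this
          rw [EuclideanSpace.norm_eq, EuclideanSpace.norm_eq]
          apply Real.sqrt_le_sqrt
          simp only [consE, Fin.sum_univ_succ, Fin.cons_zero, Fin.cons_succ]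
          have := sq_nonneg ‖t‖
          linarith
        simp [this]
    · rw [lintegral_indicator isClosed_closedBall.measurableSet, setLIntegral_const]
      exact ENNReal.mul_ne_top ENNReal.ofReal_ne_top
        (isCompact_closedBall _ _).measure_lt_top.ne
    · refine ae_of_all _ fun z => ?_
      have : Continuous fun t => ENNReal.ofReal (G (consE m (t, z))) := by
        have := (continuous_consE m).comp (Continuous.prodMk_left z)
        have : Continuous fun t => G (consE m (t, z)) := hGc.comp this
        exact ENNReal.continuous_ofReal.comp this
      exact this.tendsto 0
  by_cases hfin : c * ((K:ℝ≥0∞) ^ (m:ℝ) *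
      ∫⁻ x in {x | Φ x 0 = 0}, ENNReal.ofReal (g x) ∂μH[(m:ℝ)]) = ∞
  · by_cases hK : K = 0
    · exfalso
      subst hK
      have h5 := h1.dist_le_mul (Φ.symm (EuclideanSpace.single 0 1)) (Φ.symm 0)
      simp at h5
      norm_num at h5
    rw [hfin]
    filter_upwards [self_mem_nhdsWithin] with ε hε
    have hε' : 0 < ε := hε
    have : ((K:ℝ≥0∞) ^ (((m+1:ℕ):ℝ))) ≠ 0 := by
      simp [hK]
    rw [top_add, ENNReal.mul_top this, ENNReal.mul_top (by simpa using hb),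
      ENNReal.mul_top (by simpa using hε')]
    exact le_top
  have hev : ∀ᶠ t in 𝓝 (0:ℝ), J t ≤ c * ((K:ℝ≥0∞) ^ (m:ℝ) *
      ∫⁻ x in {x | Φ x 0 = 0}, ENNReal.ofReal (g x) ∂μH[(m:ℝ)]) + δ := by
    have : J 0 < c * ((K:ℝ≥0∞) ^ (m:ℝ) *
      ∫⁻ x in {x | Φ x 0 = 0}, ENNReal.ofReal (g x) ∂μH[(m:ℝ)]) + δ :=
      lt_of_le_of_lt hJ0 (ENNReal.lt_add_right hfin hδ)
    filter_upwards [hJc.eventually (gt_mem_nhds this)] with t ht using ht.le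
  obtain ⟨τ, hτ, hτ'⟩ := Metric.eventually_nhds_iff.mp hev
  have : Iio (τ / b) ∈ 𝓝[>] (0:ℝ) := mem_nhdsWithin_of_mem_nhds (Iio_mem_nhds (by positivity))
  filter_upwards [self_mem_nhdsWithin, this] with ε hε hετ
  have hε' : 0 < ε := hε
  have hlt : b * ε < τ := by
    have : ε < τ / b := hετ
    rw [lt_div_iff₀ hb] at this
    linarith
  set Q : Set (Euc (m+1)) := {y | 0 ≤ y 0 ∧ y 0 < b * ε} with hQ
  have hQm : MeasurableSet Q :=
    (isClosed_le continuous_const coord0).measurableSet.inter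
      (isOpen_lt coord0 continuous_const).measurableSet
  have hGm : Measurable fun y => ENNReal.ofReal (G y) := by fun_prop
  have hum := hGm.indicator hQm
  calc ∫⁻ x in {x | 0 ≤ Φ x 0 ∧ Φ x 0 < b * ε}, ENNReal.ofReal (g x)
      = ∫⁻ x, Q.indicator (fun y => ENNReal.ofReal (G y)) (Φ x) := by
        rw [← lintegral_indicator]
        · congr 1; ext x
          simp only [indicator, hQ, mem_ofPred_eq, hG, Φ.symm_apply_apply]
        · exact Φ.continuous.measurable hQm
    _ = ∫⁻ y, Q.indicator (fun y => ENNReal.ofReal (G y)) y ∂(Measure.map Φ volume) :=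
        (lintegral_map hum Φ.continuous.measurable).symm
    _ ≤ ∫⁻ y, Q.indicator (fun y => ENNReal.ofReal (G y)) y
          ∂(((K:ℝ≥0∞) ^ (((m+1:ℕ):ℝ))) • volume) := lintegral_mono' (map_vol_le Φ h2) le_rfl
    _ = ((K:ℝ≥0∞) ^ (((m+1:ℕ):ℝ))) * ∫⁻ y, Q.indicator (fun y => ENNReal.ofReal (G y)) y := by
        rw [lintegral_smul_measure, smul_eq_mul]
    _ = ((K:ℝ≥0∞) ^ (((m+1:ℕ):ℝ))) * ∫⁻ t in Ico 0 (b * ε), J t := by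
        congr 1
        rw [← (mp_consE m).lintegral_comp hum, lintegral_prod
          (fun a => Q.indicator (fun y => ENNReal.ofReal (G y)) (consE m a))
          (hum.comp (continuous_consE m).measurable).aemeasurable,
          ← lintegral_indicator measurableSet_Ico]
        congr 1; ext t
        by_cases ht : t ∈ Ico 0 (b * ε)
        · rw [indicator_of_mem ht]
          congr 1; ext z
          rw [indicator_of_mem]
          simpa [hQ] using ht
        · rw [indicator_of_notMem ht]
          rw [← lintegral_zero (μ := (volume : Measure (Euc m)))]
          congr 1; ext z
          rw [indicator_of_notMem]
          simpa [hQ] using ht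
    _ ≤ ((K:ℝ≥0∞) ^ (((m+1:ℕ):ℝ))) * ∫⁻ t in Ico 0 (b * ε), (c * ((K:ℝ≥0∞) ^ (m:ℝ) *
      ∫⁻ x in {x | Φ x 0 = 0}, ENNReal.ofReal (g x) ∂μH[(m:ℝ)]) + δ) := by
        gcongr 1
        refine setLIntegral_mono' measurableSet_Ico fun t ht => ?_
        apply hτ'
        rw [Real.dist_eq, sub_zero, abs_of_nonneg ht.1]
        exact ht.2.trans hlt
    _ = _ := by
        rw [setLIntegral_const, Real.volume_Ico, sub_zero, ENNReal.ofReal_mul hb.le]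
        ring

theorem chart_finite {m : ℕ} (Φ : Euc (m+1) ≃ₜ Euc (m+1)) {K : ℝ≥0} (h2 : LipschitzWith K Φ.symm)
    {A : Set (Euc (m+1))} (hA : IsCompact A) (hA0 : ∀ x ∈ A, Φ x 0 = 0) :
    μH[(m:ℝ)] A < ∞ := by
  obtain ⟨c, hc0, hct, hc⟩ := vol_eq_hausdorff m
  set Z : Set (Euc m) := (fun z : Euc m => consE m (0, z)) ⁻¹' (Φ '' A) with hZ
  have hiso := isometry_consE m 0
  have hZc : IsCompact Z := hiso.isClosedEmbedding.isCompact_preimage (hA.image Φ.continuous)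
  have hZA : (fun z : Euc m => consE m (0, z)) '' Z = Φ '' A := by
    rw [hZ, image_preimage_eq_inter_range, range_consE, inter_eq_left]
    rintro _ ⟨x, hx, rfl⟩
    exact hA0 x hx
  have hZf : μH[(m:ℝ)] Z < ∞ := by
    have := hZc.measure_lt_top (μ := volume)
    rw [hc, Measure.smul_apply, smul_eq_mul] at this
    by_contra h
    rw [not_lt, top_le_iff] at h
    rw [h, ENNReal.mul_top hc0] at this
    exact lt_irrefl _ this
  have e : A = Φ.symm '' (Φ '' A) := by
    rw [Homeomorph.image_symm, Φ.preimage_image]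
  rw [e]
  refine (h2.hausdorffMeasure_image_le (by positivity) _).trans_lt ?_
  rw [← hZA, hiso.hausdorffMeasure_image (Or.inl (by positivity))]
  exact ENNReal.mul_lt_top (ENNReal.rpow_lt_top_of_nonneg (by positivity) (by simp)) hZf


theorem exists_chart {m : ℕ} {f : Euc (m+1) → ℝ} {x₀ : Euc (m+1)} {f' : Euc (m+1) →L[ℝ] ℝ}
    (hf : HasStrictFDerivAt f f' x₀) (hf' : f' ≠ 0) {η : ℝ≥0} (hη : 0 < η) :
    ∃ r > 0, ∃ Φ : Euc (m+1) ≃ₜ Euc (m+1), LipschitzWith (1 + η) Φ ∧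
      LipschitzWith (1 + η) Φ.symm ∧ ∀ x ∈ ball x₀ r, f x = ‖f'‖ * Φ x 0 := by
  set v := (InnerProductSpace.toDual ℝ (Euc (m+1))).symm f' with hv
  have hvf : ∀ x, ⟪v, x⟫ = f' x := fun x => InnerProductSpace.toDual_symm_apply
  have hvn : ‖v‖ = ‖f'‖ := by simp [hv]
  set a := ‖f'‖ with ha
  have ha0 : 0 < a := norm_pos_iff.mpr hf'
  set ν := a⁻¹ • v with hν
  set e : Euc (m+1) := EuclideanSpace.single 0 1 with he
  have hνn : ‖ν‖ = ‖e‖ := by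
    rw [hν, norm_smul, hvn, norm_inv, Real.norm_of_nonneg ha0.le, inv_mul_cancel₀ ha0.ne']
    simp [he]
  have hen : ‖e‖ = 1 := by simp [he]
  set A : Euc (m+1) ≃ₗᵢ[ℝ] Euc (m+1) := (ℝ ∙ (ν - e))ᗮ.reflection with hA
  have hAν : A ν = e := Submodule.reflection_sub hνn
  have hA0 : ∀ x, A x 0 = a⁻¹ * f' x := by
    intro x
    have h1 : A x 0 = ⟪e, A x⟫ := by simp [he, EuclideanSpace.inner_single_left]
    rw [h1, ← hAν, A.inner_map_map, hν, real_inner_smul_left, hvf]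
  set κ : ℝ≥0 := η / (1 + η) with hκ
  have hκ0 : 0 < κ := by positivity
  have hκ1 : κ < 1 := by
    rw [hκ, div_lt_one (by positivity)]
    exact lt_one_add η
  have hκη : κ ≤ η := div_le_self (by positivity) (by simp)
  set φ : Euc (m+1) → ℝ := fun x => a⁻¹ * (f x - f' x) with hφ
  have hφd : HasStrictFDerivAt φ (0 : Euc (m+1) →L[ℝ] ℝ) x₀ := by
    have := (hf.sub f'.hasStrictFDerivAt).const_mul a⁻¹
    simpa using this
  obtain ⟨s, hs, hsL⟩ := hφd.exists_lipschitzOnWith_of_nnnorm_lt κ (by simpa using hκ0)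
  obtain ⟨r, hr, hrs⟩ := Metric.mem_nhds_iff.mp hs
  obtain ⟨ψ, hψ, hψe⟩ := hsL.extend_real
  set F : Euc (m+1) → Euc (m+1) := fun x => A x + ψ x • e with hF
  have hFL : ApproximatesLinearOn F (A.toContinuousLinearEquiv : Euc (m+1) →L[ℝ] Euc (m+1)) univ κ := by
    intro x _ y _
    have : F x - F y - A.toContinuousLinearEquiv (x - y) = (ψ x - ψ y) • e := by
      have : A.toContinuousLinearEquiv (x - y) = A x - A y := map_sub A x y
      rw [this]
      simp only [hF]; module
    have h2 : ‖F x - F y - A.toContinuousLinearEquiv (x - y)‖ ≤ κ * ‖x - y‖ := by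
      rw [this, norm_smul, hen, mul_one, ← dist_eq_norm, ← dist_eq_norm]
      exact hψ.dist_le_mul x y
    exact h2
  have hnn : κ < ‖(A.toContinuousLinearEquiv.symm : Euc (m+1) →L[ℝ] Euc (m+1))‖₊⁻¹ := by
    have : ‖(A.toContinuousLinearEquiv.symm : Euc (m+1) →L[ℝ] Euc (m+1))‖₊ ≤ 1 := by
      refine ContinuousLinearMap.opNNNorm_le_bound _ _ fun y => ?_
      rw [one_mul]
      exact le_of_eq (A.symm.nnnorm_map y)
    refine hκ1.trans_le ?_
    by_cases h0 : ‖(A.toContinuousLinearEquiv.symm : Euc (m+1) →L[ℝ] Euc (m+1))‖₊ = 0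
    · exfalso
      rw [nnnorm_eq_zero] at h0
      have h1 := A.symm.norm_map e
      have h3 : A.symm e = (A.toContinuousLinearEquiv.symm : Euc (m+1) →L[ℝ] Euc (m+1)) e := rfl
      rw [h3, h0, hen] at h1
      simp at h1
    · exact (one_le_inv₀ (pos_iff_ne_zero.mpr h0)).mpr this
  set Φ := hFL.toHomeomorph F (Or.inr hnn) with hΦ
  have hΦF : ∀ x, Φ x = F x := fun x => rfl
  have hdist : ∀ x y, |dist (F x) (F y) - dist x y| ≤ κ * dist x y := by
    intro x y
    have h := hFL x (mem_univ _) y (mem_univ _)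
    have h2 : ‖(A.toContinuousLinearEquiv : Euc (m+1) →L[ℝ] Euc (m+1)) (x - y)‖ = ‖x - y‖ :=
      A.norm_map _
    rw [dist_eq_norm, dist_eq_norm]
    refine le_trans ?_ h
    conv_lhs => rw [← h2]
    exact abs_norm_sub_norm_le _ _
  refine ⟨r, hr, Φ, ?_, ?_, ?_⟩
  · refine LipschitzWith.of_dist_le_mul fun x y => ?_
    rw [hΦF, hΦF]
    have := (abs_le.mp (hdist x y)).2
    have h3 : (κ:ℝ) * dist x y ≤ η * dist x y :=
      mul_le_mul_of_nonneg_right (by exact_mod_cast hκη) dist_nonneg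
    push_cast
    linarith
  · refine LipschitzWith.of_dist_le_mul fun x y => ?_
    have := (abs_le.mp (hdist (Φ.symm x) (Φ.symm y))).1
    rw [← hΦF, ← hΦF, Φ.apply_symm_apply, Φ.apply_symm_apply] at this
    have hk : (κ:ℝ) = η / (1 + η) := by simp [hκ]
    have h1η : (0:ℝ) < 1 + η := by positivity
    rw [hk] at this
    push_cast
    have e1 : (1 + (η:ℝ)) * (η / (1 + η) * dist (Φ.symm x) (Φ.symm y)) = η * dist (Φ.symm x) (Φ.symm y) := by
      field_simp
    have := mul_le_mul_of_nonneg_left this h1η.le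
    rw [mul_neg, e1] at this
    linarith
  · intro x hx
    have h1 : ψ x = φ x := (hψe (hrs hx)).symm
    rw [hΦF]
    simp only [hF, PiLp.add_apply, PiLp.smul_apply, hA0, h1, hφ]
    simp only [he]
    simp
    field_simp
    ring



theorem small_const (m : ℕ) {s η : ℝ} (hs : 0 ≤ s) (hη : 0 < η) : ∃ κ : ℝ≥0, 0 < κ ∧
    (s + κ) * ((1 + κ) ^ (m+1) * (1 + κ) ^ m) ≤ s + η := by
  have hc : Continuous fun κ : ℝ => (s + κ) * ((1 + κ) ^ (m+1) * (1 + κ) ^ m) := by fun_prop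
  have h0 : ∀ᶠ κ in 𝓝 (0:ℝ), (s + κ) * ((1 + κ) ^ (m+1) * (1 + κ) ^ m) < s + η := by
    apply hc.continuousAt.eventually_lt continuousAt_const
    simp [hη]
  obtain ⟨r, hr, h⟩ := Metric.eventually_nhds_iff.mp h0
  refine ⟨⟨r/2, by positivity⟩, ?_, ?_⟩
  · exact_mod_cast half_pos hr
  · refine (h (y := r/2) ?_).le
    simp [abs_of_pos hr, hr]

theorem layer_local_aux {m : ℕ} {c : ℝ≥0∞} (hc : (volume : Measure (Euc (m))) = c • μH[(m:ℝ)])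
    {f : Euc (m+1) → ℝ} (hf : ContDiff ℝ (⊤ : ℕ∞) f) {T : Set (Euc (m+1))}
    (hT : T ⊆ ball 0 1) {x₀ : Euc (m+1)} (hx₀ : fderiv ℝ f x₀ ≠ 0) {s : ℝ} (hs : 0 ≤ s)
    (hsl : ∀ b ∈ T, fderiv ℝ f x₀ b ≤ s * ‖fderiv ℝ f x₀‖) {η : ℝ} (hη : 0 < η) :
    ∃ r > 0, ∀ g : Euc (m+1) → ℝ, Continuous g → HasCompactSupport g →
      Function.support g ⊆ ball x₀ r → ∀ δ : ℝ≥0∞, δ ≠ 0 →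
      ∀ᶠ ε in 𝓝[>] (0:ℝ), ∫⁻ x in ({x | f x < 0} + ε • T) \ {x | f x < 0}, ENNReal.ofReal (g x) ≤
        ENNReal.ofReal ε * (ENNReal.ofReal (s + η) *
          (c * ∫⁻ x in {x | f x = 0}, ENNReal.ofReal (g x) ∂μH[(m:ℝ)] + δ)) := by
  obtain ⟨κ, hκ, hκη⟩ := small_const m hs hη
  have hst : HasStrictFDerivAt f (fderiv ℝ f x₀) x₀ :=
    hf.contDiffAt.hasStrictFDerivAt (by simp)
  set a := ‖fderiv ℝ f x₀‖ with ha
  have ha0 : 0 < a := norm_pos_iff.mpr hx₀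
  obtain ⟨r₁, hr₁, Φ, h1, h2, hΦ⟩ := exists_chart hst hx₀ hκ
  obtain ⟨u, hu, hua⟩ := hst.approximates_deriv_on_nhds (c := κ * ‖fderiv ℝ f x₀‖₊)
    (Or.inr (mul_pos hκ (nnnorm_pos.mpr hx₀)))
  obtain ⟨r₂, hr₂, hr₂u⟩ := Metric.mem_nhds_iff.mp hu
  set r := min r₁ (r₂/2) with hr
  have hr0 : 0 < r := by positivity
  refine ⟨r, hr0, fun g hg hgs hgr δ hδ => ?_⟩
  have hb : 0 < s + (κ:ℝ) := by positivity
  have hsmall : ∀ᶠ ε in 𝓝[>] (0:ℝ), ε < r₂/2 :=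
    (eventually_lt_nhds (by positivity)).filter_mono nhdsWithin_le_nhds
  filter_upwards [chart_layer hc Φ h1 h2 hg hgs hb hδ, hsmall, self_mem_nhdsWithin] with ε hε hεr hε0
  have hε0 : 0 < ε := hε0
  have hsupp : ∀ x, x ∉ ball x₀ r → g x = 0 := by
    intro x hx
    by_contra h
    exact hx (hgr h)
  have step1 : ∫⁻ x in ({x | f x < 0} + ε • T) \ {x | f x < 0}, ENNReal.ofReal (g x) ≤
      ∫⁻ x in {x | 0 ≤ Φ x 0 ∧ Φ x 0 < (s + κ) * ε}, ENNReal.ofReal (g x) := by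
    have hm : MeasurableSet (ball x₀ r) := measurableSet_ball
    have e1 : ∀ A : Set (Euc (m+1)), ∫⁻ x in A, ENNReal.ofReal (g x) =
        ∫⁻ x in ball x₀ r ∩ A, ENNReal.ofReal (g x) := by
      intro A
      rw [← Measure.restrict_restrict hm, ← lintegral_indicator hm]
      congr 1
      ext x
      by_cases hx : x ∈ ball x₀ r
      · simp only [indicator_of_mem hx]
      · simp only [indicator_of_notMem hx, hsupp x hx, ENNReal.ofReal_zero]
    rw [e1]
    apply lintegral_mono_set
    rintro x ⟨hxb, ⟨e, he, y, ⟨b, hbT, rfl⟩, rfl⟩, hxE⟩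
    have hfx : 0 ≤ f (e + ε • b) := not_lt.mp hxE
    have hfe : f e < 0 := he
    have hbn : ‖b‖ < 1 := by simpa using hT hbT
    have hx1 : e + ε • b ∈ ball x₀ r₁ := ball_subset_ball (min_le_left _ _) hxb
    have hd : dist (e + ε • b) x₀ < r₂/2 := lt_of_lt_of_le hxb (min_le_right _ _)
    have hxu : e + ε • b ∈ u := hr₂u (lt_trans hd (by linarith))
    have heu : e ∈ u := by
      apply hr₂u
      have : dist e (e + ε • b) ≤ ε := by
        rw [dist_self_add_right, norm_smul, Real.norm_of_nonneg hε0.le]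
        nlinarith
      have := dist_triangle e (e + ε • b) x₀
      rw [mem_ball]; linarith
    have hap := hua _ hxu _ heu
    have hsub : e + ε • b - e = ε • b := by abel
    rw [hsub, norm_smul, Real.norm_of_nonneg hε0.le, map_smul] at hap
    have hap2 := (abs_le.mp hap).2
    have hb1 := hsl b hbT
    have hk : (((κ * ‖fderiv ℝ f x₀‖₊ : ℝ≥0)) : ℝ) = κ * a := by simp [ha]
    rw [hk, smul_eq_mul] at hap2
    have h5 : ε * fderiv ℝ f x₀ b ≤ ε * (s * a) := mul_le_mul_of_nonneg_left hb1 hε0.le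
    have hκr : (0:ℝ) < κ := hκ
    have h6 : κ * a * (ε * ‖b‖) < κ * a * ε := by
      have : 0 < κ * a * ε := by positivity
      nlinarith
    have h7 : f (e + ε • b) < a * ((s + κ) * ε) := by nlinarith
    rw [hΦ _ hx1] at hfx h7
    exact ⟨nonneg_of_mul_nonneg_right hfx ha0, lt_of_mul_lt_mul_left h7 ha0.le⟩
  refine step1.trans (hε.trans ?_)
  gcongr ENNReal.ofReal ε * ?_
  have step2 : ∫⁻ x in {x | Φ x 0 = 0}, ENNReal.ofReal (g x) ∂μH[(m:ℝ)] ≤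
      ∫⁻ x in {x | f x = 0}, ENNReal.ofReal (g x) ∂μH[(m:ℝ)] := by
    have hm : MeasurableSet (ball x₀ r) := measurableSet_ball
    have e1 : ∀ A : Set (Euc (m+1)), ∫⁻ x in A, ENNReal.ofReal (g x) ∂μH[(m:ℝ)] =
        ∫⁻ x in ball x₀ r ∩ A, ENNReal.ofReal (g x) ∂μH[(m:ℝ)] := by
      intro A
      rw [← Measure.restrict_restrict hm, ← lintegral_indicator hm]
      congr 1
      ext x
      by_cases hx : x ∈ ball x₀ r
      · simp only [indicator_of_mem hx]
      · simp only [indicator_of_notMem hx, hsupp x hx, ENNReal.ofReal_zero]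
    rw [e1]
    apply lintegral_mono_set
    rintro x ⟨hxb, hx⟩
    have hx : Φ x 0 = 0 := hx
    have := hΦ x (ball_subset_ball (min_le_left _ _) hxb)
    rw [hx, mul_zero] at this
    exact this
  set I := ∫⁻ x in {x | f x = 0}, ENNReal.ofReal (g x) ∂μH[(m:ℝ)]
  set K : ℝ≥0∞ := ((1 + κ : ℝ≥0) : ℝ≥0∞) with hK
  have hK1 : 1 ≤ K := by rw [hK]; exact_mod_cast (by simp : (1:ℝ≥0) ≤ 1 + κ)
  rw [ENNReal.rpow_natCast, ENNReal.rpow_natCast]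
  calc _ ≤ ENNReal.ofReal (s + κ) * (K ^ (m+1) * (c * (K ^ m * I) + K ^ m * δ)) := by
        gcongr
        calc δ = 1 * δ := (one_mul _).symm
          _ ≤ _ := by gcongr; exact one_le_pow₀ hK1
    _ = (ENNReal.ofReal (s + κ) * (K ^ (m+1) * K ^ m)) * (c * I + δ) := by ring
    _ ≤ _ := by
        gcongr
        have : K = ENNReal.ofReal (1 + κ) := by
          rw [hK, ENNReal.ofReal, Real.toNNReal_add (by simp) (by simp)]; simp
        rw [this, ← ENNReal.ofReal_pow (by positivity), ← ENNReal.ofReal_pow (by positivity),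
          ← ENNReal.ofReal_mul (by positivity), ← ENNReal.ofReal_mul (by positivity)]
        exact ENNReal.ofReal_le_ofReal hκη

theorem layer_local {m : ℕ} {c : ℝ≥0∞} (hc : (volume : Measure (Euc (m))) = c • μH[(m:ℝ)])
    {f : Euc (m+1) → ℝ} (hf : ContDiff ℝ (⊤ : ℕ∞) f) {S : Set (Euc (m+1))}
    (hS : IsOpenConvexCone S) (hES : {x | f x < 0} ⊆ S)
    {x₀ : Euc (m+1)} (hfx : f x₀ = 0) (hx₀ : fderiv ℝ f x₀ ≠ 0) {η : ℝ} (hη : 0 < η) :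
    ∃ r > 0, ∀ g : Euc (m+1) → ℝ, Continuous g → HasCompactSupport g →
      Function.support g ⊆ ball x₀ r → ∀ δ : ℝ≥0∞, δ ≠ 0 →
      ∀ᶠ ε in 𝓝[>] (0:ℝ), ∫⁻ x in ({x | f x < 0} + ε • (ball 0 1 ∩ S)) \ {x | f x < 0}, ENNReal.ofReal (g x) ≤
        ENNReal.ofReal ε * (c * (∫⁻ x in {x | f x = 0} ∩ S, ENNReal.ofReal (g x) ∂μH[(m:ℝ)]
          + ENNReal.ofReal η * ∫⁻ x in {x | f x = 0}, ENNReal.ofReal (g x) ∂μH[(m:ℝ)]) + δ) := by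
  have hd : ∀ (s : ℝ) (δ : ℝ≥0∞), 0 < s → δ ≠ 0 →  δ / ENNReal.ofReal s ≠ 0 ∧ 
      ENNReal.ofReal s * (δ / ENNReal.ofReal s) = δ := by
    intro s δ hs hδ
    refine ⟨(ENNReal.div_pos hδ ENNReal.ofReal_ne_top).ne', ENNReal.mul_div_cancel ?_ ENNReal.ofReal_ne_top⟩
    simpa using hs
  by_cases hxS : x₀ ∈ S
  · obtain ⟨r₀, hr₀, hrS⟩ := Metric.isOpen_iff.mp hS.1 x₀ hxS
    obtain ⟨r, hr, h⟩ := layer_local_aux hc hf (T := ball 0 1 ∩ S) inter_subset_left hx₀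
      (s := 1) zero_le_one (by
        rintro b ⟨hb, -⟩
        have hb : ‖b‖ < 1 := by simpa using hb
        have h1 := (le_abs_self _).trans ((fderiv ℝ f x₀).le_opNorm b)
        have h0 := norm_nonneg (fderiv ℝ f x₀)
        nlinarith) hη
    refine ⟨min r r₀, lt_min hr hr₀, fun g hg hgs hgr δ hδ => ?_⟩
    obtain ⟨d1, d2⟩ := hd (1 + η) δ (by positivity) hδ
    filter_upwards [h g hg hgs (hgr.trans (ball_subset_ball (min_le_left _ _))) _ d1] with ε hε
    refine hε.trans ?_
    gcongr ENNReal.ofReal ε * ?_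
    rw [mul_add, d2]
    refine add_le_add ?_ le_rfl
    have e : ∫⁻ x in {x | f x = 0}, ENNReal.ofReal (g x) ∂μH[(m:ℝ)] =
        ∫⁻ x in {x | f x = 0} ∩ S, ENNReal.ofReal (g x) ∂μH[(m:ℝ)] := by
      rw [inter_comm, ← Measure.restrict_restrict hS.1.measurableSet, ← lintegral_indicator hS.1.measurableSet]
      congr 1
      ext x
      by_cases hx : x ∈ S
      · simp only [indicator_of_mem hx]
      · have : g x = 0 := by
          by_contra h
          exact hx (hrS (ball_subset_ball (min_le_right _ _) (hgr h)))
        simp only [indicator_of_notMem hx, this, ENNReal.ofReal_zero]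
    rw [← e, ENNReal.ofReal_add zero_le_one hη.le, ENNReal.ofReal_one]
    apply le_of_eq; ring
  · obtain ⟨r, hr, h⟩ := layer_local_aux hc hf (T := ball 0 1 ∩ S) inter_subset_left hx₀
      (s := 0) le_rfl (by
        rintro b ⟨-, hb⟩
        rw [zero_mul]
        by_contra! hpos
        have hder : HasDerivAt (fun t : ℝ => f (x₀ - t • b)) (-(fderiv ℝ f x₀ b)) 0 := by
          have h1 : HasFDerivAt f (fderiv ℝ f x₀) (x₀ - (0:ℝ) • b) := by
            simpa using (hf.differentiable (by simp) x₀).hasFDerivAt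
          have h2 : HasDerivAt (fun t : ℝ => x₀ - t • b) (-b) 0 := by
            simpa using ((hasDerivAt_id (0:ℝ)).smul_const b).const_sub x₀
          have := h1.comp_hasDerivAt (0:ℝ) h2
          have h3 : -(fderiv ℝ f x₀ b) = fderiv ℝ f x₀ (-b) := by simp
          rw [h3]
          exact this
        have hev : ∀ᶠ t in 𝓝[>] (0:ℝ), f (x₀ - t • b) < 0 := by
          have ht := hder.tendsto_slope_zero_right
          have h3 := ht.eventually (eventually_lt_nhds (show -(fderiv ℝ f x₀ b) < 0 by linarith))
          filter_upwards [h3, self_mem_nhdsWithin] with t h4 h5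
          have h5 : 0 < t := h5
          simp only [zero_add, zero_smul, sub_zero, hfx, smul_eq_mul] at h4
          have := (pos_iff_neg_of_mul_neg h4).mp (by positivity)
          exact this
        obtain ⟨t, ht, ht0⟩ := (hev.and self_mem_nhdsWithin).exists
        apply hxS
        have : x₀ = (x₀ - t • b) + t • b := by abel
        rw [this]
        exact cone_add hS (hES ht) (hS.2.2 b hb t ht0)) hη
    refine ⟨r, hr, fun g hg hgs hgr δ hδ => ?_⟩
    obtain ⟨d1, d2⟩ := hd (0 + η) δ (by positivity) hδ
    filter_upwards [h g hg hgs hgr _ d1] with ε hε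
    refine hε.trans ?_
    gcongr ENNReal.ofReal ε * ?_
    rw [mul_add, d2, zero_add, mul_add c, mul_left_comm]
    exact add_le_add le_add_self le_rfl



theorem layer_near {n : ℕ} {f : Euc n → ℝ} (hf : Continuous f) {T : Set (Euc n)} (hT : T ⊆ ball 0 1)
    {ε : ℝ} (hε : 0 < ε) :
    ({x | f x < 0} + ε • T) \ {x | f x < 0} ⊆ cthickening ε {x | f x = 0} := by
  rintro x ⟨⟨e, he, y, ⟨b, hb, rfl⟩, rfl⟩, hx⟩
  have he : f e < 0 := he
  have hx : 0 ≤ f (e + ε • b) := not_lt.mp hx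
  have hbn : ‖b‖ < 1 := by simpa using hT hb
  have hcont : ContinuousOn (fun t : ℝ => f (e + t • b)) (Icc 0 ε) := by fun_prop
  have := intermediate_value_Icc hε.le hcont
  obtain ⟨t, ht, htf⟩ := this ⟨by simpa using he.le, hx⟩
  refine mem_cthickening_of_dist_le _ (e + t • b) _ _ htf ?_
  have h1 : e + ε • b - (e + t • b) = (ε - t) • b := by module
  show dist (e + ε • b) (e + t • b) ≤ ε
  rw [dist_eq_norm, h1, norm_smul, Real.norm_of_nonneg (by linarith [ht.2])]
  nlinarith [ht.1, ht.2, norm_nonneg b]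

theorem layer_global {m : ℕ} {c : ℝ≥0∞} (hc : (volume : Measure (Euc (m))) = c • μH[(m:ℝ)])
    {f : Euc (m+1) → ℝ} (hf : ContDiff ℝ (⊤ : ℕ∞) f) {S : Set (Euc (m+1))}
    (hS : IsOpenConvexCone S) (hES : {x | f x < 0} ⊆ S)
    (hM : IsCompact {x | f x = 0}) (hreg : ∀ x, f x = 0 → fderiv ℝ f x ≠ 0)
    {W : Euc (m+1) → ℝ} (hW : Continuous W) (hW0 : ∀ x, 0 ≤ W x) {η : ℝ} (hη : 0 < η)
    {δ : ℝ≥0∞} (hδ : δ ≠ 0) :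
      ∀ᶠ ε in 𝓝[>] (0:ℝ), ∫⁻ x in ({x | f x < 0} + ε • (ball 0 1 ∩ S)) \ {x | f x < 0}, ENNReal.ofReal (W x) ≤
        ENNReal.ofReal ε * (c * (∫⁻ x in {x | f x = 0} ∩ S, ENNReal.ofReal (W x) ∂μH[(m:ℝ)]
          + ENNReal.ofReal η * ∫⁻ x in {x | f x = 0}, ENNReal.ofReal (W x) ∂μH[(m:ℝ)]) + δ) := by
  have hloc := fun x₀ : {x | f x = 0} => layer_local hc hf hS hES x₀.2 (hreg x₀ x₀.2) hη
  choose r hr h using hloc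
  obtain ⟨t, ht⟩ := hM.elim_finite_subcover (fun x : {x | f x = 0} => ball (x : Euc (m+1)) (r x))
    (fun x => isOpen_ball) (fun x hx => mem_iUnion.mpr ⟨⟨x, hx⟩, mem_ball_self (hr _)⟩)
  set N := t.card with hN
  let eq : Fin N ≃ t := t.equivFin.symm
  set s : Fin N → Set (Euc (m+1)) := fun i => ball ((eq i : {x | f x = 0}) : Euc (m+1)) (r (eq i)) with hs
  have hso : ∀ i, IsOpen (s i) := fun i => isOpen_ball
  have hMs : {x | f x = 0} ⊆ ⋃ i, s i := by
    intro x hx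
    obtain ⟨y, hy, hxy⟩ := mem_iUnion₂.mp (ht hx)
    refine mem_iUnion.mpr ⟨eq.symm ⟨y, hy⟩, ?_⟩
    simp only [hs, Equiv.apply_symm_apply]
    exact hxy
  obtain ⟨d, hd, hdM⟩ := hM.exists_cthickening_subset_open (isOpen_iUnion hso) hMs
  have hK : IsCompact (cthickening d {x | f x = 0}) := hM.cthickening
  obtain ⟨ρ, hρs, hρ1, hρ0, hρc⟩ := exists_continuous_sum_one_of_isOpen_isCompact hso hK hdM
  have hsum : ∀ x ∈ cthickening d {x | f x = 0}, ENNReal.ofReal (W x) = ∑ i, ENNReal.ofReal (ρ i x * W x) := by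
    intro x hx
    rw [← ENNReal.ofReal_sum_of_nonneg (fun i _ => mul_nonneg (hρ0 i x).1 (hW0 x)), ← Finset.sum_mul]
    have := hρ1 hx
    simp at this
    rw [this, one_mul]
  have hcont : ∀ i, Continuous fun x => ρ i x * W x := fun i => (ρ i).continuous.mul hW
  have hmeas : ∀ i, Measurable fun x => ENNReal.ofReal (ρ i x * W x) := fun i =>
    (hcont i).measurable.ennreal_ofReal
  have hKm : MeasurableSet (cthickening d {x | f x = 0}) := hK.isClosed.measurableSet
  have hMK : {x | f x = 0} ⊆ cthickening d {x | f x = 0} := self_subset_cthickening _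
  have hsplit : ∀ (μ : Measure (Euc (m+1))) (A : Set (Euc (m+1))), A ⊆ cthickening d {x | f x = 0} →
      ∫⁻ x in A, ENNReal.ofReal (W x) ∂μ = ∑ i, ∫⁻ x in A, ENNReal.ofReal (ρ i x * W x) ∂μ := by
    intro μ A hA
    rw [← lintegral_finsetSum _ (fun i _ => hmeas i)]
    refine lintegral_congr_ae ?_
    have : ∀ᵐ x ∂(μ.restrict A), x ∈ cthickening d {x | f x = 0} := by
      refine ae_mono (Measure.restrict_mono hA le_rfl) (ae_restrict_mem hKm)
    filter_upwards [this] with x hx using hsum x hx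
  have hd' : δ / ((N:ℝ≥0∞) + 1) ≠ 0 := by
    refine (ENNReal.div_pos hδ ?_).ne'
    simp
  have hloc2 : ∀ᶠ ε in 𝓝[>] (0:ℝ), ∀ i, ∫⁻ x in ({x | f x < 0} + ε • (ball 0 1 ∩ S)) \ {x | f x < 0}, ENNReal.ofReal (ρ i x * W x) ≤
        ENNReal.ofReal ε * (c * (∫⁻ x in {x | f x = 0} ∩ S, ENNReal.ofReal (ρ i x * W x) ∂μH[(m:ℝ)]
          + ENNReal.ofReal η * ∫⁻ x in {x | f x = 0}, ENNReal.ofReal (ρ i x * W x) ∂μH[(m:ℝ)]) + δ / ((N:ℝ≥0∞) + 1)) := by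
    rw [Filter.eventually_all]
    intro i
    refine h (eq i) _ (hcont i) ((hρc i).mul_right) ?_ _ hd'
    refine subset_trans ?_ (hρs i)
    refine subset_trans ?_ (subset_tsupport _)
    intro x hx
    exact left_ne_zero_of_mul hx
  have hsmall : ∀ᶠ ε in 𝓝[>] (0:ℝ), ε < d :=
    (eventually_lt_nhds hd).filter_mono nhdsWithin_le_nhds
  filter_upwards [hloc2, hsmall, self_mem_nhdsWithin] with ε h1 hεd hε0
  rw [hsplit _ _ ((layer_near hf.continuous inter_subset_left hε0).trans (cthickening_mono hεd.le _)),
    hsplit _ _ hMK, hsplit _ _ (inter_subset_left.trans hMK)]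
  refine (Finset.sum_le_sum fun i _ => h1 i).trans ?_
  rw [← Finset.mul_sum, Finset.sum_add_distrib, ← Finset.mul_sum, Finset.sum_add_distrib, ← Finset.mul_sum]
  gcongr
  rw [Finset.sum_const, Finset.card_univ, Fintype.card_fin, nsmul_eq_mul]
  calc (N:ℝ≥0∞) * (δ / ((N:ℝ≥0∞) + 1)) ≤ ((N:ℝ≥0∞) + 1) * (δ / ((N:ℝ≥0∞) + 1)) := by
        gcongr; exact le_self_add
    _ ≤ δ := ENNReal.mul_div_le

theorem hausdorff_finite {m : ℕ} {f : Euc (m+1) → ℝ} (hf : ContDiff ℝ (⊤ : ℕ∞) f)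
    (hM : IsCompact {x | f x = 0}) (hreg : ∀ x, f x = 0 → fderiv ℝ f x ≠ 0) :
    μH[(m:ℝ)] {x | f x = 0} < ∞ := by
  have hloc : ∀ x : Euc (m+1), x ∈ {x | f x = 0} → ∃ t ∈ 𝓝[{x | f x = 0}] x, μH[(m:ℝ)] t < ∞ := by
    intro x hx
    have hst : HasStrictFDerivAt f (fderiv ℝ f x) x :=
      hf.contDiffAt.hasStrictFDerivAt (by simp)
    obtain ⟨r, hr, Φ, h1, h2, hΦ⟩ := exists_chart hst (hreg x hx) one_pos
    refine ⟨closedBall x (r/2) ∩ {x | f x = 0},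
      by rw [inter_comm]; exact inter_mem_nhdsWithin _ (closedBall_mem_nhds x (by positivity)) , ?_⟩
    · refine chart_finite Φ h2 (hM.inter_left isClosed_closedBall) ?_
      rintro y ⟨hy, hfy⟩
      have hfy : f y = 0 := hfy
      have := hΦ y (closedBall_subset_ball (by linarith) hy)
      rw [hfy] at this
      have h3 := norm_ne_zero_iff.mpr (hreg x hx)
      exact (mul_eq_zero.mp this.symm).resolve_left h3
  exact hM.measure_lt_top_of_nhdsWithin (fun x hx => hloc x hx)

theorem per_lower {m : ℕ} {α : ℝ} {c : ℝ≥0∞} (hc : (volume : Measure (Euc (m))) = c • μH[(m:ℝ)])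
    (hcT : c ≠ ∞)
    {S : Set (Euc (m+1))} {E : Set (Euc (m+1))} {W : Euc (m+1) → ℝ}
    (hS : IsOpenConvexCone S) (hα : 0 < α) (hW : Continuous W) (hW0 : ∀ x, 0 ≤ W x)
    (sup : ∀ x ∈ S, ∀ y ∈ S, W x^(1/α) + W y^(1/α) ≤ W (x+y)^(1/α))
    (hom : ∀ x ∈ S, ∀ t, 0 < t → W (t • x) = t^α * W x)
    (hE : IsOpen E) (hES : E ⊆ S) (hEb : Bornology.IsBounded E) (hEsm : HasSmoothBoundary E)
    (hE0 : wVol W E ≠ 0) (hEt : wVol W E ≠ ∞) (hB0 : wVol W (ball 0 1 ∩ S) ≠ 0)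
    (hBt : wVol W (ball 0 1 ∩ S) ≠ ∞) :
    ENNReal.ofReal (((m+1:ℕ):ℝ) + α) * wVol W E ^ ((((m+1:ℕ):ℝ)+α-1)/(((m+1:ℕ):ℝ)+α)) *
      wVol W (ball 0 1 ∩ S) ^ (1/(((m+1:ℕ):ℝ)+α)) ≤
    c * ∫⁻ x in frontier E ∩ S, ENNReal.ofReal (W x) ∂μH[(m:ℝ)] := by
  obtain ⟨f, hf, rfl, hfr, hreg⟩ := hEsm
  have hM : IsCompact {x | f x = 0} := by
    rw [← hfr]
    exact Metric.isCompact_of_isClosed_isBounded isClosed_frontier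
      (hEb.closure.subset frontier_subset_closure)
  have hreg' : ∀ x, f x = 0 → fderiv ℝ f x ≠ 0 := by
    intro x hx
    apply hreg
    rw [hfr]; exact hx
  rw [hfr]
  set L := ENNReal.ofReal (((m+1:ℕ):ℝ) + α) * wVol W {x | f x < 0} ^ ((((m+1:ℕ):ℝ)+α-1)/(((m+1:ℕ):ℝ)+α)) *
      wVol W (ball 0 1 ∩ S) ^ (1/(((m+1:ℕ):ℝ)+α)) with hL
  set P := ∫⁻ x in {x | f x = 0} ∩ S, ENNReal.ofReal (W x) ∂μH[(m:ℝ)] with hP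
  set Q := ∫⁻ x in {x | f x = 0}, ENNReal.ofReal (W x) ∂μH[(m:ℝ)] with hQ
  have hQt : Q ≠ ∞ := by
    obtain ⟨B, hB⟩ := hM.exists_bound_of_continuousOn hW.continuousOn
    have : Q ≤ ∫⁻ x in {x | f x = 0}, ENNReal.ofReal B ∂μH[(m:ℝ)] := by
      refine setLIntegral_mono measurable_const fun x hx => ?_
      exact ENNReal.ofReal_le_ofReal ((le_abs_self _).trans (hB x hx))
    refine ne_top_of_le_ne_top ?_ this
    rw [setLIntegral_const]
    exact ENNReal.mul_ne_top ENNReal.ofReal_ne_top (hausdorff_finite hf hM hreg').ne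
  have key : ∀ η : ℝ, 0 < η → L ≤ c * (P + ENNReal.ofReal η * Q) + ENNReal.ofReal η := by
    intro η hη
    have h1 := layer_global hc hf hS hES hM hreg' hW hW0 hη (δ := ENNReal.ofReal η) (by simpa using hη)
    obtain ⟨ε, h2, hε⟩ := (h1.and self_mem_nhdsWithin).exists
    have hε : 0 < ε := hε
    have h3 := bm_layer (by omega) hS hα hW hW0 sup hom hE hES hE0 hEt hB0 hBt hε
    have h4 := h3.trans h2
    exact (ENNReal.mul_le_mul_iff_right (by simpa using hε) ENNReal.ofReal_ne_top).mp h4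
  have hlim : Filter.Tendsto (fun η : ℝ => c * (P + ENNReal.ofReal η * Q) + ENNReal.ofReal η) (𝓝[>] 0)
      (𝓝 (c * (P + ENNReal.ofReal 0 * Q) + ENNReal.ofReal 0)) := by
    have h0 : Filter.Tendsto (fun η : ℝ => ENNReal.ofReal η) (𝓝[>] 0) (𝓝 (ENNReal.ofReal 0)) :=
      (ENNReal.continuous_ofReal.tendsto 0).mono_left nhdsWithin_le_nhds
    refine Filter.Tendsto.add (ENNReal.Tendsto.const_mul (Filter.Tendsto.add tendsto_const_nhds
      (ENNReal.Tendsto.mul_const h0 (Or.inr hQt))) (Or.inr hcT)) h0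
  have := ge_of_tendsto hlim (by filter_upwards [self_mem_nhdsWithin] with η hη using key η hη)
  simpa using this



theorem normalize_lip {d : ℕ} {x y : Euc d} (hx : 1 ≤ ‖x‖) (hy : 1 ≤ ‖y‖) :
    dist (‖x‖⁻¹ • x) (‖y‖⁻¹ • y) ≤ dist x y := by
  set a := ‖x‖ with ha
  set b := ‖y‖ with hb
  set u := a⁻¹ • x with hu
  set v := b⁻¹ • y with hv
  have ha0 : 0 < a := by linarith
  have hb0 : 0 < b := by linarith
  have hxu : x = a • u := by rw [hu, smul_smul, mul_inv_cancel₀ ha0.ne', one_smul]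
  have hyv : y = b • v := by rw [hv, smul_smul, mul_inv_cancel₀ hb0.ne', one_smul]
  have hun : ‖u‖ = 1 := by rw [hu, norm_smul, norm_inv, Real.norm_of_nonneg ha0.le, ← ha, inv_mul_cancel₀ ha0.ne']
  have hvn : ‖v‖ = 1 := by rw [hv, norm_smul, norm_inv, Real.norm_of_nonneg hb0.le, ← hb, inv_mul_cancel₀ hb0.ne']
  rw [dist_eq_norm, dist_eq_norm]
  apply le_of_sq_le_sq _ (norm_nonneg _)
  have h1 : ‖x - y‖ ^ 2 = a ^ 2 - 2 * (a * b * ⟪u, v⟫) + b ^ 2 := by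
    rw [norm_sub_sq_real, ← ha, ← hb]
    congr 3
    conv_lhs => rw [hxu, hyv]
    rw [real_inner_smul_left, real_inner_smul_right]; ring
  have h2 : ‖u - v‖ ^ 2 = 1 - 2 * ⟪u, v⟫ + 1 := by
    rw [norm_sub_sq_real, hun, hvn]; ring
  have h3 : ⟪u, v⟫ ≤ 1 := by
    have := real_inner_le_norm u v
    rwa [hun, hvn, mul_one] at this
  rw [h1, h2]
  nlinarith [sq_nonneg (a - b), mul_nonneg (sub_nonneg.mpr h3) (by nlinarith : 0 ≤ a * b - 1)]

theorem consE_smul (m : ℕ) (s : ℝ) (y : Euc m) : consE m (s, s • y) = s • consE m (1, y) := by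
  ext i
  refine Fin.cases ?_ (fun j => ?_) i <;> simp [consE]

theorem lint_pow (m : ℕ) : ∫⁻ s in Ioo (0:ℝ) 1, ENNReal.ofReal (s ^ m) = ENNReal.ofReal (1 / (m + 1)) := by
  rw [Measure.restrict_congr_set Ioo_ae_eq_Ioc, ← ofReal_integral_eq_lintegral_ofReal
    (intervalIntegral.intervalIntegrable_pow _).1, ← intervalIntegral.integral_of_le zero_le_one]
  · simp
  · filter_upwards [ae_restrict_mem measurableSet_Ioc] with y hy
    exact pow_nonneg hy.1.le _

theorem cap_zero {m : ℕ} {c : ℝ≥0∞} (hc : (volume : Measure (Euc (m))) = c • μH[(m:ℝ)])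
    {A : Set (Euc (m+1))} (hAm : MeasurableSet A) (hA : A ⊆ sphere 0 1) {κ : ℝ} (hκ : 0 < κ)
    (hcap : ∀ x ∈ A, 1 < κ * x 0) :
    c * μH[(m:ℝ)] A ≤ ENNReal.ofReal (κ ^ (m+1)) * ((m+1 : ℕ) * volume (Ioo (0:ℝ) 1 • A)) := by
  set p : Euc m → Euc (m+1) := fun y => consE m (1, y) with hp
  have hpc : Continuous p := (isometry_consE m 1).continuous
  have hp1 : ∀ y, 1 ≤ ‖p y‖ := by
    intro y
    have := EuclideanSpace.norm_sq_eq (p y)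
    simp [Fin.sum_univ_succ, hp, consE] at this
    have h2 : 0 ≤ ∑ i, (y i)^2 := by positivity
    have h3 : (1:ℝ) ≤ ‖p y‖ ^ 2 := by simp only [hp, consE]; linarith
    nlinarith [norm_nonneg (p y)]
  set q : Euc m → Euc (m+1) := fun y => ‖p y‖⁻¹ • p y with hq
  have hqc : Continuous q := by
    refine Continuous.smul (hpc.norm.inv₀ fun y => ?_) hpc
    linarith [hp1 y]
  have hqL : LipschitzWith 1 q := by
    refine LipschitzWith.of_dist_le_mul fun x y => ?_
    have := normalize_lip (hp1 x) (hp1 y)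
    rw [(isometry_consE m 1).dist_eq] at this
    simpa [hq] using this
  set A' : Set (Euc m) := q ⁻¹' A with hA'
  have hA'm : MeasurableSet A' := hqc.measurable hAm
  have hsub : A ⊆ q '' A' := by
    intro x hx
    have hxn : ‖x‖ = 1 := by simpa using hA hx
    have hx0 : 0 < x 0 := by
      have := hcap x hx
      by_contra! h
      nlinarith
    have hqx : q ((x 0)⁻¹ • (WithLp.toLp 2 (Fin.tail x.ofLp) : Euc m)) = x := by
      have h1 : p ((x 0)⁻¹ • (WithLp.toLp 2 (Fin.tail x.ofLp) : Euc m)) = (x 0)⁻¹ • x := by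
        ext i
        refine Fin.cases ?_ (fun j => ?_) i
        · simp [hp, consE, hx0.ne']
        · simp [hp, consE, Fin.tail]
      simp only [hq, h1]
      rw [norm_smul, hxn, norm_inv, Real.norm_of_nonneg hx0.le, mul_one, inv_inv, smul_smul,
        mul_inv_cancel₀ hx0.ne', one_smul]
    refine ⟨_, ?_, hqx⟩
    show q _ ∈ A
    rw [hqx]; exact hx
  have step1 : c * μH[(m:ℝ)] A ≤ volume A' := by
    rw [hc, Measure.smul_apply, smul_eq_mul]
    gcongr
    refine (measure_mono hsub).trans ?_
    have := hqL.hausdorffMeasure_image_le (d := (m:ℝ)) (by positivity) A'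
    simpa using this
  set G : Set (Euc (m+1)) := κ • (Ioo (0:ℝ) 1 • A) with hG
  have hGsub : ∀ s ∈ Ioo (0:ℝ) 1, ∀ y ∈ A', consE m (s, s • y) ∈ G := by
    intro s hs y hy
    have hy : q y ∈ A := hy
    have h1 := hcap _ hy
    have h2 : (q y) 0 = ‖p y‖⁻¹ := by simp [hq, hp]
    have hpp : 0 < ‖p y‖ := by linarith [hp1 y]
    rw [h2, ← div_eq_mul_inv, lt_div_iff₀ hpp, one_mul] at h1
    refine ⟨(s * ‖p y‖ / κ) • q y, ⟨s * ‖p y‖ / κ, ⟨by have := hs.1; positivity, ?_⟩, q y, hy, rfl⟩, ?_⟩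
    · rw [div_lt_one hκ]
      nlinarith [hs.1, hs.2]
    · show κ • (s * ‖p y‖ / κ) • q y = _
      rw [consE_smul, smul_smul, hq]
      simp only
      rw [smul_smul]
      congr 1
      field_simp
  have step2 : ENNReal.ofReal (1 / (m+1)) * volume A' ≤ volume G := by
    rw [← measure_toMeasurable G]
    set H := toMeasurable volume G
    have hH : MeasurableSet H := measurableSet_toMeasurable _ _
    rw [← (mp_consE m).measure_preimage hH.nullMeasurableSet, Measure.prod_apply ((mp_consE m).measurable hH)]
    rw [← lint_pow, ← lintegral_mul_const _ (by fun_prop)]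
    refine le_trans ?_ (setLIntegral_le_lintegral (Ioo (0:ℝ) 1) _)
    refine setLIntegral_mono' measurableSet_Ioo fun s hs => ?_
    have e : ENNReal.ofReal (s ^ m) * volume A' = volume (s • A') := by
      rw [Measure.addHaar_smul_of_nonneg _ hs.1.le]; simp
    rw [e]
    apply measure_mono
    rintro _ ⟨y, hy, rfl⟩
    exact subset_toMeasurable _ _ (hGsub s hs y hy)
  have hGv : volume G = ENNReal.ofReal (κ ^ (m+1)) * volume (Ioo (0:ℝ) 1 • A) := by
    rw [hG, Measure.addHaar_smul_of_nonneg _ hκ.le]; simp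
  rw [hGv] at step2
  refine step1.trans ?_
  calc volume A' = ((m+1:ℕ):ℝ≥0∞) * (ENNReal.ofReal (1 / (m+1)) * volume A') := by
        rw [← mul_assoc, ← ENNReal.ofReal_natCast, ← ENNReal.ofReal_mul (by positivity)]
        push_cast
        rw [mul_one_div_cancel (by positivity)]; simp
    _ ≤ ((m+1:ℕ):ℝ≥0∞) * (ENNReal.ofReal (κ ^ (m+1)) * volume (Ioo (0:ℝ) 1 • A)) := by gcongr
    _ = _ := by ring

theorem cap_gen {m : ℕ} {c : ℝ≥0∞} (hc : (volume : Measure (Euc (m))) = c • μH[(m:ℝ)])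
    {v : Euc (m+1)} (hv : ‖v‖ = 1)
    {A : Set (Euc (m+1))} (hAm : MeasurableSet A) (hA : A ⊆ sphere 0 1) {κ : ℝ} (hκ : 0 < κ)
    (hcap : ∀ x ∈ A, 1 < κ * ⟪v, x⟫) :
    c * μH[(m:ℝ)] A ≤ ENNReal.ofReal (κ ^ (m+1)) * ((m+1 : ℕ) * volume (Ioo (0:ℝ) 1 • A)) := by
  set e : Euc (m+1) := EuclideanSpace.single 0 1 with he
  have hen : ‖v‖ = ‖e‖ := by simp [he, hv]
  set R : Euc (m+1) ≃ₗᵢ[ℝ] Euc (m+1) := (ℝ ∙ (v - e))ᗮ.reflection with hR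
  have hRv : R v = e := Submodule.reflection_sub hen
  have hR0 : ∀ x, R x 0 = ⟪v, x⟫ := by
    intro x
    have h1 : R x 0 = ⟪e, R x⟫ := by simp [he, EuclideanSpace.inner_single_left]
    rw [h1, ← hRv, R.inner_map_map]
  have hm2 : MeasurableSet (R '' A) := by
    have : R '' A = R.symm ⁻¹' A := R.toEquiv.image_eq_preimage_symm A
    rw [this]
    exact R.symm.continuous.measurable hAm
  have h := cap_zero hc hm2 (by
    rintro _ ⟨x, hx, rfl⟩
    have : ‖x‖ = 1 := by simpa using hA hx
    simpa using this) hκ (by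
    rintro _ ⟨x, hx, rfl⟩
    rw [hR0]; exact hcap x hx)
  rw [R.isometry.hausdorffMeasure_image (Or.inl (by positivity))] at h
  have e1 : Ioo (0:ℝ) 1 • (R '' A) = R.symm ⁻¹' (Ioo (0:ℝ) 1 • A) := by
    have : R '' (Ioo (0:ℝ) 1 • A) = R.symm ⁻¹' (Ioo (0:ℝ) 1 • A) := R.toEquiv.image_eq_preimage_symm _
    rw [← this]
    ext x
    constructor
    · rintro ⟨s, hs, _, ⟨y, hy, rfl⟩, rfl⟩
      exact ⟨s • y, ⟨s, hs, y, hy, rfl⟩, by simp⟩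
    · rintro ⟨_, ⟨s, hs, y, hy, rfl⟩, rfl⟩
      exact ⟨s, hs, R y, ⟨y, hy, rfl⟩, by simp⟩
  have e2 : volume (R.symm ⁻¹' (Ioo (0:ℝ) 1 • A)) = volume (Ioo (0:ℝ) 1 • A) :=
    R.symm.measurePreserving.measure_preimage_emb R.symm.toHomeomorph.measurableEmbedding _
  rwa [e1, e2] at h

theorem sphere_le {m : ℕ} {c : ℝ≥0∞} (hc : (volume : Measure (Euc (m))) = c • μH[(m:ℝ)])
    {A : Set (Euc (m+1))} (hAm : MeasurableSet A) (hA : A ⊆ sphere 0 1) :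
    c * μH[(m:ℝ)] A ≤ Measure.map (fun x : sphere (0 : Euc (m+1)) 1 => (x : Euc (m+1)))
      (volume : Measure (Euc (m+1))).toSphere A := by
  set ν := Measure.map (fun x : sphere (0 : Euc (m+1)) 1 => (x : Euc (m+1)))
      (volume : Measure (Euc (m+1))).toSphere with hν
  have hνA : ∀ B : Set (Euc (m+1)), MeasurableSet B → B ⊆ sphere 0 1 →
      ν B = (m+1:ℕ) * volume (Ioo (0:ℝ) 1 • B) := by
    intro B hB hBs
    rw [hν, Measure.map_apply measurable_subtype_coe hB,
      Measure.toSphere_apply' _ (measurable_subtype_coe hB)]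
    congr 2
    · simp
    · congr 1
      rw [Subtype.image_preimage_coe, inter_eq_right.mpr hBs]
  have key : ∀ κ : ℝ, 1 < κ → c * μH[(m:ℝ)] A ≤ ENNReal.ofReal (κ ^ (m+1)) * ν A := by
    intro κ hκ
    have hκ0 : 0 < κ := by linarith
    obtain ⟨t, ht⟩ := (isCompact_sphere (0 : Euc (m+1)) 1).elim_finite_subcover
      (fun v : sphere (0 : Euc (m+1)) 1 => {x : Euc (m+1) | 1 < κ * ⟪(v : Euc (m+1)), x⟫})
      (fun v => isOpen_lt continuous_const (by fun_prop)) (fun x hx => mem_iUnion.mpr ⟨⟨x, hx⟩, by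
        have : ‖x‖ = 1 := by simpa using hx
        simp [this, hκ]⟩)
    have ind : ∀ t : Finset (sphere (0 : Euc (m+1)) 1), ∀ B : Set (Euc (m+1)), MeasurableSet B →
        B ⊆ sphere 0 1 → B ⊆ (⋃ v ∈ t, {x : Euc (m+1) | 1 < κ * ⟪(v : Euc (m+1)), x⟫}) →
        c * μH[(m:ℝ)] B ≤ ENNReal.ofReal (κ ^ (m+1)) * ν B := by
      intro t
      induction t using Finset.induction_on with
      | empty =>
        intro B _ _ hB
        have : B = ∅ := by simpa [subset_empty_iff] using hB
        simp [this]
      | insert v t hvt ih =>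
        intro B hB hBs hBc
        set C := {x : Euc (m+1) | 1 < κ * ⟪(v : Euc (m+1)), x⟫} with hC
        have hCm : MeasurableSet C := (isOpen_lt continuous_const (by fun_prop)).measurableSet
        rw [← measure_inter_add_sdiff B hCm, ← measure_inter_add_sdiff (μ := ν) B hCm, mul_add, mul_add]
        refine add_le_add ?_ ?_
        · rw [hνA _ (hB.inter hCm) (inter_subset_left.trans hBs)]
          exact cap_gen hc (by simpa using v.2) (hB.inter hCm) (inter_subset_left.trans hBs) hκ0
            (fun x hx => hx.2)
        · refine ih _ (hB.diff hCm) (sdiff_subset.trans hBs) ?_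
          rintro x ⟨hxB, hxC⟩
          have := hBc hxB
          rw [Finset.set_biUnion_insert] at this
          exact this.resolve_left hxC
    exact ind t A hAm hA (hA.trans ht)
  have hlim : Filter.Tendsto (fun κ : ℝ => ENNReal.ofReal (κ ^ (m+1)) * ν A) (𝓝[>] 1)
      (𝓝 (ENNReal.ofReal (1 ^ (m+1)) * ν A)) := by
    refine ENNReal.Tendsto.mul_const ?_ (Or.inl (by simp))
    have : Continuous fun κ : ℝ => ENNReal.ofReal (κ ^ (m+1)) :=
      ENNReal.continuous_ofReal.comp (by fun_prop)
    exact (this.tendsto 1).mono_left nhdsWithin_le_nhds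
  have := ge_of_tendsto hlim (by filter_upwards [self_mem_nhdsWithin] with κ hκ using key κ hκ)
  simpa using this

theorem lint_rpow (m : ℕ) {α : ℝ} (hα : 0 < α) :
    ∫⁻ r, (Iio (1:ℝ)).indicator (fun r => ENNReal.ofReal (r ^ α)) (r : ℝ) ∂(Measure.volumeIoiPow m)
      = ENNReal.ofReal (1 / (((m+1:ℕ):ℝ) + α)) := by
  have hmeas : Measurable fun r : ℝ => (Iio (1:ℝ)).indicator (fun r => ENNReal.ofReal (r ^ α)) r :=
    (by fun_prop : Measurable fun r : ℝ => ENNReal.ofReal (r ^ α)).indicator measurableSet_Iio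
  rw [Measure.volumeIoiPow, lintegral_withDensity_eq_lintegral_mul _ (by fun_prop)
    (g := fun r : Ioi (0:ℝ) => (Iio (1:ℝ)).indicator (fun r => ENNReal.ofReal (r ^ α)) (r : ℝ))
    (hmeas.comp measurable_subtype_coe)]
  simp only [Pi.mul_apply]
  have := lintegral_subtype_comap (μ := (volume : Measure ℝ)) measurableSet_Ioi
    (f := fun r : ℝ => ENNReal.ofReal (r ^ m) * (Iio (1:ℝ)).indicator (fun r => ENNReal.ofReal (r ^ α)) r) (s := Ioi 0)
  rw [this]
  have e : ∫⁻ r in Ioi (0:ℝ), ENNReal.ofReal (r ^ m) * (Iio (1:ℝ)).indicator (fun r => ENNReal.ofReal (r ^ α)) r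
      = ∫⁻ r in Ioo (0:ℝ) 1, ENNReal.ofReal (r ^ ((m:ℝ) + α)) := by
    rw [← lintegral_indicator measurableSet_Ioi, ← lintegral_indicator measurableSet_Ioo]
    congr 1; ext r
    by_cases h0 : 0 < r <;> by_cases h1 : r < 1 <;> simp [indicator, h0, h1]
    rw [← ENNReal.ofReal_mul (by positivity), Real.rpow_add h0, Real.rpow_natCast]
  rw [e, Measure.restrict_congr_set Ioo_ae_eq_Ioc, ← ofReal_integral_eq_lintegral_ofReal
    (intervalIntegral.intervalIntegrable_rpow' (by have : (0:ℝ) ≤ m := by positivity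
                                                   linarith)).1, ← intervalIntegral.integral_of_le zero_le_one]
  · rw [integral_rpow (Or.inl (by have : (0:ℝ) ≤ m := by positivity
                                  linarith))]
    congr 1
    have : (m:ℝ) + α + 1 ≠ 0 := by positivity
    rw [Real.one_rpow, Real.zero_rpow this]
    push_cast
    ring
  · filter_upwards [ae_restrict_mem measurableSet_Ioc] with y hy
    exact Real.rpow_nonneg hy.1.le _

theorem polar {m : ℕ} {α : ℝ} (hα : 0 < α) {S : Set (Euc (m+1))} (hS : IsOpenConvexCone S)
    {W : Euc (m+1) → ℝ} (hW : Continuous W)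
    (hom : ∀ x ∈ S, ∀ t, 0 < t → W (t • x) = t^α * W x) :
    wVol W (ball 0 1 ∩ S) = ENNReal.ofReal (1 / (((m+1:ℕ):ℝ) + α)) *
      ∫⁻ x in sphere 0 1 ∩ S, ENNReal.ofReal (W x) ∂(Measure.map
        (fun x : sphere (0 : Euc (m+1)) 1 => (x : Euc (m+1))) (volume : Measure (Euc (m+1))).toSphere) := by
  set g : Euc (m+1) → ℝ≥0∞ := S.indicator fun x => ENNReal.ofReal (W x) with hg
  have hgm : Measurable g := hW.measurable.ennreal_ofReal.indicator hS.1.measurableSet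
  set F : Euc (m+1) → ℝ≥0∞ := (ball 0 1).indicator g with hF
  have hFm : Measurable F := hgm.indicator measurableSet_ball
  have hSiff : ∀ (x : Euc (m+1)) (t : ℝ), 0 < t → (t • x ∈ S ↔ x ∈ S) := by
    intro x t ht
    refine ⟨fun h => ?_, fun h => hS.2.2 x h t ht⟩
    have := hS.2.2 _ h t⁻¹ (by positivity)
    rwa [smul_smul, inv_mul_cancel₀ ht.ne', one_smul] at this
  have e1 : wVol W (ball 0 1 ∩ S) = ∫⁻ x, F x := by
    rw [wVol, hF, lintegral_indicator measurableSet_ball, hg, lintegral_indicator hS.1.measurableSet,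
      Measure.restrict_restrict hS.1.measurableSet, inter_comm]
  have e2 : ∫⁻ x in sphere 0 1 ∩ S, ENNReal.ofReal (W x) ∂(Measure.map
        (fun x : sphere (0 : Euc (m+1)) 1 => (x : Euc (m+1))) (volume : Measure (Euc (m+1))).toSphere)
      = ∫⁻ x : sphere (0 : Euc (m+1)) 1, g x ∂(volume : Measure (Euc (m+1))).toSphere := by
    have hsm : MeasurableSet (sphere (0 : Euc (m+1)) 1) := isClosed_sphere.measurableSet
    rw [← lintegral_indicator (hsm.inter hS.1.measurableSet), lintegral_map
      (hW.measurable.ennreal_ofReal.indicator (hsm.inter hS.1.measurableSet)) measurable_subtype_coe]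
    refine lintegral_congr fun x => ?_
    have hx : (x : Euc (m+1)) ∈ sphere (0 : Euc (m+1)) 1 := x.2
    by_cases h2 : (x : Euc (m+1)) ∈ S
    · rw [hg, indicator_of_mem h2, indicator_of_mem (show (x : Euc (m+1)) ∈ sphere 0 1 ∩ S from ⟨hx, h2⟩)]
    · rw [hg, indicator_of_notMem h2, indicator_of_notMem (fun h => h2 h.2)]
  have e3 : ∫⁻ x, F x = ∫⁻ x : ({(0 : Euc (m+1))}ᶜ : Set (Euc (m+1))), F (x : Euc (m+1)) ∂(Measure.comap Subtype.val volume) := by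
    rw [lintegral_subtype_comap (measurableSet_singleton _).compl, restrict_compl_singleton]
  have hmp := (volume : Measure (Euc (m+1))).measurePreserving_homeomorphUnitSphereProd
  have e4 : ∫⁻ x : ({(0 : Euc (m+1))}ᶜ : Set (Euc (m+1))), F (x : Euc (m+1)) ∂(Measure.comap Subtype.val volume) =
      ∫⁻ p, g (p.1 : Euc (m+1)) * (Iio (1:ℝ)).indicator (fun r => ENNReal.ofReal (r ^ α)) (p.2 : ℝ)
        ∂((volume : Measure (Euc (m+1))).toSphere.prod
          (Measure.volumeIoiPow (Module.finrank ℝ (Euc (m+1)) - 1))) := by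
    rw [← hmp.lintegral_comp_emb (Homeomorph.measurableEmbedding _)]
    refine lintegral_congr fun x => ?_
    have hx0 : (x : Euc (m+1)) ≠ 0 := x.2
    have hxn : 0 < ‖(x : Euc (m+1))‖ := norm_pos_iff.mpr hx0
    simp only [homeomorphUnitSphereProd_apply_fst_coe, homeomorphUnitSphereProd_apply_snd_coe]
    have hS1 := hSiff (x : Euc (m+1)) ‖(x : Euc (m+1))‖⁻¹ (by positivity)
    by_cases h1 : ‖(x : Euc (m+1))‖ < 1
    swap
    · have h1b : (x : Euc (m+1)) ∉ ball (0 : Euc (m+1)) 1 := by simpa using h1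
      rw [hF, indicator_of_notMem h1b, indicator_of_notMem (show ‖(x : Euc (m+1))‖ ∉ Iio (1:ℝ) from h1),
        mul_zero]
    have h1b : (x : Euc (m+1)) ∈ ball (0 : Euc (m+1)) 1 := by simpa using h1
    rw [hF, indicator_of_mem h1b, indicator_of_mem (show ‖(x : Euc (m+1))‖ ∈ Iio (1:ℝ) from h1)]
    by_cases h2 : (x : Euc (m+1)) ∈ S
    swap
    · rw [hg, indicator_of_notMem h2, indicator_of_notMem (fun h => h2 (hS1.mp h)), zero_mul]
    rw [hg, indicator_of_mem h2, indicator_of_mem (hS1.mpr h2)]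
    rw [hom _ h2 _ (by positivity), mul_comm (_ ^ α), ENNReal.ofReal_mul' (by positivity), mul_assoc,
      ← ENNReal.ofReal_mul (by positivity), ← Real.mul_rpow (by positivity) (by positivity),
      inv_mul_cancel₀ hxn.ne', Real.one_rpow, ENNReal.ofReal_one, mul_one]
  have hfin : Module.finrank ℝ (Euc (m+1)) - 1 = m := by simp
  rw [e1, e2, e3, e4, hfin]
  have hmeas : Measurable fun r : ℝ => (Iio (1:ℝ)).indicator (fun r => ENNReal.ofReal (r ^ α)) r :=
    (by fun_prop : Measurable fun r : ℝ => ENNReal.ofReal (r ^ α)).indicator measurableSet_Iio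
  rw [lintegral_prod_mul (f := fun x : sphere (0 : Euc (m+1)) 1 => g (x : Euc (m+1)))
    (g := fun r : Ioi (0:ℝ) => (Iio (1:ℝ)).indicator (fun r => ENNReal.ofReal (r ^ α)) (r : ℝ))
    (hgm.comp measurable_subtype_coe).aemeasurable
    (hmeas.comp measurable_subtype_coe).aemeasurable, lint_rpow m hα, mul_comm]

theorem sphere_upper {m : ℕ} {c : ℝ≥0∞} (hc : (volume : Measure (Euc (m))) = c • μH[(m:ℝ)])
    {α : ℝ} (hα : 0 < α) {S : Set (Euc (m+1))} (hS : IsOpenConvexCone S)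
    {W : Euc (m+1) → ℝ} (hW : Continuous W)
    (hom : ∀ x ∈ S, ∀ t, 0 < t → W (t • x) = t^α * W x) :
    c * ∫⁻ x in sphere 0 1 ∩ S, ENNReal.ofReal (W x) ∂μH[(m:ℝ)] ≤
      ENNReal.ofReal (((m+1:ℕ):ℝ) + α) * wVol W (ball 0 1 ∩ S) := by
  have hsm : MeasurableSet (sphere (0 : Euc (m+1)) 1) := isClosed_sphere.measurableSet
  rw [polar hα hS hW hom, ← mul_assoc, ← ENNReal.ofReal_mul (by positivity),
    mul_one_div_cancel (by positivity), ENNReal.ofReal_one, one_mul, ← smul_eq_mul,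
    ← lintegral_smul_measure]
  refine lintegral_mono' (Measure.le_iff.mpr fun B hB => ?_) le_rfl
  rw [Measure.smul_apply, smul_eq_mul, Measure.restrict_apply hB, Measure.restrict_apply hB]
  exact sphere_le hc (hB.inter (hsm.inter hS.1.measurableSet)) (inter_subset_right.trans inter_subset_left)

theorem bdd_subset_smul {d : ℕ} {S E : Set (Euc d)} (hS : IsOpenConvexCone S) (hES : E ⊆ S)
    {ρ : ℝ} (hρ : 0 < ρ) (hE : E ⊆ ball 0 ρ) : E ⊆ ρ • (ball (0 : Euc d) 1 ∩ S) := by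
  intro x hx
  refine ⟨ρ⁻¹ • x, ⟨?_, hS.2.2 x (hES hx) _ (by positivity)⟩, ?_⟩
  · have : ‖x‖ < ρ := by simpa using hE hx
    rw [mem_ball_zero_iff, norm_smul, norm_inv, Real.norm_of_nonneg hρ.le, inv_mul_lt_one₀ hρ]
    exact this
  · show ρ • ρ⁻¹ • x = x
    rw [smul_smul, mul_inv_cancel₀ hρ.ne', one_smul]

end Aux

/-- The weighted isoperimetric inequality in a convex cone. -/
theorem stmt_0 {n : ℕ} (hn : 1 ≤ n) (α : ℝ) (hα : 0 < α)
    (S : Set (Euc n)) (hS : IsOpenConvexCone S)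
    (w : Euc n → ℝ) (hw : IsAdmissibleWeight S α w)
    (E : Set (Euc n)) (hES : E ⊆ S) (hEo : IsOpen E)
    (hEb : Bornology.IsBounded E) (hEsm : HasSmoothBoundary E)
    (hEpos : 0 < wVol w E) :
    (∫⁻ x in sphere (0 : Euc n) 1 ∩ S, ENNReal.ofReal (w x) ∂(μH[(n : ℝ) - 1])) /
        (wVol w (ball (0 : Euc n) 1 ∩ S)) ^ (((n : ℝ) + α - 1) / ((n : ℝ) + α)) ≤
      wPer S w E / (wVol w E) ^ (((n : ℝ) + α - 1) / ((n : ℝ) + α)) := by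
  obtain ⟨m, rfl⟩ : ∃ m, n = m + 1 := ⟨n - 1, by omega⟩
  obtain ⟨c, hc0, hct, hc⟩ := vol_eq_hausdorff m
  obtain ⟨W, hW, hW0, hWw⟩ := ext_weight hw
  have hWS : ∀ x ∈ S, W x = w x := fun x hx => hWw (subset_closure hx)
  have hSm : MeasurableSet S := hS.1.measurableSet
  have sup : ∀ x ∈ S, ∀ y ∈ S, W x^(1/α) + W y^(1/α) ≤ W (x+y)^(1/α) := by
    intro x hx y hy
    rw [hWS x hx, hWS y hy, hWS _ (cone_add hS hx hy)]
    exact weight_superadd hS hα hw hx hy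
  have hom : ∀ x ∈ S, ∀ t, 0 < t → W (t • x) = t^α * W x := by
    intro x hx t ht
    rw [hWS x hx, hWS _ (hS.2.2 x hx t ht)]
    exact hw.2.2.2.1 x (subset_closure hx) t ht
  have hcongr : ∀ (μ : Measure (Euc (m+1))) (A : Set (Euc (m+1))), A ⊆ S →
      ∫⁻ x in A, ENNReal.ofReal (w x) ∂μ = ∫⁻ x in A, ENNReal.ofReal (W x) ∂μ := by
    intro μ A hA
    refine lintegral_congr_ae ?_
    have : ∀ᵐ x ∂(μ.restrict A), x ∈ S :=
      ae_mono (Measure.restrict_mono hA le_rfl) (ae_restrict_mem hSm)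
    filter_upwards [this] with x hx
    rw [hWS x hx]
  have hm1 : ((m + 1 : ℕ) : ℝ) - 1 = m := by push_cast; ring
  have hfin : ∀ A : Set (Euc (m+1)), Bornology.IsBounded A → wVol W A ≠ ∞ := by
    intro A hA
    have hK := hA.isCompact_closure
    obtain ⟨C, hC⟩ := hK.exists_bound_of_continuousOn hW.continuousOn
    have : wVol W A ≤ ∫⁻ x in closure A, ENNReal.ofReal C := by
      refine (lintegral_mono_set subset_closure).trans ?_
      refine setLIntegral_mono measurable_const fun x hx => ?_
      exact ENNReal.ofReal_le_ofReal ((le_abs_self _).trans (hC x hx))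
    refine ne_top_of_le_ne_top ?_ this
    rw [setLIntegral_const]
    exact ENNReal.mul_ne_top ENNReal.ofReal_ne_top hK.measure_lt_top.ne
  have hVw : wVol w E = wVol W E := hcongr _ _ hES
  have hBw : wVol w (ball 0 1 ∩ S) = wVol W (ball 0 1 ∩ S) := hcongr _ _ inter_subset_right
  rw [hVw] at hEpos
  have hEt : wVol W E ≠ ∞ := hfin E hEb
  have hBt : wVol W (ball 0 1 ∩ S) ≠ ∞ := hfin _ (isBounded_ball.subset inter_subset_left)
  have hB0 : wVol W (ball 0 1 ∩ S) ≠ 0 := by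
    intro h0
    obtain ⟨R, hR⟩ := hEb.subset_ball 0
    have hR' : E ⊆ ball 0 (max R 1) := hR.trans (ball_subset_ball (le_max_left _ _))
    have hρ : 0 < max R 1 := lt_of_lt_of_le one_pos (le_max_right _ _)
    set ρ := max R 1
    have h1 := wVol_smul hW hom (isOpen_ball.inter hS.1) (inter_subset_right (s := ball 0 1)) hρ
    rw [h0, mul_zero] at h1
    have hsub := bdd_subset_smul hS hES hρ hR'
    have h2 : wVol W E ≤ 0 := h1 ▸ lintegral_mono_set hsub
    exact absurd h2 (not_le.mpr hEpos)
  have hlow := per_lower hc hct hS hα hW hW0 sup hom hEo hES hEb hEsm hEpos.ne' hEt hB0 hBt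
  have hup := sphere_upper hc hα hS hW hom
  unfold wPer
  rw [hVw, hBw, hm1, hcongr _ _ inter_subset_right, hcongr _ _ inter_subset_right]
  set D : ℝ := ((m + 1 : ℕ) : ℝ) + α with hD
  have hD0 : 0 < D := by positivity
  set V := wVol W E
  set B := wVol W (ball 0 1 ∩ S)
  set P := ∫⁻ x in frontier E ∩ S, ENNReal.ofReal (W x) ∂μH[(m:ℝ)]
  set Q := ∫⁻ x in sphere 0 1 ∩ S, ENNReal.ofReal (W x) ∂μH[(m:ℝ)]
  have hD1 : 0 ≤ (D - 1) / D := by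
    refine div_nonneg ?_ hD0.le
    rw [hD]; push_cast
    have : (0:ℝ) ≤ m := by positivity
    linarith
  have hBp0 : B ^ ((D-1)/D) ≠ 0 := (ENNReal.rpow_pos (pos_iff_ne_zero.mpr hB0) hBt).ne'
  have hBpt : B ^ ((D-1)/D) ≠ ∞ := ENNReal.rpow_ne_top_of_nonneg hD1 hBt
  have hVp0 : V ^ ((D-1)/D) ≠ 0 := (ENNReal.rpow_pos hEpos hEt).ne'
  have hVpt : V ^ ((D-1)/D) ≠ ∞ := ENNReal.rpow_ne_top_of_nonneg hD1 hEt
  have hBsplit : B = B ^ (1/D) * B ^ ((D-1)/D) := by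
    rw [← ENNReal.rpow_add _ _ hB0 hBt]
    have : 1 / D + (D - 1) / D = 1 := by field_simp; ring
    rw [this, ENNReal.rpow_one]
  rw [ENNReal.div_le_iff hBp0 hBpt]
  have h1 : ENNReal.ofReal D * B ^ (1/D) ≤ c * P / V ^ ((D-1)/D) := by
    rw [ENNReal.le_div_iff_mul_le (Or.inl hVp0) (Or.inl hVpt)]
    refine le_trans (le_of_eq ?_) hlow
    ring
  have h2 : c * Q ≤ c * (P / V ^ ((D-1)/D) * B ^ ((D-1)/D)) := by
    calc c * Q ≤ ENNReal.ofReal D * B := hup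
      _ = ENNReal.ofReal D * B ^ (1/D) * B ^ ((D-1)/D) := by rw [mul_assoc, ← hBsplit]
      _ ≤ c * P / V ^ ((D-1)/D) * B ^ ((D-1)/D) := by gcongr
      _ = _ := by rw [mul_div_assoc, mul_assoc]
  exact (ENNReal.mul_le_mul_iff_right hc0 hct).mp h2
end
end

section
/- Assume k = 0, i.e. Σ contains no lines. Let η : ∂B₁ ∩ Σ → ℝ be a smooth function, compactly supported in the open spherical cap ∂B₁ ∩ Σ, not identically zero, and satisfying ∫_{∂B₁ ∩ Σ} η w dH^{n−1} = 0. For ε > 0, define E_ε = { tθ : θ ∈ ∂B₁ ∩ Σ, 0 < t < 1 + ε η(θ) }. Then there exist ε₀ > 0, C > 0 and c > 0, depending on n, α, Σ, w and η, such that for all 0 < ε < ε₀ one has δ_w(E_ε) ≤ C ε² and A_w(E_ε) ≥ c ε. In particular, the exponent 1/2 in the quantitative inequality A_w(E) ≤ C √(δ_w(E)) cannot be improved. -/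
open MeasureTheory Metric Set
open scoped RealInnerProductSpace ENNReal NNReal Topology

noncomputable section

def isoQuot {n : ℕ} (S : Set (Euc n)) (α : ℝ) (w : Euc n → ℝ) (E : Set (Euc n)) : ℝ :=
  (wPer S w E).toReal / (wVol w E).toReal ^ (((n : ℝ) + α - 1) / ((n : ℝ) + α))

def wDeficit {n : ℕ} (S : Set (Euc n)) (α : ℝ) (w : Euc n → ℝ) (E : Set (Euc n)) : ℝ :=
  isoQuot S α w E / isoQuot S α w (ball (0 : Euc n) 1 ∩ S) - 1

/-- The "radial graph" set `{ tθ : θ ∈ ∂B₁ ∩ Σ, 0 < t < ρ(θ) }`. -/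
def radSet {n : ℕ} (S : Set (Euc n)) (ρ : Euc n → ℝ) : Set (Euc n) :=
  {x | ∃ θ ∈ sphere (0 : Euc n) 1 ∩ S, ∃ t : ℝ, 0 < t ∧ t < ρ θ ∧ x = t • θ}


lemma aux_unif {X : Type*} [MetricSpace X] [CompactSpace X] [MeasurableSpace X] [BorelSpace X]
    (μ ν : Measure X) [IsFiniteMeasure μ] [IsFiniteMeasure ν] (hμ : μ ≠ 0)
    (h1 : ∀ x y : X, ∀ r : ℝ, μ (ball x r) = μ (ball y r))
    (h2 : ∀ x y : X, ∀ r : ℝ, ν (ball x r) = ν (ball y r))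
    (φ : X → ℝ) (hφ : Continuous φ) (h0 : ∫ x, φ x ∂μ = 0) : ∫ x, φ x ∂ν = 0 := by
  have hne : Nonempty X := by
    by_contra h
    rw [not_nonempty_iff] at h
    exact hμ (Measure.eq_zero_of_isEmpty μ)
  obtain ⟨x0⟩ := hne
  have hinv : Integrable φ ν := hφ.integrable_of_hasCompactSupport (HasCompactSupport.of_compactSpace φ)
  have hinm : Integrable φ μ := hφ.integrable_of_hasCompactSupport (HasCompactSupport.of_compactSpace φ)
  have key : ∀ δ > 0, |∫ x, φ x ∂ν| ≤ δ * ν.real univ := by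
    intro δ hδ
    have huc := CompactSpace.uniformContinuous_of_continuous hφ
    rw [Metric.uniformContinuous_iff] at huc
    obtain ⟨r, hr, hφr⟩ := huc δ hδ
    have hmpos : μ (ball x0 r) ≠ 0 := by
      intro hz
      apply hμ
      obtain ⟨t, -, ht⟩ := (isCompact_univ (X := X)).elim_nhds_subcover (fun x => ball x r)
        (fun x _ => ball_mem_nhds x hr)
      rw [← Measure.measure_univ_eq_zero]
      refine measure_mono_null ht ?_
      refine (measure_biUnion_null_iff t.countable_toSet).2 ?_
      intro x _
      rw [h1 x x0, hz]
    set m := μ.real (ball x0 r) with hm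
    have hmp : 0 < m := by
      rw [hm, measureReal_def]
      exact ENNReal.toReal_pos hmpos (measure_ne_top _ _)
    let K : Set (X × X) := {p | dist p.1 p.2 < r}
    have hK : MeasurableSet K := (isOpen_lt (by fun_prop) (by fun_prop)).measurableSet
    have i1 : Integrable (fun p : X × X => K.indicator (fun p => φ p.2) p) (ν.prod μ) := by
      refine Integrable.indicator ?_ hK
      exact (hφ.comp continuous_snd).integrable_of_hasCompactSupport
        (HasCompactSupport.of_compactSpace _)
    have i2 : Integrable (fun p : X × X => K.indicator (fun p => φ p.1) p) (ν.prod μ) := by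
      refine Integrable.indicator ?_ hK
      exact (hφ.comp continuous_fst).integrable_of_hasCompactSupport
        (HasCompactSupport.of_compactSpace _)
    have e1 : ∫ p, K.indicator (fun p => φ p.2) p ∂(ν.prod μ) = 0 := by
      rw [integral_prod_symm _ i1]
      have : ∀ y, ∫ x, K.indicator (fun p => φ p.2) (x, y) ∂ν = ν.real (ball x0 r) * φ y := by
        intro y
        have : (fun x => K.indicator (fun p => φ p.2) (x, y))
            = (ball y r).indicator (fun _ => φ y) := by
          ext x
          simp [K, Set.indicator, mem_ball]
        rw [this, integral_indicator isOpen_ball.measurableSet, setIntegral_const, smul_eq_mul,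
          measureReal_def, measureReal_def, h2 y x0]
      simp_rw [this]
      rw [integral_const_mul, h0, mul_zero]
    have e2 : ∫ p, K.indicator (fun p => φ p.1) p ∂(ν.prod μ) = m * ∫ x, φ x ∂ν := by
      rw [integral_prod _ i2]
      have : ∀ x, ∫ y, K.indicator (fun p => φ p.1) (x, y) ∂μ = m * φ x := by
        intro x
        have : (fun y => K.indicator (fun p => φ p.1) (x, y))
            = (ball x r).indicator (fun _ => φ x) := by
          ext y
          simp [K, Set.indicator, mem_ball, dist_comm]
        rw [this, integral_indicator isOpen_ball.measurableSet, setIntegral_const, smul_eq_mul, hm,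
          measureReal_def, measureReal_def, h1 x x0]
      simp_rw [this]
      rw [integral_const_mul]
    have e3 : ∫ p, K.indicator (fun _ => δ) p ∂(ν.prod μ) = m * (δ * ν.real univ) := by
      have i3 : Integrable (fun p : X × X => K.indicator (fun _ => δ) p) (ν.prod μ) :=
        Integrable.indicator (integrable_const _) hK
      rw [integral_prod _ i3]
      have : ∀ x, ∫ y, K.indicator (fun _ => δ) (x, y) ∂μ = m * δ := by
        intro x
        have : (fun y => K.indicator (fun _ => δ) (x, y))
            = (ball x r).indicator (fun _ => δ) := by
          ext y
          simp [K, Set.indicator, mem_ball, dist_comm]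
        rw [this, integral_indicator isOpen_ball.measurableSet, setIntegral_const, smul_eq_mul, hm,
          measureReal_def, measureReal_def, h1 x x0]
      simp_rw [this]
      rw [integral_const, smul_eq_mul]; ring
    have e4 : |m * ∫ x, φ x ∂ν| ≤ m * (δ * ν.real univ) := by
      rw [← e2, ← sub_zero (∫ p, K.indicator (fun p => φ p.1) p ∂(ν.prod μ)), ← e1,
        ← integral_sub i2 i1, ← e3, ← Real.norm_eq_abs]
      refine norm_integral_le_of_norm_le (Integrable.indicator (integrable_const _) hK) ?_
      refine Filter.Eventually.of_forall fun p => ?_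
      by_cases hp : p ∈ K
      · simp only [Set.indicator_of_mem hp]
        exact (hφr hp).le
      · simp [Set.indicator_of_notMem hp]
    rw [abs_mul, abs_of_pos hmp] at e4
    exact le_of_mul_le_mul_left e4 hmp
  by_contra hcon
  have hpos : 0 < |∫ x, φ x ∂ν| := abs_pos.mpr hcon
  have hu : 0 ≤ ν.real univ := measureReal_nonneg
  have := key (|∫ x, φ x ∂ν| / (2 * (ν.real univ + 1))) (by positivity)
  have h3 : |∫ x, φ x ∂ν| / (2 * (ν.real univ + 1)) * ν.real univ ≤ |∫ x, φ x ∂ν| / 2 := by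
    rw [div_mul_eq_mul_div, div_le_div_iff₀ (by positivity) (by positivity)]
    nlinarith
  linarith

lemma aux_lip_lintegral {n : ℕ} {d : ℝ} (hd : 0 ≤ d) {A : Set (Euc n)} {F : Euc n → Euc n}
    {K : ℝ≥0} (hF : LipschitzOnWith K F A) (hFm : Measurable F)
    (g : Euc n → ℝ≥0∞) (hg : Measurable g) :
    ∫⁻ x in F '' A, g x ∂μH[d] ≤ ((K : ℝ≥0∞) ^ d) * ∫⁻ x in A, g (F x) ∂μH[d] := by
  have h : (μH[d] : Measure (Euc n)).restrict (F '' A) ≤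
      ((K : ℝ≥0∞) ^ d) • ((μH[d] : Measure (Euc n)).restrict A).map F := by
    rw [Measure.le_iff]
    intro s hs
    rw [Measure.restrict_apply hs, Measure.smul_apply, Measure.map_apply hFm hs,
      Measure.restrict_apply (hFm hs), smul_eq_mul]
    have : s ∩ F '' A = F '' (F ⁻¹' s ∩ A) := by
      ext x; constructor
      · rintro ⟨hx, a, ha, rfl⟩; exact ⟨a, ⟨hx, ha⟩, rfl⟩
      · rintro ⟨a, ⟨h1, h2⟩, rfl⟩; exact ⟨h1, a, h2, rfl⟩
    rw [this]
    exact (hF.mono inter_subset_right).hausdorffMeasure_image_le hd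
  calc _ ≤ ∫⁻ x, g x ∂(((K : ℝ≥0∞) ^ d) • ((μH[d] : Measure (Euc n)).restrict A).map F) :=
        lintegral_mono' h le_rfl
    _ = _ := by rw [lintegral_smul_measure, lintegral_map hg hFm, smul_eq_mul]

/-- radial projection -/
def rp {n : ℕ} (x : Euc n) : Euc n := ‖x‖⁻¹ • x

lemma rp_meas {n : ℕ} : Measurable (rp : Euc n → Euc n) := by
  unfold rp; fun_prop

lemma rp_norm {n : ℕ} {x : Euc n} (hx : x ≠ 0) : ‖rp x‖ = 1 := by
  unfold rp; rw [norm_smul, norm_inv, norm_norm, inv_mul_cancel₀ (norm_ne_zero_iff.mpr hx)]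

lemma rp_eq {n : ℕ} {x : Euc n} (hx : x ≠ 0) : ‖x‖ • rp x = x := by
  unfold rp; rw [smul_smul, mul_inv_cancel₀ (norm_ne_zero_iff.mpr hx), one_smul]

lemma rp_smul {n : ℕ} {x : Euc n} {t : ℝ} (ht : 0 < t) : rp (t • x) = rp x := by
  unfold rp
  rw [norm_smul, Real.norm_of_nonneg ht.le, smul_smul, mul_inv_rev, mul_assoc,
    inv_mul_cancel₀ ht.ne', mul_one]

lemma rp_unit {n : ℕ} {x : Euc n} (hx : ‖x‖ = 1) : rp x = x := by
  unfold rp; rw [hx]; simp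

/-- the rotation invariant comparison measure -/
def nuA (n : ℕ) (α : ℝ) : Measure (Euc n) :=
  (((volume : Measure (Euc n)).restrict (ball 0 1 \ {0})).withDensity
    (fun x => ENNReal.ofReal (‖x‖ ^ α))).map rp

lemma nuA_finite {n : ℕ} {α : ℝ} (hα : 0 < α) : IsFiniteMeasure (nuA n α) := by
  constructor
  unfold nuA
  rw [Measure.map_apply rp_meas MeasurableSet.univ, withDensity_apply _ (by simp)]
  simp only [preimage_univ, Measure.restrict_univ]
  calc _ ≤ ∫⁻ x in (ball (0 : Euc n) 1 \ {0}), 1 := by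
        refine setLIntegral_mono measurable_const fun x hx => ?_
        rw [← ENNReal.ofReal_one]
        apply ENNReal.ofReal_le_ofReal
        have : ‖x‖ < 1 := by simpa using hx.1
        exact Real.rpow_le_one (norm_nonneg _) this.le hα.le
    _ ≤ volume (ball (0 : Euc n) 1) := by
        rw [setLIntegral_one]; exact measure_mono sdiff_subset
    _ < ∞ := measure_ball_lt_top

lemma nuA_inv {n : ℕ} {α : ℝ} (R : Euc n ≃ₗᵢ[ℝ] Euc n) (s : Set (Euc n)) (hs : MeasurableSet s) :
    nuA n α (R ⁻¹' s) = nuA n α s := by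
  have hR : Measurable R := R.continuous.measurable
  unfold nuA
  rw [Measure.map_apply rp_meas hs, Measure.map_apply rp_meas (hR hs),
    withDensity_apply _ (rp_meas hs), withDensity_apply _ (rp_meas (hR hs)),
    Measure.restrict_restrict (rp_meas hs), Measure.restrict_restrict (rp_meas (hR hs))]
  rw [← R.measurePreserving.setLIntegral_comp_preimage_emb
    R.toHomeomorph.measurableEmbedding (fun x => ENNReal.ofReal (‖x‖ ^ α))
      (rp ⁻¹' s ∩ (ball 0 1 \ {0}))]
  simp only [LinearIsometryEquiv.norm_map]
  congr 2
  ext x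
  simp [rp]

lemma muH_inv {n : ℕ} {d : ℝ} (R : Euc n ≃ₗᵢ[ℝ] Euc n) (s : Set (Euc n)) (hs : MeasurableSet s) :
    (μH[d] : Measure (Euc n)) (R ⁻¹' s) = μH[d] s :=
  (R.toIsometryEquiv.measurePreserving_hausdorffMeasure d).measure_preimage hs.nullMeasurableSet

lemma aux_ball_inv {n : ℕ} {μ : Measure (Euc n)}
    (h : ∀ (R : Euc n ≃ₗᵢ[ℝ] Euc n) (s : Set (Euc n)), MeasurableSet s → μ (R ⁻¹' s) = μ s)
    {x y : Euc n} (hx : ‖x‖ = 1) (hy : ‖y‖ = 1) (r : ℝ) :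
    μ (ball x r ∩ sphere 0 1) = μ (ball y r ∩ sphere 0 1) := by
  have hR := Submodule.reflection_sub (v := x) (w := y) (by rw [hx, hy])
  set R := (ℝ ∙ (x - y))ᗮ.reflection
  rw [← h R (ball y r ∩ sphere 0 1) (isOpen_ball.measurableSet.inter isClosed_sphere.measurableSet)]
  congr 1
  ext z
  simp only [mem_inter_iff, mem_ball, mem_sphere, dist_zero_right, mem_preimage,
    LinearIsometryEquiv.norm_map, ← hR, LinearIsometryEquiv.dist_map]

/-- Hausdorff measure on the sphere is proportional to `nuA`. -/
lemma aux_prop {n : ℕ} {α d : ℝ} (hα : 0 < α)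
    (hfin : (μH[d] : Measure (Euc n)) (sphere 0 1) ≠ ∞)
    (hpos : (μH[d] : Measure (Euc n)) (sphere 0 1) ≠ 0)
    (φ : Euc n → ℝ) (hφ : ContinuousOn φ (sphere 0 1))
    (h0 : ∫ x in sphere (0 : Euc n) 1, φ x ∂μH[d] = 0) : ∫ x in sphere (0 : Euc n) 1, φ x ∂(nuA n α) = 0 := by
  have := nuA_finite (n := n) hα
  have hms : MeasurableSet (sphere (0 : Euc n) 1) := isClosed_sphere.measurableSet
  have hc : ∀ (μ : Measure (Euc n)) (s : Set (sphere (0 : Euc n) 1)),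
      μ.comap Subtype.val s = μ (Subtype.val '' s) := fun μ s =>
    (MeasurableEmbedding.subtype_coe hms).comap_apply μ s
  have hb : ∀ (x : sphere (0 : Euc n) 1) (r : ℝ),
      Subtype.val '' (ball x r) = ball (x : Euc n) r ∩ sphere 0 1 := by
    intro x r
    ext z
    constructor
    · rintro ⟨y, hy, rfl⟩
      exact ⟨hy, y.2⟩
    · rintro ⟨h1, h2⟩
      exact ⟨⟨z, h2⟩, h1, rfl⟩
  have hn : ∀ x : sphere (0 : Euc n) 1, ‖(x : Euc n)‖ = 1 := fun x => by simp
  rw [← integral_subtype_comap hms] at h0 ⊢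
  have : IsFiniteMeasure ((μH[d] : Measure (Euc n)).comap (Subtype.val : sphere (0 : Euc n) 1 → Euc n)) := by
    constructor
    rw [hc, image_univ, Subtype.range_coe]
    exact hfin.lt_top
  have : IsFiniteMeasure ((nuA n α).comap (Subtype.val : sphere (0 : Euc n) 1 → Euc n)) := by
    constructor
    rw [hc, image_univ, Subtype.range_coe]
    exact measure_lt_top _ _
  refine aux_unif _ _ ?_ ?_ ?_ (fun x : sphere (0 : Euc n) 1 => φ x) ?_ h0
  · intro h
    rw [← Measure.measure_univ_eq_zero, hc, image_univ, Subtype.range_coe] at h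
    exact hpos h
  · intro x y r
    rw [hc, hc, hb, hb]
    exact aux_ball_inv muH_inv (hn x) (hn y) r
  · intro x y r
    rw [hc, hc, hb, hb]
    exact aux_ball_inv nuA_inv (hn x) (hn y) r
  · exact hφ.domRestrict

/-- finiteness from a single ball -/
lemma aux_sphere_fin {n : ℕ} {d : ℝ} {x : Euc n} (hx : ‖x‖ = 1) {r : ℝ} (hr : 0 < r)
    (hfin : (μH[d] : Measure (Euc n)) (ball x r ∩ sphere 0 1) ≠ ∞) :
    (μH[d] : Measure (Euc n)) (sphere 0 1) ≠ ∞ := by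
  obtain ⟨t, hts, ht⟩ := (isCompact_sphere (0 : Euc n) 1).elim_nhds_subcover (fun x => ball x r)
        (fun x _ => ball_mem_nhds x hr)
  have hsub : sphere (0 : Euc n) 1 ⊆ ⋃ y ∈ t, (ball y r ∩ sphere 0 1) := by
    intro z hz
    have := ht hz
    simp only [mem_iUnion] at this ⊢
    obtain ⟨y, hy, h⟩ := this
    exact ⟨y, hy, h, hz⟩
  refine ((measure_mono hsub).trans_lt ?_).ne
  refine (measure_biUnion_finset_le t _).trans_lt ?_
  rw [ENNReal.sum_lt_top]
  intro y hy
  have hy1 : ‖y‖ = 1 := by simpa using hts y hy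
  rw [aux_ball_inv muH_inv hy1 hx]
  exact hfin.lt_top

lemma zero_notMem {n : ℕ} (hn : 1 ≤ n) {S : Set (Euc n)} (hS : IsOpenConvexCone S)
    (hNoLine : ∀ p v : Euc n, (∀ t : ℝ, p + t • v ∈ S) → v = 0) : (0 : Euc n) ∉ S := by
  intro h0
  obtain ⟨r, hr, hb⟩ := Metric.isOpen_iff.1 hS.1 0 h0
  have hall : ∀ x, x ∈ S := by
    intro x
    have hp : 0 < r / (2 * (‖x‖ + 1)) := by positivity
    have h1 : (r / (2 * (‖x‖ + 1))) • x ∈ S := by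
      apply hb
      rw [mem_ball_zero_iff, norm_smul, Real.norm_of_nonneg hp.le, div_mul_eq_mul_div,
        div_lt_iff₀ (by positivity)]
      nlinarith [norm_nonneg x]
    have h2 := hS.2.2 _ h1 (r / (2 * (‖x‖ + 1)))⁻¹ (by positivity)
    rwa [smul_smul, inv_mul_cancel₀ hp.ne', one_smul] at h2
  have : (EuclideanSpace.single (⟨0, hn⟩ : Fin n) (1 : ℝ)) = 0 :=
    hNoLine 0 _ (fun t => hall _)
  have h3 := congrArg norm this
  simp at h3

lemma neg_notMem {n : ℕ} {S : Set (Euc n)} (hS : IsOpenConvexCone S)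
    (h0 : (0 : Euc n) ∉ S) {x : Euc n} (hx : x ∈ S) : -x ∉ S := by
  intro hx'
  apply h0
  have := hS.2.1 hx hx' (by norm_num : (0 : ℝ) ≤ 1 / 2) (by norm_num : (0 : ℝ) ≤ 1 / 2) (by norm_num)
  simpa using this

lemma w_pos {n : ℕ} {S : Set (Euc n)} {α : ℝ} (hα : 0 < α) {w : Euc n → ℝ} (hS : IsOpenConvexCone S)
    (hw : IsAdmissibleWeight S α w) {x : Euc n} (hx : x ∈ S) : 0 < w x := by
  obtain ⟨hc, hnn, ⟨z, hz, hwz⟩, hh, hcv⟩ := hw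
  have hzp : 0 < w z := lt_of_le_of_ne (hnn z hz) (Ne.symm hwz)
  obtain ⟨y, hyS, hy⟩ : ∃ y ∈ S, 0 < w y := by
    have h1 := (hc z hz).mono (subset_closure (s := S))
    have h2 := h1.eventually (lt_mem_nhds hzp)
    have : (𝓝[S] z).NeBot := mem_closure_iff_nhdsWithin_neBot.1 hz
    obtain ⟨y, h3, h4⟩ := (h2.and self_mem_nhdsWithin).exists
    exact ⟨y, h4, h3⟩
  have hcont : Filter.Tendsto (fun t : ℝ => x + t • (x - y)) (𝓝 0) (𝓝 x) := by
    have : Continuous (fun t : ℝ => x + t • (x - y)) := by fun_prop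
    simpa using this.tendsto 0
  have hev := hcont.eventually (hS.1.mem_nhds hx)
  have hev2 : ∀ᶠ t : ℝ in 𝓝[>] 0, x + t • (x - y) ∈ S := hev.filter_mono nhdsWithin_le_nhds
  obtain ⟨t, htS, ht⟩ := (hev2.and self_mem_nhdsWithin).exists
  have ht : 0 < t := ht
  have key := hcv.2 htS hyS (by positivity : (0 : ℝ) ≤ 1 / (1 + t))
    (by positivity : (0 : ℝ) ≤ t / (1 + t)) (by field_simp)
  have hxe : (1 / (1 + t)) • (x + t • (x - y)) + (t / (1 + t)) • y = x := by
    have h1 : x + t • (x - y) = (1 + t) • x - t • y := by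
      rw [smul_sub, add_smul, one_smul]; abel
    rw [h1, smul_sub, smul_smul, smul_smul, one_div_mul_cancel (by positivity), one_smul,
      one_div_mul_eq_div, sub_add_cancel]
  rw [hxe] at key
  simp only [smul_eq_mul] at key
  have h5 : 0 ≤ w (x + t • (x - y)) ^ (1 / α) := Real.rpow_nonneg (hnn _ (subset_closure htS)) _
  have h6 : 0 < w y ^ (1 / α) := Real.rpow_pos_of_pos hy _
  have h7 : 0 < w x ^ (1 / α) := lt_of_lt_of_le (by positivity) key
  refine lt_of_le_of_ne (hnn x (subset_closure hx)) fun he => ?_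
  rw [← he, Real.zero_rpow (by positivity)] at h7
  exact lt_irrefl _ h7

lemma smul_mem_iff' {n : ℕ} {S : Set (Euc n)} (hS : IsOpenConvexCone S) {x : Euc n} {t : ℝ}
    (ht : 0 < t) : t • x ∈ S ↔ x ∈ S := by
  constructor
  · intro h
    have := hS.2.2 _ h t⁻¹ (by positivity)
    rwa [smul_smul, inv_mul_cancel₀ ht.ne', one_smul] at this
  · intro h; exact hS.2.2 _ h t ht

lemma rp_mem_iff {n : ℕ} {S : Set (Euc n)} (hS : IsOpenConvexCone S) {x : Euc n} (hx : x ≠ 0) :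
    rp x ∈ S ↔ x ∈ S := by
  unfold rp
  exact smul_mem_iff' hS (by positivity)

lemma radSet_eq {n : ℕ} {S : Set (Euc n)} (hS : IsOpenConvexCone S) (h0 : (0 : Euc n) ∉ S)
    (f : Euc n → ℝ) : radSet S f = {x | ‖x‖ < f (rp x)} ∩ S := by
  ext x
  constructor
  · rintro ⟨θ, ⟨hθ, hθS⟩, t, ht, htf, rfl⟩
    have h1 : ‖θ‖ = 1 := by simpa using hθ
    refine ⟨?_, hS.2.2 _ hθS t ht⟩
    simp only [mem_ofPred_eq]
    rw [rp_smul ht, rp_unit h1, norm_smul, Real.norm_of_nonneg ht.le, h1, mul_one]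
    exact htf
  · rintro ⟨h1, h2⟩
    have hx : x ≠ 0 := fun h => h0 (h ▸ h2)
    exact ⟨rp x, ⟨by simpa using rp_norm hx, (rp_mem_iff hS hx).2 h2⟩, ‖x‖, norm_pos_iff.2 hx, h1,
      (rp_eq hx).symm⟩

/-- weighted volume measure on the cone -/
def mS {n : ℕ} (S : Set (Euc n)) (w : Euc n → ℝ) : Measure (Euc n) :=
  ((volume : Measure (Euc n)).restrict S).withDensity (fun x => ENNReal.ofReal (w x))

lemma mS_apply {n : ℕ} {S : Set (Euc n)} {w : Euc n → ℝ} {A : Set (Euc n)} (hA : MeasurableSet A) :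
    mS S w A = wVol w (A ∩ S) := by
  unfold mS wVol
  rw [withDensity_apply _ hA, Measure.restrict_restrict hA]

lemma wVol_eq {n : ℕ} {S : Set (Euc n)} {w : Euc n → ℝ} {A : Set (Euc n)} (hA : MeasurableSet A)
    (hAS : A ⊆ S) : wVol w A = mS S w A := by
  rw [mS_apply hA, inter_eq_left.2 hAS]

lemma mS_scale {n : ℕ} {S : Set (Euc n)} {α : ℝ} {w : Euc n → ℝ} (hS : IsOpenConvexCone S)
    (hw : IsAdmissibleWeight S α w) {A : Set (Euc n)} (hA : MeasurableSet A)
    (hAc : ∀ x, ∀ t : ℝ, 0 < t → (t • x ∈ A ↔ x ∈ A)) {s : ℝ} (hs : 0 < s) :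
    mS S w (A ∩ ball 0 s) = ENNReal.ofReal (s ^ ((n : ℝ) + α)) * mS S w (A ∩ ball 0 1) := by
  rw [mS_apply (hA.inter isOpen_ball.measurableSet), mS_apply (hA.inter isOpen_ball.measurableSet)]
  unfold wVol
  have hemb : MeasurableEmbedding (fun x : Euc n => s • x) :=
    (Homeomorph.smulOfNeZero s hs.ne').measurableEmbedding
  have hmap := Measure.map_addHaar_smul (volume : Measure (Euc n)) hs.ne'
  have hvol : (volume : Measure (Euc n)) =
      ENNReal.ofReal (s ^ n) • Measure.map (s • ·) (volume : Measure (Euc n)) := by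
    rw [hmap, smul_smul, ← ENNReal.ofReal_mul (by positivity), finrank_euclideanSpace_fin,
      abs_of_pos (by positivity), mul_inv_cancel₀ (by positivity)]
    simp
  conv_lhs => rw [hvol]
  rw [Measure.restrict_smul, lintegral_smul_measure, hemb.restrict_map, hemb.lintegral_map]
  have hpre : (fun x : Euc n => s • x) ⁻¹' (A ∩ ball 0 s ∩ S) = A ∩ ball 0 1 ∩ S := by
    ext x
    simp only [mem_preimage, mem_inter_iff, hAc x s hs, smul_mem_iff' hS hs, mem_ball_zero_iff,
      norm_smul, Real.norm_of_nonneg hs.le]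
    rw [mul_lt_iff_lt_one_right hs]
  rw [hpre]
  have hmeas : MeasurableSet (A ∩ ball 0 1 ∩ S) :=
    (hA.inter isOpen_ball.measurableSet).inter hS.1.measurableSet
  have h1 : ∫⁻ x in A ∩ ball 0 1 ∩ S, ENNReal.ofReal (w (s • x)) =
      ∫⁻ x in A ∩ ball 0 1 ∩ S, ENNReal.ofReal (s ^ α) * ENNReal.ofReal (w x) := by
    refine setLIntegral_congr_fun hmeas fun x hx => ?_
    rw [hw.2.2.2.1 x (subset_closure hx.2) s hs, ENNReal.ofReal_mul (by positivity)]
  rw [h1, lintegral_const_mul' _ _ ENNReal.ofReal_ne_top, smul_eq_mul, ← mul_assoc,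
    ← ENNReal.ofReal_mul (by positivity), Real.rpow_add hs, Real.rpow_natCast]

lemma mS_ball_fin {n : ℕ} {S : Set (Euc n)} {α : ℝ} {w : Euc n → ℝ}
    (hw : IsAdmissibleWeight S α w) (s : ℝ) : mS S w (ball 0 s) ≠ ∞ := by
  rw [mS_apply isOpen_ball.measurableSet]
  unfold wVol
  have hcomp : IsCompact (closedBall (0 : Euc n) s ∩ closure S) :=
    (isCompact_closedBall _ _).inter_right isClosed_closure
  obtain ⟨M, hM⟩ := hcomp.exists_bound_of_continuousOn (hw.1.mono inter_subset_right)
  refine ((setLIntegral_mono (g := fun _ => ENNReal.ofReal M) measurable_const ?_).trans_lt ?_).ne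
  · intro x hx
    exact ENNReal.ofReal_le_ofReal ((le_abs_self _).trans
      (hM x ⟨ball_subset_closedBall hx.1, subset_closure hx.2⟩))
  · rw [setLIntegral_const]
    refine ENNReal.mul_lt_top ENNReal.ofReal_lt_top ?_
    exact (measure_mono inter_subset_left).trans_lt measure_ball_lt_top

lemma mS_pos {n : ℕ} {S : Set (Euc n)} {α : ℝ} (hα : 0 < α) {w : Euc n → ℝ} (hS : IsOpenConvexCone S)
    (hw : IsAdmissibleWeight S α w) {U : Set (Euc n)} (hU : IsOpen U) (hne : (U ∩ S).Nonempty) :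
    0 < mS S w U := by
  rw [mS_apply hU.measurableSet]
  unfold wVol
  have hm : MeasurableSet (U ∩ S) := (hU.inter hS.1).measurableSet
  have hae : AEMeasurable (fun x => ENNReal.ofReal (w x)) (volume.restrict (U ∩ S)) :=
    ((hw.1.mono (inter_subset_right.trans subset_closure)).aemeasurable hm).ennreal_ofReal
  rw [pos_iff_ne_zero]
  intro hz
  rw [lintegral_eq_zero_iff' hae, Filter.EventuallyEq, ae_restrict_iff' hm] at hz
  have h2 : volume (U ∩ S) = 0 := by
    refine measure_mono_null ?_ (ae_iff.1 hz)
    intro x hx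
    have := w_pos hα hS hw hx.2
    simp [hx.1, hx.2, this]
  exact ((hU.inter hS.1).measure_pos volume hne).ne' h2

lemma exists_lo_hi {n : ℕ} (hn : 1 ≤ n) {α : ℝ} (hα : 0 < α)
    {S : Set (Euc n)} (hS : IsOpenConvexCone S) (h0 : (0 : Euc n) ∉ S)
    {w : Euc n → ℝ} (hw : IsAdmissibleWeight S α w) {η : Euc n → ℝ}
    (hsupp : ∃ Kc : Set (Euc n), IsCompact Kc ∧ Kc ⊆ sphere (0 : Euc n) 1 ∩ S ∧
      ∀ x ∈ sphere (0 : Euc n) 1, η x ≠ 0 → x ∈ Kc)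
    (hne : ∃ x ∈ sphere (0 : Euc n) 1 ∩ S, η x ≠ 0)
    (hmean : (∫ x in sphere (0 : Euc n) 1 ∩ S, η x * w x ∂(μH[(n : ℝ) - 1])) = 0) :
    ∃ a ∈ sphere (0 : Euc n) 1 ∩ S, ∃ b ∈ sphere (0 : Euc n) 1 ∩ S, η a < η b := by
  obtain ⟨x, hx, hηx⟩ := hne
  suffices h : ∃ y ∈ sphere (0 : Euc n) 1 ∩ S, η y = 0 by
    obtain ⟨y, hy, hy0⟩ := h
    rcases lt_or_gt_of_ne hηx with h | h
    · exact ⟨x, hx, y, hy, by rwa [hy0]⟩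
    · exact ⟨y, hy, x, hx, by rwa [hy0]⟩
  obtain ⟨Kc, hKc, hKs, hK⟩ := hsupp
  have hnegx : -x ∉ S := neg_notMem hS h0 hx.2
  have hx1 : ‖x‖ = 1 := by simpa using hx.1
  rcases hn.eq_or_lt with h1 | h1
  · exfalso
    subst h1
    have hcap : sphere (0 : Euc 1) 1 ∩ S = {x} := by
      ext y
      constructor
      · rintro ⟨hy, hyS⟩
        have hy1 : ‖y‖ = 1 := by simpa using hy
        rw [EuclideanSpace.norm_eq] at hy1 hx1
        simp only [Finset.univ_unique, Fin.default_eq_zero, Fin.isValue, Real.norm_eq_abs, sq_abs,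
          Finset.sum_singleton, Real.sqrt_eq_one] at hy1 hx1
        have : y 0 = x 0 ∨ y 0 = - x 0 := sq_eq_sq_iff_eq_or_eq_neg.1 (by rw [hy1, hx1])
        rcases this with h | h
        · rw [mem_singleton_iff]; ext i; rw [Subsingleton.elim i 0, h]
        · exfalso
          apply hnegx
          have : y = -x := by ext i; rw [Subsingleton.elim i 0, h]; rfl
          rwa [← this]
      · rintro rfl; exact hx
    rw [hcap] at hmean
    simp only [Nat.cast_one, sub_self] at hmean
    rw [Measure.restrict_singleton, Measure.hausdorffMeasure_zero_singleton, one_smul,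
      integral_dirac] at hmean
    have := w_pos hα hS hw hx.2
    rcases mul_eq_zero.1 hmean with h | h
    · exact hηx h
    · exact this.ne' h
  · have hrank : 1 < Module.rank ℝ (Euc n) := by
      rw [← Module.finrank_eq_rank, finrank_euclideanSpace_fin]
      exact_mod_cast h1
    have hpc := isPreconnected_sphere hrank (0 : Euc n) 1
    obtain ⟨y, hy, hyS, hyK⟩ := hpc S Kcᶜ hS.1 hKc.isClosed.isOpen_compl
      (by
        intro z hz
        by_cases h : z ∈ Kc
        · exact Or.inl (hKs h).2
        · exact Or.inr h)
      ⟨x, hx.1, hx.2⟩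
      ⟨-x, by simpa using hx1, fun h => hnegx (hKs h).2⟩
    refine ⟨y, ⟨hy, hyS⟩, ?_⟩
    by_contra h
    exact hyK (hK y hy h)

lemma rpow_diff {D x y : ℝ} (hD : 1 ≤ D) (hy : 1 / 2 ≤ y) (hxy : y ≤ x) :
    (x - y) * (1 / 2 : ℝ) ^ (D - 1) ≤ x ^ D - y ^ D := by
  have hy0 : 0 < y := by linarith
  have hx0 : 0 < x := by linarith
  have e1 : x ^ D = x * x ^ (D - 1) := by
    conv_lhs => rw [show D = 1 + (D - 1) by ring, Real.rpow_add hx0, Real.rpow_one]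
  have e2 : y ^ D = y * y ^ (D - 1) := by
    conv_lhs => rw [show D = 1 + (D - 1) by ring, Real.rpow_add hy0, Real.rpow_one]
  have h1 : (1 / 2 : ℝ) ^ (D - 1) ≤ y ^ (D - 1) :=
    Real.rpow_le_rpow (by norm_num) hy (by linarith)
  have h2 : y ^ (D - 1) ≤ x ^ (D - 1) := Real.rpow_le_rpow hy0.le hxy (by linarith)
  rw [e1, e2]
  nlinarith

lemma mS_inter {n : ℕ} {S : Set (Euc n)} {w : Euc n → ℝ} (hS : MeasurableSet S) {A : Set (Euc n)}
    (hA : MeasurableSet A) : mS S w (A ∩ S) = mS S w A := by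
  rw [mS_apply hA, mS_apply (hA.inter hS), inter_assoc, inter_self]

lemma shell {n : ℕ} {S : Set (Euc n)} {α : ℝ} {w : Euc n → ℝ} (hS : IsOpenConvexCone S)
    (hw : IsAdmissibleWeight S α w) {U T : Set (Euc n)} (hU : MeasurableSet U)
    (hUc : ∀ x, ∀ t : ℝ, 0 < t → (t • x ∈ U ↔ x ∈ U)) (hTf : mS S w T ≠ ∞)
    {s1 s2 : ℝ} (hs1 : 0 < s1) (hs2 : 0 < s2)
    (hsub : U ∩ ball 0 s2 ∩ S ⊆ T ∪ (U ∩ ball 0 s1)) :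
    (s2 ^ ((n : ℝ) + α) - s1 ^ ((n : ℝ) + α)) * (mS S w (U ∩ ball 0 1)).toReal
      ≤ (mS S w T).toReal := by
  have hfin : mS S w (U ∩ ball 0 1) ≠ ∞ :=
    ((measure_mono inter_subset_right).trans_lt (mS_ball_fin hw 1).lt_top).ne
  have h1 : mS S w (U ∩ ball 0 s2) ≤ mS S w T + mS S w (U ∩ ball 0 s1) := by
    rw [← mS_inter hS.1.measurableSet (hU.inter isOpen_ball.measurableSet)]
    exact (measure_mono hsub).trans (measure_union_le _ _)
  rw [mS_scale hS hw hU hUc hs2, mS_scale hS hw hU hUc hs1] at h1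
  have h2 := ENNReal.toReal_mono (ENNReal.add_ne_top.2
    ⟨hTf, ENNReal.mul_ne_top ENNReal.ofReal_ne_top hfin⟩) h1
  rw [ENNReal.toReal_add hTf (ENNReal.mul_ne_top ENNReal.ofReal_ne_top hfin), ENNReal.toReal_mul,
    ENNReal.toReal_mul, ENNReal.toReal_ofReal (by positivity),
    ENNReal.toReal_ofReal (by positivity)] at h2
  linarith

lemma rp_continuousAt {n : ℕ} {x : Euc n} (hx : x ≠ 0) : ContinuousAt (rp : Euc n → Euc n) x := by
  unfold rp
  exact (continuousAt_id.norm.inv₀ (norm_ne_zero_iff.2 hx)).smul continuousAt_id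

lemma cone_open {n : ℕ} {η : Euc n → ℝ} (hη : Continuous η) {V : Set ℝ} (hV : IsOpen V) :
    IsOpen {x : Euc n | x ≠ 0 ∧ η (rp x) ∈ V} := by
  rw [isOpen_iff_mem_nhds]
  rintro x ⟨hx, hxV⟩
  have h1 : ∀ᶠ y in 𝓝 x, y ≠ 0 := isOpen_ne.mem_nhds hx
  have h2 : ContinuousAt (fun y => η (rp y)) x :=
    ContinuousAt.comp (g := η) hη.continuousAt (rp_continuousAt hx)
  have h3 : ∀ᶠ y in 𝓝 x, η (rp y) ∈ V := h2.eventually (hV.mem_nhds hxV)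
  exact h1.and h3

lemma norm_rp_le {n : ℕ} (x : Euc n) : ‖rp x‖ ≤ 1 := by
  by_cases h : x = 0
  · subst h; simp [rp]
  · exact (rp_norm h).le

set_option maxHeartbeats 1000000 in
lemma asym {n : ℕ} (hn : 1 ≤ n) {α : ℝ} (hα : 0 < α)
    {S : Set (Euc n)} (hS : IsOpenConvexCone S) (h0 : (0 : Euc n) ∉ S)
    {w : Euc n → ℝ} (hw : IsAdmissibleWeight S α w) {η : Euc n → ℝ} (hη : Continuous η)
    {N : ℝ} (hN : ∀ x, ‖x‖ ≤ 1 → |η x| ≤ N)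
    {a b : Euc n} (ha : a ∈ sphere (0 : Euc n) 1 ∩ S) (hb : b ∈ sphere (0 : Euc n) 1 ∩ S)
    (hab : η a < η b) : ∃ c : ℝ, 0 < c ∧ ∀ ε : ℝ, 0 < ε → ε * N ≤ 1 / 2 → ∀ r : ℝ, 0 < r →
      c * ε ≤
            (wVol w (symmDiff (radSet S (fun θ => 1 + ε * η θ))
                (ball (0 : Euc n) r ∩ S))).toReal /
              (wVol w (radSet S (fun θ => 1 + ε * η θ))).toReal := by
  have ha1 : ‖a‖ = 1 := by simpa using ha.1
  have hb1 : ‖b‖ = 1 := by simpa using hb.1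
  have ha0 : a ≠ 0 := by intro h; simp [h] at ha1
  have hb0 : b ≠ 0 := by intro h; simp [h] at hb1
  have hSm := hS.1.measurableSet
  set D : ℝ := (n : ℝ) + α with hD
  have hn' : (1 : ℝ) ≤ n := by exact_mod_cast hn
  have hD1 : 1 ≤ D := by linarith
  set q := η a + (η b - η a) / 3 with hq
  set p := η a + 2 * (η b - η a) / 3 with hp
  set mid := (η a + η b) / 2 with hmid
  have haN := abs_le.1 (hN a ha1.le)
  have hbN := abs_le.1 (hN b hb1.le)
  let Ulo := {x : Euc n | x ≠ 0 ∧ η (rp x) ∈ Iio q}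
  let Uhi := {x : Euc n | x ≠ 0 ∧ η (rp x) ∈ Ioi p}
  have hUlo : IsOpen Ulo := cone_open hη isOpen_Iio
  have hUhi : IsOpen Uhi := cone_open hη isOpen_Ioi
  have hcone : ∀ V : Set ℝ, ∀ x : Euc n, ∀ t : ℝ, 0 < t →
      (t • x ∈ {x : Euc n | x ≠ 0 ∧ η (rp x) ∈ V} ↔ x ∈ {x : Euc n | x ≠ 0 ∧ η (rp x) ∈ V}) := by
    intro V x t ht
    simp only [mem_ofPred_eq, rp_smul ht, ne_eq, smul_eq_zero, ht.ne', false_or]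
  have half : ∀ x : Euc n, ‖x‖ = 1 → (1 / 2 : ℝ) • x ∈ ball (0 : Euc n) 1 := by
    intro x hx; rw [mem_ball_zero_iff, norm_smul, hx]; norm_num
  have hWlo : 0 < mS S w (Ulo ∩ ball 0 1) := by
    refine mS_pos hα hS hw (hUlo.inter isOpen_ball) ⟨(1 / 2 : ℝ) • a, ⟨?_, half a ha1⟩,
      hS.2.2 _ ha.2 _ (by norm_num)⟩
    rw [hcone _ _ _ (by norm_num)]
    refine ⟨ha0, ?_⟩
    rw [rp_unit ha1, mem_Iio]; linarith
  have hWhi : 0 < mS S w (Uhi ∩ ball 0 1) := by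
    refine mS_pos hα hS hw (hUhi.inter isOpen_ball) ⟨(1 / 2 : ℝ) • b, ⟨?_, half b hb1⟩,
      hS.2.2 _ hb.2 _ (by norm_num)⟩
    rw [hcone _ _ _ (by norm_num)]
    refine ⟨hb0, ?_⟩
    rw [rp_unit hb1, mem_Ioi]; linarith
  have hfin : ∀ U : Set (Euc n), mS S w (U ∩ ball 0 1) ≠ ∞ := fun U =>
    ((measure_mono inter_subset_right).trans_lt (mS_ball_fin hw 1).lt_top).ne
  set W := min (mS S w (Ulo ∩ ball 0 1)).toReal (mS S w (Uhi ∩ ball 0 1)).toReal with hW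
  have hWpos : 0 < W := lt_min (ENNReal.toReal_pos hWlo.ne' (hfin _))
    (ENNReal.toReal_pos hWhi.ne' (hfin _))
  set Y := (mS S w (ball 0 2)).toReal with hY
  have hYpos : 0 < Y := by
    refine ENNReal.toReal_pos (mS_pos hα hS hw isOpen_ball ⟨a, ?_, ha.2⟩).ne' (mS_ball_fin hw 2)
    rw [mem_ball_zero_iff, ha1]; norm_num
  set gap := (η b - η a) / 6 with hgap
  have hgp : 0 < gap := by rw [hgap]; linarith
  refine ⟨gap * (1 / 2 : ℝ) ^ (D - 1) * W / Y, by positivity, ?_⟩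
  intro ε hε hεN r hr
  rw [radSet_eq hS h0]
  set E' : Set (Euc n) := {x | ‖x‖ < 1 + ε * η (rp x)} with hE'
  have hE'm : MeasurableSet E' :=
    measurableSet_lt measurable_norm
      (measurable_const.add (measurable_const.mul (hη.measurable.comp rp_meas)))
  have hEb : E' ⊆ ball 0 2 := by
    intro x hx
    have := abs_le.1 (hN _ (norm_rp_le x))
    have hx : ‖x‖ < 1 + ε * η (rp x) := hx
    rw [mem_ball_zero_iff]
    nlinarith
  have hEb2 : ball 0 (1 / 2) ⊆ E' := by
    intro x hx
    have := abs_le.1 (hN _ (norm_rp_le x))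
    rw [mem_ball_zero_iff] at hx
    change ‖x‖ < 1 + ε * η (rp x)
    nlinarith
  have hbm : MeasurableSet (ball (0 : Euc n) r ∩ S) := isOpen_ball.measurableSet.inter hSm
  have hTm : MeasurableSet (symmDiff (E' ∩ S) (ball (0 : Euc n) r ∩ S)) :=
    (hE'm.inter hSm).symmDiff hbm
  have hTS : symmDiff (E' ∩ S) (ball (0 : Euc n) r ∩ S) ⊆ S := by
    rintro x (hx | hx)
    · exact hx.1.2
    · exact hx.1.2
  rw [wVol_eq (hE'm.inter hSm) inter_subset_right, wVol_eq hTm hTS, mS_inter hSm hE'm]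
  set T := symmDiff (E' ∩ S) (ball (0 : Euc n) r ∩ S) with hT
  have hEY : (mS S w E').toReal ≤ Y := ENNReal.toReal_mono (mS_ball_fin hw 2) (measure_mono hEb)
  have hEfin : mS S w E' ≠ ∞ := ((measure_mono hEb).trans_lt (mS_ball_fin hw 2).lt_top).ne
  have hEpos : 0 < (mS S w E').toReal := by
    refine ENNReal.toReal_pos ?_ hEfin
    have h1 : 0 < mS S w (ball 0 (1 / 2)) := by
      refine mS_pos hα hS hw isOpen_ball ⟨(1 / 4 : ℝ) • a, ?_, hS.2.2 _ ha.2 _ (by norm_num)⟩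
      rw [mem_ball_zero_iff, norm_smul, ha1]; norm_num
    exact (h1.trans_le (measure_mono hEb2)).ne'
  have hTfin : mS S w T ≠ ∞ := by
    refine ((measure_mono (t := ball 0 2 ∪ ball 0 r) ?_).trans_lt
      ((measure_union_le _ _).trans_lt (ENNReal.add_lt_top.2
        ⟨(mS_ball_fin hw 2).lt_top, (mS_ball_fin hw r).lt_top⟩))).ne
    rintro x (hx | hx)
    · exact Or.inl (hEb hx.1.1)
    · exact Or.inr hx.1.1
  have main : gap * (1 / 2 : ℝ) ^ (D - 1) * W * ε ≤ (mS S w T).toReal := by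
    have hk : (0 : ℝ) < (1 / 2 : ℝ) ^ (D - 1) := by positivity
    have hqN : -N ≤ q := by rw [hq]; linarith
    have hmN : -N ≤ mid := by rw [hmid]; linarith
    have hmq : mid - q = gap := by rw [hmid, hq, hgap]; ring
    have hpm : p - mid = gap := by rw [hmid, hp, hgap]; ring
    have b1 : 1 / 2 ≤ 1 + ε * q := by
      have := mul_le_mul_of_nonneg_left hqN hε.le
      linarith
    have b2 : 1 / 2 ≤ 1 + ε * mid := by
      have := mul_le_mul_of_nonneg_left hmN hε.le
      linarith
    have b3 : 1 + ε * q ≤ 1 + ε * mid := by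
      have := mul_le_mul_of_nonneg_left (show q ≤ mid by linarith) hε.le
      linarith
    have b4 : 1 + ε * mid ≤ 1 + ε * p := by
      have := mul_le_mul_of_nonneg_left (show mid ≤ p by linarith) hε.le
      linarith
    by_cases hrm : r ≤ 1 + ε * mid
    · have h1 := shell hS hw hUhi.measurableSet (hcone (Ioi p)) hTfin (s1 := 1 + ε * mid)
        (s2 := 1 + ε * p) (by linarith) (by linarith) (by
          rintro x ⟨⟨hxU, hxb⟩, hxS⟩
          by_cases hx : ‖x‖ < 1 + ε * mid
          · exact Or.inr ⟨hxU, by rwa [mem_ball_zero_iff]⟩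
          · left; left
            rw [mem_ball_zero_iff] at hxb
            have hxp : p < η (rp x) := hxU.2
            refine ⟨⟨?_, hxS⟩, fun h => ?_⟩
            · change ‖x‖ < 1 + ε * η (rp x)
              have := mul_le_mul_of_nonneg_left hxp.le hε.le
              linarith
            · have := h.1
              rw [mem_ball_zero_iff] at this
              linarith)
      have h2 := rpow_diff hD1 b2 b4
      have h3 : (1 + ε * p) - (1 + ε * mid) = ε * gap := by rw [← hpm]; ring
      rw [h3] at h2
      refine le_trans ?_ h1
      calc _ = (ε * gap * (1 / 2 : ℝ) ^ (D - 1)) * W := by ring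
        _ ≤ _ := mul_le_mul h2 (min_le_right _ _) hWpos.le (le_trans (by positivity) h2)
    · have h1 := shell hS hw hUlo.measurableSet (hcone (Iio q)) hTfin (s1 := 1 + ε * q)
        (s2 := 1 + ε * mid) (by linarith) (by linarith) (by
          rintro x ⟨⟨hxU, hxb⟩, hxS⟩
          by_cases hx : ‖x‖ < 1 + ε * q
          · exact Or.inr ⟨hxU, by rwa [mem_ball_zero_iff]⟩
          · left; right
            rw [mem_ball_zero_iff] at hxb
            have hxp : η (rp x) < q := hxU.2
            refine ⟨⟨?_, hxS⟩, fun h => ?_⟩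
            · rw [mem_ball_zero_iff]
              linarith
            · have : ‖x‖ < 1 + ε * η (rp x) := h.1
              have := mul_le_mul_of_nonneg_left hxp.le hε.le
              linarith)
      have h2 := rpow_diff hD1 b1 b3
      have h3 : (1 + ε * mid) - (1 + ε * q) = ε * gap := by rw [← hmq]; ring
      rw [h3] at h2
      refine le_trans ?_ h1
      calc _ = (ε * gap * (1 / 2 : ℝ) ^ (D - 1)) * W := by ring
        _ ≤ _ := mul_le_mul h2 (min_le_left _ _) hWpos.le (le_trans (by positivity) h2)
  calc _ = (gap * (1 / 2 : ℝ) ^ (D - 1) * W * ε) / Y := by ring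
    _ ≤ (mS S w T).toReal / Y := by gcongr
    _ ≤ _ := div_le_div_of_nonneg_left ENNReal.toReal_nonneg hEpos hEY

lemma ind_meas {n : ℕ} {S : Set (Euc n)} {α : ℝ} {w : Euc n → ℝ} (hS : IsOpenConvexCone S)
    (hw : IsAdmissibleWeight S α w) : Measurable (S.indicator w) := by
  classical
  rw [← Set.piecewise_eq_indicator]
  exact (hw.1.mono subset_closure).measurable_piecewise continuousOn_const hS.1.measurableSet

lemma mean_transfer {n : ℕ} {α : ℝ} (hα : 0 < α)
    {S : Set (Euc n)} (hS : IsOpenConvexCone S) (h0 : (0 : Euc n) ∉ S)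
    {w : Euc n → ℝ} (hw : IsAdmissibleWeight S α w) {η : Euc n → ℝ} (hη : Continuous η)
    (hsupp : ∃ Kc : Set (Euc n), IsCompact Kc ∧ Kc ⊆ sphere (0 : Euc n) 1 ∩ S ∧
      ∀ x ∈ sphere (0 : Euc n) 1, η x ≠ 0 → x ∈ Kc)
    (hmean : (∫ x in sphere (0 : Euc n) 1 ∩ S, η x * w x ∂(μH[(n : ℝ) - 1])) = 0)
    (hfin : (μH[(n : ℝ) - 1] : Measure (Euc n)) (sphere 0 1) ≠ ∞)
    (hpos : (μH[(n : ℝ) - 1] : Measure (Euc n)) (sphere 0 1) ≠ 0) :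
    ∫ x in ball (0 : Euc n) 1, η (rp x) ∂(mS S w) = 0 := by
  have hSm := hS.1.measurableSet
  have hwS : ContinuousOn w S := hw.1.mono subset_closure
  have hwm : Measurable (S.indicator w) := ind_meas hS hw
  set φ : Euc n → ℝ := fun x => η x * S.indicator w x with hφ
  have hφm : Measurable φ := hη.measurable.mul hwm
  have hφc : ContinuousOn φ (sphere 0 1) := by
    obtain ⟨Kc, hKc, hKs, hK⟩ := hsupp
    intro x hx
    by_cases hxK : x ∈ Kc
    · have hxS := (hKs hxK).2
      have h1 : ContinuousAt (S.indicator w) x := by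
        refine (hwS.continuousAt (hS.1.mem_nhds hxS)).congr ?_
        filter_upwards [hS.1.mem_nhds hxS] with y hy
        rw [indicator_of_mem hy]
      exact (hη.continuousAt.mul h1).continuousWithinAt
    · have h2 : ∀ᶠ y in 𝓝[sphere 0 1] x, φ y = 0 := by
        filter_upwards [self_mem_nhdsWithin,
          mem_nhdsWithin_of_mem_nhds (hKc.isClosed.isOpen_compl.mem_nhds hxK)] with y hy hyK
        have : η y = 0 := by
          by_contra h
          exact hyK (hK y hy h)
        simp [hφ, this]
      have h3 : φ x = 0 := by
        have : η x = 0 := by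
          by_contra h
          exact hxK (hK x hx h)
        simp [hφ, this]
      exact continuousWithinAt_const.congr_of_eventuallyEq h2 h3
  have hφ0 : ∫ x in sphere (0 : Euc n) 1, φ x ∂μH[(n : ℝ) - 1] = 0 := by
    rw [← hmean, ← setIntegral_indicator hSm]
    refine integral_congr_ae (Filter.Eventually.of_forall fun x => ?_)
    by_cases hx : x ∈ S <;> simp [hφ, hx]
  have key := aux_prop hα hfin hpos φ hφc hφ0
  have hsm : MeasurableSet (sphere (0 : Euc n) 1) := isClosed_sphere.measurableSet
  have hbm : MeasurableSet (ball (0 : Euc n) 1) := isOpen_ball.measurableSet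
  have hdm : Measurable (fun x : Euc n => ENNReal.ofReal (‖x‖ ^ α)) := by fun_prop
  rw [← integral_indicator hsm, nuA, integral_map rp_meas.aemeasurable
    (hφm.indicator hsm).aestronglyMeasurable,
    integral_withDensity_eq_integral_toReal_smul hdm (by simp)] at key
  rw [mS, restrict_withDensity hbm, Measure.restrict_restrict hbm]
  have hwm' : AEMeasurable (fun x => ENNReal.ofReal (w x)) (volume.restrict (ball 0 1 ∩ S)) :=
    ((hwS.mono inter_subset_right).aemeasurable (hbm.inter hSm)).ennreal_ofReal
  rw [integral_withDensity_eq_integral_toReal_smul₀ hwm' (by simp)]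
  rw [← key]
  have hset : ball (0 : Euc n) 1 ∩ S = (ball 0 1 \ {0}) ∩ S := by
    ext x
    constructor
    · rintro ⟨h1, h2⟩
      exact ⟨⟨h1, fun h => h0 (h ▸ h2)⟩, h2⟩
    · rintro ⟨h1, h2⟩
      exact ⟨h1.1, h2⟩
  rw [hset, ← setIntegral_indicator hSm]
  refine setIntegral_congr_fun (hbm.diff (measurableSet_singleton 0)) fun x hx => ?_
  have hx0 : x ≠ 0 := hx.2
  have hxn : 0 < ‖x‖ := norm_pos_iff.2 hx0
  have hsp : rp x ∈ sphere (0 : Euc n) 1 := by simpa using rp_norm hx0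
  rw [indicator_of_mem hsp]
  by_cases hxS : x ∈ S
  · have hrS := (rp_mem_iff hS hx0).2 hxS
    have hwx : w x = ‖x‖ ^ α * w (rp x) := by
      rw [← hw.2.2.2.1 _ (subset_closure hrS) _ hxn, rp_eq hx0]
    simp only [indicator_of_mem hxS, hφ, indicator_of_mem hrS, smul_eq_mul]
    rw [ENNReal.toReal_ofReal (w_pos hα hS hw hxS).le, ENNReal.toReal_ofReal (by positivity), hwx]
    ring
  · have hrS : rp x ∉ S := fun h => hxS ((rp_mem_iff hS hx0).1 h)
    simp [indicator_of_notMem hxS, hφ, indicator_of_notMem hrS]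

lemma vol_lower {n : ℕ} (hn : 1 ≤ n) {α : ℝ} (hα : 0 < α)
    {S : Set (Euc n)} (hS : IsOpenConvexCone S)
    {w : Euc n → ℝ} (hw : IsAdmissibleWeight S α w) {η : Euc n → ℝ} (hη : Continuous η)
    {N : ℝ} (hN : ∀ x, ‖x‖ ≤ 1 → |η x| ≤ N)
    (hz : ∫ x in ball (0 : Euc n) 1, η (rp x) ∂(mS S w) = 0)
    {ε : ℝ} (hε : 0 < ε) (h1 : ε * N + ε ^ 2 ≤ 1 / 2)
    (h2 : ((n : ℝ) + α) * (ε * N + ε ^ 2) ≤ 1) :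
    ENNReal.ofReal ((mS S w (ball 0 1)).toReal * (1 - ((n : ℝ) + α) * ε ^ 2)) ≤
      mS S w {x | ‖x‖ < 1 + ε * η (rp x)} := by
  set D : ℝ := (n : ℝ) + α with hD
  have hn' : (1 : ℝ) ≤ n := by exact_mod_cast hn
  have hD1 : 1 ≤ D := by linarith
  have hηr : Measurable (fun x : Euc n => η (rp x)) := hη.measurable.comp rp_meas
  set E' : Set (Euc n) := {x | ‖x‖ < 1 + ε * η (rp x)} with hE'
  have hE'm : MeasurableSet E' :=
    measurableSet_lt measurable_norm (measurable_const.add (measurable_const.mul hηr))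
  set k : Euc n → ℤ := fun x => ⌊η (rp x) / ε⌋ with hk
  have hkm : Measurable k := Int.measurable_floor.comp (hηr.div_const ε)
  have hkN : ∀ x, ε * (k x : ℝ) ≤ η (rp x) ∧ η (rp x) - ε ≤ ε * (k x : ℝ) := by
    intro x
    have a1 : (k x : ℝ) ≤ η (rp x) / ε := Int.floor_le _
    have a2 : η (rp x) / ε < k x + 1 := Int.lt_floor_add_one _
    rw [le_div_iff₀ hε] at a1
    rw [div_lt_iff₀ hε] at a2
    constructor <;> nlinarith
  have hlow : ∀ x, -(ε * N + ε ^ 2) ≤ ε ^ 2 * (k x : ℝ) := by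
    intro x
    have a1 := (hkN x).2
    have a2 := abs_le.1 (hN _ (norm_rp_le x))
    have a3 := mul_le_mul_of_nonneg_left a1 hε.le
    have a4 := mul_le_mul_of_nonneg_left a2.1 hε.le
    nlinarith
  have hAm : ∀ j : ℤ, MeasurableSet (k ⁻¹' {j}) := fun j => hkm (measurableSet_singleton j)
  have hdisj : Pairwise (Function.onFun Disjoint fun j : ℤ => k ⁻¹' {j}) := by
    intro i j hij
    exact Disjoint.preimage _ (by simpa using hij)
  have hun : ⋃ j : ℤ, k ⁻¹' {j} = univ := by
    ext x; simp
  have hbm : MeasurableSet (ball (0 : Euc n) 1) := isOpen_ball.measurableSet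
  have hsplit : ∀ μ : Measure (Euc n), ∀ g : Euc n → ℝ≥0∞,
      ∫⁻ x, g x ∂μ = ∑' j : ℤ, ∫⁻ x in k ⁻¹' {j}, g x ∂μ := by
    intro μ g
    rw [← lintegral_iUnion hAm hdisj, hun, Measure.restrict_univ]
  have hfinb : mS S w (ball 0 1) ≠ ∞ := mS_ball_fin hw 1
  have step1 : ∫⁻ x in ball 0 1, ENNReal.ofReal ((1 + ε ^ 2 * (k x : ℝ)) ^ D) ∂(mS S w) ≤
      mS S w E' := by
    have e1 : mS S w E' = ∫⁻ x in E', 1 ∂(mS S w) := by rw [setLIntegral_one]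
    rw [e1, hsplit, hsplit]
    refine ENNReal.tsum_le_tsum fun j => ?_
    rw [Measure.restrict_restrict (hAm j), Measure.restrict_restrict (hAm j), setLIntegral_one]
    rcases (k ⁻¹' {j}).eq_empty_or_nonempty with he | ⟨x0, hx0⟩
    · simp [he]
    · have hx0 : k x0 = j := hx0
      have hjl := hlow x0
      rw [hx0] at hjl
      have hjp : 0 < 1 + ε ^ 2 * (j : ℝ) := by linarith
      have e2 : ∫⁻ x in k ⁻¹' {j} ∩ ball 0 1, ENNReal.ofReal ((1 + ε ^ 2 * (k x : ℝ)) ^ D) ∂(mS S w)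
          = ENNReal.ofReal ((1 + ε ^ 2 * (j : ℝ)) ^ D) * mS S w (k ⁻¹' {j} ∩ ball 0 1) := by
        rw [← setLIntegral_const]
        refine setLIntegral_congr_fun ((hAm j).inter hbm) fun x hx => ?_
        have : k x = j := hx.1
        simp only [this]
      rw [e2, ← mS_scale hS hw (hAm j) ?_ hjp]
      · refine measure_mono fun x hx => ⟨hx.1, ?_⟩
        have hxj : k x = j := hx.1
        have h3 := hx.2
        rw [mem_ball_zero_iff] at h3
        change ‖x‖ < 1 + ε * η (rp x)
        have h4 := mul_le_mul_of_nonneg_left (hkN x).1 hε.le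
        rw [hxj] at h4
        nlinarith
      · intro x t ht
        simp only [mem_preimage, hk, rp_smul ht]
  refine le_trans ?_ step1
  have hfm : IsFiniteMeasure ((mS S w).restrict (ball 0 1)) := ⟨by simpa using hfinb.lt_top⟩
  have iη : Integrable (fun x => η (rp x)) ((mS S w).restrict (ball 0 1)) := by
    refine Integrable.of_bound hηr.aestronglyMeasurable N
      (Filter.Eventually.of_forall fun x => ?_)
    exact hN _ (norm_rp_le x)
  have hint : ∫ x in ball 0 1, ((1 - D * ε ^ 2) + D * ε * η (rp x)) ∂(mS S w) =
      (mS S w (ball 0 1)).toReal * (1 - D * ε ^ 2) := by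
    rw [integral_add (integrable_const _) (iη.const_mul _), integral_const_mul, hz, mul_zero,
      add_zero, integral_const, smul_eq_mul, measureReal_def, Measure.restrict_apply_univ]
  rw [← hint, ofReal_integral_eq_lintegral_ofReal]
  · refine lintegral_mono fun x => ENNReal.ofReal_le_ofReal ?_
    have b1 := one_add_mul_self_le_rpow_one_add (s := ε ^ 2 * (k x : ℝ))
      (by linarith [hlow x]) hD1
    refine le_trans ?_ b1
    have b2 := mul_le_mul_of_nonneg_left (hkN x).2 (show 0 ≤ D * ε by positivity)
    nlinarith
  · exact (integrable_const _).add (iη.const_mul _)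
  · refine Filter.Eventually.of_forall fun x => ?_
    have a2 := abs_le.1 (hN _ (norm_rp_le x))
    have b2 := mul_le_mul_of_nonneg_left a2.1 (show 0 ≤ D * ε by positivity)
    change 0 ≤ (1 - D * ε ^ 2) + D * ε * η (rp x)
    nlinarith

lemma scalar_ineq {d t : ℝ} (hd : 0 ≤ d) (ht : |t| ≤ 1 / 2) (hdt : |d * t| ≤ 1) :
    (1 + t) ^ d ≤ 1 + d * t + (d * t) ^ 2 := by
  have h := abs_le.1 ht
  have hp : 0 < 1 + t := by linarith
  have h1 : (1 + t) ^ d ≤ Real.exp (d * t) := by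
    rw [Real.rpow_def_of_pos hp]
    apply Real.exp_le_exp.2
    have := Real.log_le_sub_one_of_pos hp
    nlinarith
  have h2 := abs_le.1 (Real.abs_exp_sub_one_sub_id_le hdt)
  linarith [h2.2]

lemma frontier_sub {n : ℕ} {S : Set (Euc n)} (hS : IsOpenConvexCone S) (h0 : (0 : Euc n) ∉ S)
    {η : Euc n → ℝ} (hη : Continuous η) (ε : ℝ) :
    frontier ({x : Euc n | ‖x‖ < 1 + ε * η (rp x)} ∩ S) ∩ S ⊆
      (fun x => (1 + ε * η x) • x) '' (sphere 0 1 ∩ S) := by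
  rw [frontier_inter_open_inter hS.1]
  rintro x ⟨hx, hxS⟩
  have hx0 : x ≠ 0 := fun h => h0 (h ▸ hxS)
  have hc : ContinuousAt (fun y => 1 + ε * η (rp y) - ‖y‖) x := by
    have h2 : ContinuousAt (fun y => η (rp y)) x :=
      ContinuousAt.comp (g := η) hη.continuousAt (rp_continuousAt hx0)
    exact (continuousAt_const.add (continuousAt_const.mul h2)).sub continuousAt_id.norm
  have heq : ‖x‖ = 1 + ε * η (rp x) := by
    rcases lt_trichotomy (‖x‖) (1 + ε * η (rp x)) with h | h | h
    · exfalso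
      have h3 : ∀ᶠ y in 𝓝 x, 0 < 1 + ε * η (rp y) - ‖y‖ :=
        hc.eventually (lt_mem_nhds (by simpa using h))
      refine hx.2 (mem_interior_iff_mem_nhds.2 ?_)
      filter_upwards [h3] with y hy
      linarith
    · exact h
    · exfalso
      have h3 : ∀ᶠ y in 𝓝 x, 1 + ε * η (rp y) - ‖y‖ < 0 :=
        hc.eventually (gt_mem_nhds (by simpa using h))
      obtain ⟨y, hy1, hy2⟩ := mem_closure_iff_nhds.1 hx.1 _ h3
      have hy1 : 1 + ε * η (rp y) - ‖y‖ < 0 := hy1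
      have hy2 : ‖y‖ < 1 + ε * η (rp y) := hy2
      linarith
  refine ⟨rp x, ⟨by simpa using rp_norm hx0, (rp_mem_iff hS hx0).2 hxS⟩, ?_⟩
  simp only
  rw [← heq, rp_eq hx0]

lemma graph_lip {n : ℕ} {η : Euc n → ℝ} {L ε m : ℝ} {A : Set (Euc n)} (hA : A ⊆ sphere 0 1)
    (hL : ∀ x ∈ A, ∀ y ∈ A, |η x - η y| ≤ L * ‖x - y‖) (hε : 0 < ε) (hm : 1 / 2 ≤ m)
    (hf : ∀ x ∈ A, m ≤ 1 + ε * η x ∧ 1 + ε * η x ≤ m + ε ^ 2) :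
    LipschitzOnWith (Real.toNNReal (m + ε ^ 2 * (1 + L ^ 2))) (fun x => (1 + ε * η x) • x) A := by
  have hK : 0 ≤ m + ε ^ 2 * (1 + L ^ 2) := by positivity
  refine LipschitzOnWith.of_dist_le_mul fun x hx y hy => ?_
  rw [Real.coe_toNNReal _ hK, dist_eq_norm, dist_eq_norm]
  refine abs_le_of_sq_le_sq' ?_ (by positivity) |>.2
  have hx1 : ‖x‖ = 1 := by simpa using hA hx
  have hy1 : ‖y‖ = 1 := by simpa using hA hy
  obtain ⟨fx1, fx2⟩ := hf x hx
  obtain ⟨fy1, fy2⟩ := hf y hy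
  have hfd : (1 + ε * η x) - (1 + ε * η y) = ε * (η x - η y) := by ring
  have hl := hL x hx y hy
  set f := 1 + ε * η x
  set g := 1 + ε * η y
  have e1 : ‖f • x - g • y‖ ^ 2 = (f - g) ^ 2 + f * g * ‖x - y‖ ^ 2 := by
    rw [norm_sub_sq_real, norm_sub_sq_real, norm_smul, norm_smul, hx1, hy1, real_inner_smul_left,
      real_inner_smul_right, mul_one, mul_one, Real.norm_eq_abs, Real.norm_eq_abs, sq_abs, sq_abs]
    ring
  rw [e1, mul_pow, hfd, mul_pow]
  have e2 : (η x - η y) ^ 2 ≤ L ^ 2 * ‖x - y‖ ^ 2 := by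
    rw [← mul_pow, ← sq_abs]
    exact pow_le_pow_left₀ (abs_nonneg _) hl 2
  have e3 : f * g ≤ (m + ε ^ 2) ^ 2 := by
    rw [sq (m + ε ^ 2)]
    exact mul_le_mul fx2 fy2 (by linarith) (by positivity)
  have e4 : (m + ε ^ 2) ^ 2 + ε ^ 2 * L ^ 2 ≤ (m + ε ^ 2 * (1 + L ^ 2)) ^ 2 := by
    have : (m + ε ^ 2 * (1 + L ^ 2)) ^ 2 = (m + ε ^ 2) ^ 2 + 2 * (m + ε ^ 2) * (ε ^ 2 * L ^ 2)
      + (ε ^ 2 * L ^ 2) ^ 2 := by ring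
    rw [this]
    have h5 : 1 ≤ 2 * (m + ε ^ 2) := by nlinarith [sq_nonneg ε]
    have h6 : 0 ≤ ε ^ 2 * L ^ 2 := by positivity
    nlinarith [sq_nonneg (ε ^ 2 * L ^ 2)]
  calc ε ^ 2 * (η x - η y) ^ 2 + f * g * ‖x - y‖ ^ 2
      ≤ ε ^ 2 * (L ^ 2 * ‖x - y‖ ^ 2) + (m + ε ^ 2) ^ 2 * ‖x - y‖ ^ 2 := by gcongr
    _ = ((m + ε ^ 2) ^ 2 + ε ^ 2 * L ^ 2) * ‖x - y‖ ^ 2 := by ring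
    _ ≤ _ := by gcongr

set_option maxHeartbeats 1000000 in
lemma per_upper {n : ℕ} (hn : 1 ≤ n) {α : ℝ} (hα : 0 < α)
    {S : Set (Euc n)} (hS : IsOpenConvexCone S) (h0 : (0 : Euc n) ∉ S)
    {w : Euc n → ℝ} (hw : IsAdmissibleWeight S α w) {η : Euc n → ℝ} (hη : Continuous η)
    {N L : ℝ} (hN : ∀ x, ‖x‖ ≤ 1 → |η x| ≤ N)
    (hL : ∀ x ∈ sphere (0 : Euc n) 1, ∀ y ∈ sphere (0 : Euc n) 1, |η x - η y| ≤ L * ‖x - y‖)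
    (hmean : (∫ x in sphere (0 : Euc n) 1 ∩ S, η x * w x ∂(μH[(n : ℝ) - 1])) = 0)
    (hfin : (∫⁻ x in sphere (0 : Euc n) 1 ∩ S, ENNReal.ofReal (w x) ∂(μH[(n : ℝ) - 1])) ≠ ∞)
    {ε N1 : ℝ} (hε : 0 < ε) (hε1 : ε ≤ 1) (hN1 : N1 = N + (1 + L ^ 2)) (h1 : ε * N1 ≤ 1 / 2)
    (h2 : ((n : ℝ) - 1 + α) * (ε * N1) ≤ 1) :
    wPer S w ({x : Euc n | ‖x‖ < 1 + ε * η (rp x)} ∩ S) ≤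
      ENNReal.ofReal ((∫⁻ x in sphere (0 : Euc n) 1 ∩ S, ENNReal.ofReal (w x)
        ∂(μH[(n : ℝ) - 1])).toReal * (1 + (((n : ℝ) - 1 + α) * (1 + L ^ 2) +
          (((n : ℝ) - 1 + α) * N1) ^ 2) * ε ^ 2)) := by
  have hn' : (1 : ℝ) ≤ n := by exact_mod_cast hn
  have hn0 : 0 ≤ (n : ℝ) - 1 := by linarith
  set d : ℝ := (n : ℝ) - 1 + α with hd
  have hdp : 0 < d := by linarith
  have hSm := hS.1.measurableSet
  have hcm : MeasurableSet (sphere (0 : Euc n) 1 ∩ S) := isClosed_sphere.measurableSet.inter hSm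
  set cap := sphere (0 : Euc n) 1 ∩ S with hcap
  have hcapn : ∀ x ∈ cap, ‖x‖ = 1 := fun x hx => by simpa using hx.1
  have hNN : 0 ≤ N := (abs_nonneg _).trans (hN 0 (by simp))
  set F : Euc n → Euc n := fun x => (1 + ε * η x) • x with hF
  have hFm : Measurable F := by
    have : Continuous F := by fun_prop
    exact this.measurable
  set C2 := d * (1 + L ^ 2) + (d * N1) ^ 2 with hC2
  have hgm : Measurable (fun x => ENNReal.ofReal (S.indicator w x)) :=
    (ind_meas hS hw).ennreal_ofReal
  set g : Euc n → ℝ≥0∞ := fun x => ENNReal.ofReal (S.indicator w x) with hg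
  set k : Euc n → ℤ := fun x => ⌊η x / ε⌋ with hk
  have hkm : Measurable k := Int.measurable_floor.comp (hη.measurable.div_const ε)
  have hkN : ∀ x, ε * (k x : ℝ) ≤ η x ∧ η x - ε ≤ ε * (k x : ℝ) := by
    intro x
    have a1 : (k x : ℝ) ≤ η x / ε := Int.floor_le _
    have a2 : η x / ε < k x + 1 := Int.lt_floor_add_one _
    rw [le_div_iff₀ hε] at a1
    rw [div_lt_iff₀ hε] at a2
    constructor <;> nlinarith
  have hAm : ∀ j : ℤ, MeasurableSet (cap ∩ k ⁻¹' {j}) :=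
    fun j => hcm.inter (hkm (measurableSet_singleton j))
  have hdisj : Pairwise (Function.onFun Disjoint fun j : ℤ => cap ∩ k ⁻¹' {j}) := by
    intro i j hij
    exact (Disjoint.preimage k (by simpa using hij)).mono inter_subset_right inter_subset_right
  have hun : ⋃ j : ℤ, cap ∩ k ⁻¹' {j} = cap := by
    ext x; simp
  have hεN1 : ε * N + ε ^ 2 * (1 + L ^ 2) ≤ ε * N1 := by
    rw [hN1]
    have : ε ^ 2 * (1 + L ^ 2) ≤ ε * (1 + L ^ 2) := by
      apply mul_le_mul_of_nonneg_right _ (by positivity)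
      nlinarith
    linarith
  have hεη : ∀ x ∈ cap, |ε * η x| ≤ ε * N := by
    intro x hx
    rw [abs_mul, abs_of_pos hε]
    exact mul_le_mul_of_nonneg_left (hN x (hcapn x hx).le) hε.le
  have hpiece : ∀ j : ℤ, ∫⁻ x in F '' (cap ∩ k ⁻¹' {j}), g x ∂μH[(n : ℝ) - 1] ≤
      ∫⁻ x in cap ∩ k ⁻¹' {j}, ENNReal.ofReal ((1 + d * ε * η x + C2 * ε ^ 2) * w x)
        ∂μH[(n : ℝ) - 1] := by
    intro j
    rcases (cap ∩ k ⁻¹' {j}).eq_empty_or_nonempty with he | ⟨x0, hx0⟩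
    · simp [he]
    set m : ℝ := 1 + ε ^ 2 * (j : ℝ) with hm
    have hf : ∀ x ∈ cap ∩ k ⁻¹' {j}, m ≤ 1 + ε * η x ∧ 1 + ε * η x ≤ m + ε ^ 2 := by
      rintro x ⟨-, hx⟩
      have hx : k x = j := hx
      have a := hkN x
      rw [hx] at a
      have a1 := mul_le_mul_of_nonneg_left a.1 hε.le
      have a2 := mul_le_mul_of_nonneg_left a.2 hε.le
      constructor <;> nlinarith
    have hm2 : 1 / 2 ≤ m := by
      have a1 := (hf x0 hx0).2
      have a2 := abs_le.1 (hεη x0 hx0.1)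
      nlinarith [sq_nonneg (ε * L)]
    have hlip := graph_lip (A := cap ∩ k ⁻¹' {j}) (η := η) (L := L) (ε := ε) (m := m)
      (fun x hx => hx.1.1) (fun x hx y hy => hL x hx.1.1 y hy.1.1) hε hm2 hf
    refine (aux_lip_lintegral hn0 hlip hFm g hgm).trans ?_
    rw [← lintegral_const_mul' _ _ (by
      exact ENNReal.rpow_ne_top_of_nonneg hn0 ENNReal.coe_ne_top)]
    refine setLIntegral_mono' (hAm j) fun x hx => ?_
    have hxS : x ∈ S := hx.1.2
    have hfx := hf x hx
    have hfp : 0 < 1 + ε * η x := by linarith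
    have hFS : F x ∈ S := hS.2.2 _ hxS _ hfp
    have hwp := w_pos hα hS hw hxS
    have hK : 0 ≤ m + ε ^ 2 * (1 + L ^ 2) := by positivity
    have hgF : g (F x) = ENNReal.ofReal ((1 + ε * η x) ^ α * w x) := by
      rw [hg]
      simp only [indicator_of_mem hFS]
      rw [hF]
      simp only
      rw [hw.2.2.2.1 x (subset_closure hxS) _ hfp]
    have hKe : ((Real.toNNReal (m + ε ^ 2 * (1 + L ^ 2)) : ℝ≥0) : ℝ≥0∞) ^ ((n : ℝ) - 1) =
        ENNReal.ofReal ((m + ε ^ 2 * (1 + L ^ 2)) ^ ((n : ℝ) - 1)) :=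
      ENNReal.ofReal_rpow_of_nonneg hK hn0
    rw [hgF, hKe, ← ENNReal.ofReal_mul (by positivity)]
    apply ENNReal.ofReal_le_ofReal
    rw [← mul_assoc]
    refine mul_le_mul_of_nonneg_right ?_ hwp.le
    set t := ε * η x + ε ^ 2 * (1 + L ^ 2) with ht
    have ht1 : |t| ≤ ε * N1 := by
      refine (abs_add_le _ _).trans (le_trans ?_ hεN1)
      rw [abs_of_nonneg (show 0 ≤ ε ^ 2 * (1 + L ^ 2) by positivity)]
      linarith [hεη x hx.1]
    have htp : 0 < 1 + t := by
      have := abs_le.1 ht1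
      linarith
    have c1 : (m + ε ^ 2 * (1 + L ^ 2)) ^ ((n : ℝ) - 1) ≤ (1 + t) ^ ((n : ℝ) - 1) :=
      Real.rpow_le_rpow hK (by rw [ht]; linarith [hfx.1]) hn0
    have c2 : (1 + ε * η x) ^ α ≤ (1 + t) ^ α :=
      Real.rpow_le_rpow hfp.le (by rw [ht]; nlinarith [sq_nonneg ε, sq_nonneg (ε * L)]) hα.le
    have hdt : |d * t| ≤ d * (ε * N1) := by
      rw [abs_mul, abs_of_pos hdp]
      exact mul_le_mul_of_nonneg_left ht1 hdp.le
    calc _ ≤ (1 + t) ^ ((n : ℝ) - 1) * (1 + t) ^ α :=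
          mul_le_mul c1 c2 (by positivity) (by positivity)
      _ = (1 + t) ^ d := by rw [hd, Real.rpow_add htp]
      _ ≤ 1 + d * t + (d * t) ^ 2 := scalar_ineq hdp.le (ht1.trans h1) (hdt.trans h2)
      _ ≤ 1 + d * t + (d * (ε * N1)) ^ 2 := by
          rw [← sq_abs (d * t)]
          gcongr
      _ = _ := by rw [ht, hC2]; ring
  have hup : wPer S w ({x : Euc n | ‖x‖ < 1 + ε * η (rp x)} ∩ S) ≤
      ∫⁻ x in cap, ENNReal.ofReal ((1 + d * ε * η x + C2 * ε ^ 2) * w x) ∂μH[(n : ℝ) - 1] := by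
    unfold wPer
    have hfm : MeasurableSet (frontier ({x : Euc n | ‖x‖ < 1 + ε * η (rp x)} ∩ S) ∩ S) :=
      isClosed_frontier.measurableSet.inter hSm
    calc _ = ∫⁻ x in frontier ({x : Euc n | ‖x‖ < 1 + ε * η (rp x)} ∩ S) ∩ S, g x
            ∂μH[(n : ℝ) - 1] := by
          refine setLIntegral_congr_fun hfm fun x hx => ?_
          rw [hg]; simp only [indicator_of_mem hx.2]
      _ ≤ ∫⁻ x in F '' cap, g x ∂μH[(n : ℝ) - 1] :=
          lintegral_mono_set (frontier_sub hS h0 hη ε)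
      _ = ∫⁻ x in ⋃ j : ℤ, F '' (cap ∩ k ⁻¹' {j}), g x ∂μH[(n : ℝ) - 1] := by
          rw [← image_iUnion, hun]
      _ ≤ ∑' j : ℤ, ∫⁻ x in F '' (cap ∩ k ⁻¹' {j}), g x ∂μH[(n : ℝ) - 1] :=
          lintegral_iUnion_le _ _
      _ ≤ ∑' j : ℤ, ∫⁻ x in cap ∩ k ⁻¹' {j},
            ENNReal.ofReal ((1 + d * ε * η x + C2 * ε ^ 2) * w x) ∂μH[(n : ℝ) - 1] :=
          ENNReal.tsum_le_tsum hpiece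
      _ = _ := by rw [← lintegral_iUnion hAm hdisj, hun]
  refine hup.trans (le_of_eq ?_)
  have hwc : AEStronglyMeasurable w ((μH[(n : ℝ) - 1] : Measure (Euc n)).restrict cap) :=
    (hw.1.mono (inter_subset_right.trans subset_closure)).aestronglyMeasurable hcm
  have hwnn : ∀ᵐ x ∂((μH[(n : ℝ) - 1] : Measure (Euc n)).restrict cap), 0 ≤ w x := by
    rw [ae_restrict_iff' hcm]
    exact Filter.Eventually.of_forall fun x hx => (w_pos hα hS hw hx.2).le
  have iw : Integrable w ((μH[(n : ℝ) - 1] : Measure (Euc n)).restrict cap) := by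
    refine ⟨hwc, ?_⟩
    rw [hasFiniteIntegral_iff_ofReal hwnn]
    exact hfin.lt_top
  have iηw : Integrable (fun x => η x * w x) ((μH[(n : ℝ) - 1] : Measure (Euc n)).restrict cap) := by
    refine iw.bdd_mul (c := N) hη.measurable.aestronglyMeasurable ?_
    rw [ae_restrict_iff' hcm]
    exact Filter.Eventually.of_forall fun x hx => hN x (hcapn x hx).le
  have hfun : (fun x => (1 + d * ε * η x + C2 * ε ^ 2) * w x) =
      fun x => (1 + C2 * ε ^ 2) * w x + (d * ε) * (η x * w x) := by
    ext x; ring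
  rw [← ofReal_integral_eq_lintegral_ofReal]
  · rw [hfun, integral_add (iw.const_mul _) (iηw.const_mul _), integral_const_mul,
      integral_const_mul, hmean, mul_zero, add_zero, integral_eq_lintegral_of_nonneg_ae hwnn hwc]
    congr 1; ring
  · rw [hfun]; exact (iw.const_mul _).add (iηw.const_mul _)
  · rw [Filter.EventuallyLE, ae_restrict_iff' hcm]
    refine Filter.Eventually.of_forall fun x hx => ?_
    have hwp := w_pos hα hS hw hx.2
    have a := abs_le.1 (hεη x hx)
    have b : ε * N ≤ ε * N1 := by nlinarith [sq_nonneg ε, sq_nonneg (ε * L)]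
    have c := mul_le_mul_of_nonneg_left (show -(ε * N1) ≤ ε * η x by linarith) hdp.le
    have e : 0 ≤ C2 * ε ^ 2 := by positivity
    refine mul_nonneg ?_ hwp.le
    nlinarith

set_option maxHeartbeats 2000000 in
lemma deficit_case {n : ℕ} (hn : 1 ≤ n) {α : ℝ} (hα : 0 < α)
    {S : Set (Euc n)} (hS : IsOpenConvexCone S) (h0 : (0 : Euc n) ∉ S)
    {w : Euc n → ℝ} (hw : IsAdmissibleWeight S α w) {η : Euc n → ℝ} (hη : Continuous η)
    {N L : ℝ} (hN : ∀ x, ‖x‖ ≤ 1 → |η x| ≤ N)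
    (hL : ∀ x ∈ sphere (0 : Euc n) 1, ∀ y ∈ sphere (0 : Euc n) 1, |η x - η y| ≤ L * ‖x - y‖)
    (hsupp : ∃ Kc : Set (Euc n), IsCompact Kc ∧ Kc ⊆ sphere (0 : Euc n) 1 ∩ S ∧
      ∀ x ∈ sphere (0 : Euc n) 1, η x ≠ 0 → x ∈ Kc)
    (hne : ∃ x ∈ sphere (0 : Euc n) 1 ∩ S, η x ≠ 0)
    (hmean : (∫ x in sphere (0 : Euc n) 1 ∩ S, η x * w x ∂(μH[(n : ℝ) - 1])) = 0)
    {N1 C2 : ℝ} (hN1 : N1 = N + (1 + L ^ 2))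
    (hC2 : C2 = ((n : ℝ) - 1 + α) * (1 + L ^ 2) + (((n : ℝ) - 1 + α) * N1) ^ 2)
    {ε : ℝ} (hε : 0 < ε) (hε1 : ε ≤ 1)
    (h2 : 2 * ((n : ℝ) + α) * (ε * N1) ≤ 1) :
    wDeficit S α w (radSet S (fun θ => 1 + ε * η θ)) ≤
      (C2 + 2 * ((n : ℝ) + α) + 2 * C2 * ((n : ℝ) + α)) * ε ^ 2 := by
  have hn' : (1 : ℝ) ≤ n := by exact_mod_cast hn
  have hSm := hS.1.measurableSet
  have hNN : 0 ≤ N := (abs_nonneg _).trans (hN 0 (by simp))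
  have hN1p : 1 ≤ N1 := by rw [hN1]; nlinarith [sq_nonneg L]
  have hC2p : 0 ≤ C2 := by
    rw [hC2]
    have : 0 ≤ (n : ℝ) - 1 + α := by linarith
    positivity
  set D : ℝ := (n : ℝ) + α with hD
  have hD1 : 1 ≤ D := by linarith
  have hperB : wPer S w (ball (0 : Euc n) 1 ∩ S) =
      ∫⁻ x in sphere (0 : Euc n) 1 ∩ S, ENNReal.ofReal (w x) ∂(μH[(n : ℝ) - 1]) := by
    unfold wPer
    rw [frontier_inter_open_inter hS.1, frontier_ball _ one_ne_zero]
  set P := wPer S w (ball (0 : Euc n) 1 ∩ S) with hP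
  unfold wDeficit
  by_cases hPz : P.toReal = 0
  · have : isoQuot S α w (ball (0 : Euc n) 1 ∩ S) = 0 := by
      unfold isoQuot
      rw [← hP, hPz, zero_div]
    rw [this, div_zero]
    have : 0 ≤ (C2 + 2 * D + 2 * C2 * D) * ε ^ 2 := by positivity
    linarith
  have hPp : 0 < P.toReal := lt_of_le_of_ne ENNReal.toReal_nonneg (Ne.symm hPz)
  have hPtop : P ≠ ∞ := fun h => hPz (by rw [h]; simp)
  have hP0 : P ≠ 0 := fun h => hPz (by rw [h]; simp)
  obtain ⟨x, hx, -⟩ := hne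
  have hx1 : ‖x‖ = 1 := by simpa using hx.1
  have hpos : (μH[(n : ℝ) - 1] : Measure (Euc n)) (sphere 0 1) ≠ 0 := by
    intro h
    apply hP0
    rw [hperB]
    exact setLIntegral_measure_zero _ _ (measure_mono_null inter_subset_left h)
  have hfin : (μH[(n : ℝ) - 1] : Measure (Euc n)) (sphere 0 1) ≠ ∞ := by
    have hwx := w_pos hα hS hw hx.2
    have hc : ContinuousAt w x := (hw.1.mono subset_closure).continuousAt (hS.1.mem_nhds hx.2)
    have hev : ∀ᶠ y in 𝓝 x, w x / 2 < w y ∧ y ∈ S :=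
      (hc.eventually (lt_mem_nhds (by linarith))).and (hS.1.mem_nhds hx.2)
    obtain ⟨r, hr, hball⟩ := Metric.eventually_nhds_iff_ball.1 hev
    refine aux_sphere_fin hx1 hr ?_
    intro htop
    apply hPtop
    rw [hperB, eq_top_iff]
    have hbm : MeasurableSet (ball x r ∩ sphere (0 : Euc n) 1) :=
      isOpen_ball.measurableSet.inter isClosed_sphere.measurableSet
    calc (∞ : ℝ≥0∞) = ENNReal.ofReal (w x / 2) * μH[(n : ℝ) - 1] (ball x r ∩ sphere (0 : Euc n) 1) := by
          rw [htop, ENNReal.mul_top]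
          simpa using hwx
      _ = ∫⁻ y in ball x r ∩ sphere (0 : Euc n) 1, ENNReal.ofReal (w x / 2) ∂μH[(n : ℝ) - 1] := by
          rw [setLIntegral_const]
      _ ≤ ∫⁻ y in ball x r ∩ sphere (0 : Euc n) 1, ENNReal.ofReal (w y) ∂μH[(n : ℝ) - 1] :=
          setLIntegral_mono' hbm fun y hy => ENNReal.ofReal_le_ofReal (hball y hy.1).1.le
      _ ≤ _ := lintegral_mono_set (show ball x r ∩ sphere (0 : Euc n) 1 ⊆ sphere 0 1 ∩ S from
          fun y hy => ⟨hy.2, (hball y hy.1).2⟩)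
  have hz := mean_transfer hα hS h0 hw hη hsupp hmean hfin hpos
  have hεN : ε * N + ε ^ 2 ≤ ε * N1 := by
    rw [hN1]; nlinarith [mul_nonneg hε.le (sq_nonneg L)]
  have hεN1 : 0 < ε * N1 := by positivity
  have hDε : 2 * D * ε ^ 2 ≤ 1 := by
    have : ε ^ 2 ≤ ε * N1 := by nlinarith
    nlinarith
  have hh : ε * N1 ≤ 1 / 2 := by nlinarith
  have hvol := vol_lower hn hα hS hw hη hN hz hε (by linarith) (by rw [← hD]; nlinarith)
  rw [hperB] at hPtop
  have hper := per_upper hn hα hS h0 hw hη hN hL hmean hPtop hε hε1 hN1 hh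
    (by nlinarith)
  rw [← hperB, ← hC2] at hper
  rw [← hD] at hvol
  rw [radSet_eq hS h0]
  set E' : Set (Euc n) := {x | ‖x‖ < 1 + ε * η (rp x)} with hE'
  have hE'm : MeasurableSet E' :=
    measurableSet_lt measurable_norm
      (measurable_const.add (measurable_const.mul (hη.measurable.comp rp_meas)))
  have hEfin : mS S w E' ≠ ∞ := by
    refine ((measure_mono (t := ball 0 2) ?_).trans_lt (mS_ball_fin hw 2).lt_top).ne
    intro x hx
    have := abs_le.1 (hN _ (norm_rp_le x))
    have hx : ‖x‖ < 1 + ε * η (rp x) := hx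
    rw [mem_ball_zero_iff]
    nlinarith
  unfold isoQuot
  rw [wVol_eq (hE'm.inter hSm) inter_subset_right, mS_inter hSm hE'm,
    wVol_eq (isOpen_ball.measurableSet.inter hSm) inter_subset_right,
    mS_inter hSm isOpen_ball.measurableSet, ← hP, ← hD]
  set V0 := (mS S w (ball 0 1)).toReal with hV0
  set V := (mS S w E').toReal with hV
  set Q := (wPer S w (E' ∩ S)).toReal with hQ
  have hV0p : 0 < V0 := by
    refine ENNReal.toReal_pos (mS_pos hα hS hw isOpen_ball ⟨(1 / 2 : ℝ) • x, ?_,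
      hS.2.2 _ hx.2 _ (by norm_num)⟩).ne' (mS_ball_fin hw 1)
    rw [mem_ball_zero_iff, norm_smul, hx1]; norm_num
  have hVl : V0 * (1 - D * ε ^ 2) ≤ V := (ENNReal.ofReal_le_iff_le_toReal hEfin).1 hvol
  have hQu : Q ≤ P.toReal * (1 + C2 * ε ^ 2) := ENNReal.toReal_le_of_le_ofReal (by positivity) hper
  have hVp : 0 < V := lt_of_lt_of_le (mul_pos hV0p (by linarith)) hVl
  set γ := (D - 1) / D with hγ
  have hγ0 : 0 ≤ γ := div_nonneg (by linarith) (by linarith)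
  have hγ1 : γ ≤ 1 := by rw [hγ, div_le_one (by linarith)]; linarith
  have hratio : V0 / V ≤ 1 + 2 * D * ε ^ 2 := by
    rw [div_le_iff₀ hVp]
    have h3 : 1 ≤ (1 + 2 * D * ε ^ 2) * (1 - D * ε ^ 2) := by
      have : 0 ≤ D * ε ^ 2 := by positivity
      nlinarith
    calc V0 = V0 * 1 := (mul_one _).symm
      _ ≤ V0 * ((1 + 2 * D * ε ^ 2) * (1 - D * ε ^ 2)) := by gcongr
      _ = (1 + 2 * D * ε ^ 2) * (V0 * (1 - D * ε ^ 2)) := by ring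
      _ ≤ _ := by gcongr
  have hrγ : (V0 / V) ^ γ ≤ 1 + 2 * D * ε ^ 2 := by
    calc (V0 / V) ^ γ ≤ (1 + 2 * D * ε ^ 2) ^ γ :=
          Real.rpow_le_rpow (by positivity) hratio hγ0
      _ ≤ (1 + 2 * D * ε ^ 2) ^ (1 : ℝ) :=
          Real.rpow_le_rpow_of_exponent_le (by nlinarith [sq_nonneg ε]) hγ1
      _ = _ := Real.rpow_one _
  have hQr : Q / P.toReal ≤ 1 + C2 * ε ^ 2 := by
    rw [div_le_iff₀ hPp]; linarith
  have hQ0 : 0 ≤ Q := ENNReal.toReal_nonneg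
  have heq : Q / V ^ γ / (P.toReal / V0 ^ γ) = (Q / P.toReal) * (V0 / V) ^ γ := by
    rw [Real.div_rpow hV0p.le hVp.le]
    have : 0 < V ^ γ := Real.rpow_pos_of_pos hVp _
    have : 0 < V0 ^ γ := Real.rpow_pos_of_pos hV0p _
    field_simp
  rw [heq]
  have hfinal : (Q / P.toReal) * (V0 / V) ^ γ ≤ (1 + C2 * ε ^ 2) * (1 + 2 * D * ε ^ 2) :=
    mul_le_mul hQr hrγ (by positivity) (by positivity)
  have h5 : ε ^ 2 ≤ 1 := by nlinarith
  have h6 : 2 * C2 * D * ε ^ 2 * ε ^ 2 ≤ 2 * C2 * D * ε ^ 2 * 1 :=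
    mul_le_mul_of_nonneg_left h5 (by positivity)
  nlinarith

/-- Sharpness of the exponent 1/2 in the quantitative weighted isoperimetric inequality
(case `k = 0`, i.e. `Σ` contains no lines): a smooth mean-zero perturbation of the unit ball
has deficit `O(ε²)` but asymmetry `≳ ε`. -/
theorem stmt_3 {n : ℕ} (hn : 1 ≤ n) (α : ℝ) (hα : 0 < α)
    (S : Set (Euc n)) (hS : IsOpenConvexCone S)
    -- `k = 0`: `Σ` contains no lines
    (hNoLine : ∀ p v : Euc n, (∀ t : ℝ, p + t • v ∈ S) → v = 0)
    (w : Euc n → ℝ) (hw : IsAdmissibleWeight S α w)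
    (η : Euc n → ℝ) (hη : ContDiff ℝ (⊤ : ℕ∞) η)
    -- compactly supported in the open spherical cap `∂B₁ ∩ Σ`
    (hsupp : ∃ Kc : Set (Euc n), IsCompact Kc ∧ Kc ⊆ sphere (0 : Euc n) 1 ∩ S ∧
      ∀ x ∈ sphere (0 : Euc n) 1, η x ≠ 0 → x ∈ Kc)
    (hne : ∃ x ∈ sphere (0 : Euc n) 1 ∩ S, η x ≠ 0)
    (hmean : (∫ x in sphere (0 : Euc n) 1 ∩ S, η x * w x ∂(μH[(n : ℝ) - 1])) = 0) :
    ∃ ε₀ C c : ℝ, 0 < ε₀ ∧ 0 < C ∧ 0 < c ∧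
      ∀ ε : ℝ, 0 < ε → ε < ε₀ →
        wDeficit S α w (radSet S (fun θ => 1 + ε * η θ)) ≤ C * ε ^ 2 ∧
        ∀ r : ℝ, 0 < r →
          wVol w (ball (0 : Euc n) r ∩ S) = wVol w (radSet S (fun θ => 1 + ε * η θ)) →
          c * ε ≤
            (wVol w (symmDiff (radSet S (fun θ => 1 + ε * η θ))
                (ball (0 : Euc n) r ∩ S))).toReal /
              (wVol w (radSet S (fun θ => 1 + ε * η θ))).toReal := by
  have h0 := zero_notMem hn hS hNoLine
  have hηc : Continuous η := hη.continuous
  obtain ⟨N, hN⟩ := (isCompact_closedBall (0 : Euc n) 1).exists_bound_of_continuousOn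
    hηc.continuousOn
  have hN' : ∀ x, ‖x‖ ≤ 1 → |η x| ≤ N := fun x hx => hN x (by simpa using hx)
  have hNN : 0 ≤ N := (abs_nonneg _).trans (hN' 0 (by simp))
  obtain ⟨L, hL⟩ : ∃ L : ℝ≥0, LipschitzOnWith L η (sphere 0 1) := by
    have hll : LocallyLipschitz η := (hη.of_le (by norm_cast)).locallyLipschitz
    exact hll.locallyLipschitzOn.exists_lipschitzOnWith_of_compact (isCompact_sphere 0 1)
  have hL' : ∀ x ∈ sphere (0 : Euc n) 1, ∀ y ∈ sphere (0 : Euc n) 1,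
      |η x - η y| ≤ (L : ℝ) * ‖x - y‖ := by
    intro x hx y hy
    have := hL.dist_le_mul x hx y hy
    rwa [Real.dist_eq, dist_eq_norm] at this
  obtain ⟨a, ha, b, hb, hab⟩ := exists_lo_hi hn hα hS h0 hw hsupp hne hmean
  obtain ⟨c, hc, hasym⟩ := asym hn hα hS h0 hw hηc hN' ha hb hab
  have hn' : (1 : ℝ) ≤ n := by exact_mod_cast hn
  set N1 : ℝ := N + (1 + (L : ℝ) ^ 2) with hN1
  set C2 : ℝ := ((n : ℝ) - 1 + α) * (1 + (L : ℝ) ^ 2) + (((n : ℝ) - 1 + α) * N1) ^ 2 with hC2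
  have hN1p : 1 ≤ N1 := by rw [hN1]; nlinarith [sq_nonneg (L : ℝ)]
  have hC2p : 0 ≤ C2 := by
    have : 0 ≤ (n : ℝ) - 1 + α := by linarith
    rw [hC2]; positivity
  have hDp : 1 ≤ (n : ℝ) + α := by linarith
  have hDN : 1 ≤ ((n : ℝ) + α) * N1 := by nlinarith
  refine ⟨1 / (2 * ((n : ℝ) + α) * N1), C2 + 2 * ((n : ℝ) + α) + 2 * C2 * ((n : ℝ) + α), c,
    by positivity, by positivity, hc, ?_⟩
  intro ε hε hε0
  rw [lt_div_iff₀ (by positivity)] at hε0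
  have hsmall : 2 * ((n : ℝ) + α) * (ε * N1) ≤ 1 := by linarith
  have hε1 : ε ≤ 1 := by nlinarith
  refine ⟨deficit_case hn hα hS h0 hw hηc hN' hL' hsupp hne hmean hN1 hC2 hε hε1 hsmall, ?_⟩
  intro r hr _
  refine hasym ε hε ?_ r hr
  have h3 : ε * N ≤ ε * N1 := by
    apply mul_le_mul_of_nonneg_left _ hε.le
    rw [hN1]; nlinarith [sq_nonneg (L : ℝ)]
  have h4 : 0 < ε * N1 := by positivity
  nlinarith
end
end
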